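/- There exists a universal constant C > 0 such that the following holds for all positive integers n ≥ 2 and d with d ≤ n², and all f > 0. Given symmetric matrices A_1, ..., A_n ∈ ℝ^{d×d} with ‖A_i‖_op ≤ 1 for all i and ∑_{i=1}^n ‖A_i‖_F² ≤ n f², there exist signs x ∈ {−1, +1}^n such that ‖∑_{i=1}^n x_i A_i‖_op ≤ C (√n + (log n)^{3/4} · f^{1/2} · n^{1/4}). -/

import Mathlib

open MeasureTheory ProbabilityTheory

/-- Operator norm (largest singular value) of a real matrix, as the norm of the
induced linear map between Euclidean spaces. -/
noncomputable def opNorm {m n : Type*} [Fintype m] [Fintype n] [DecidableEq n]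
    (M : Matrix m n ℝ) : ℝ :=
  ‖LinearMap.toContinuousLinearMap (Matrix.toEuclideanLin M)‖

/-- Squared Frobenius norm of a real matrix. -/
noncomputable def frobNormSq {m n : Type*} [Fintype m] [Fintype n]
    (M : Matrix m n ℝ) : ℝ := ∑ i, ∑ j, (M i j) ^ 2

/-!
The coordinates are rounded in rounds, each of which freezes half of the weight `∑ 16 ^ ℓ i` of the
fractional coordinates, where `‖A i‖_F² ≤ 16 ^ ℓ i * f ^ 2`; the errors form a geometric series.

In one round, orthonormal directions within each level yield matrices `B i` that are pairwise
Hilbert–Schmidt orthogonal, and the point `x` moves from `x₀` so as to control an even moment of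
the free semicircular pencil `∑ u, (x u - x₀ u) • A u ⊗ 1 + q ∑ i, B i ⊗ s i`. A step orthogonal
to the gradient increases this moment by its Hessian. Averaged over the directions `B i`, the
Hessian equals the gain from decreasing `q`, up to crossing terms, so some allowed direction
costs hardly more than that gain. A crossing term is a mixed moment of four commuting
self-adjoint operators, which are copies of the pencil on different tensor legs; positivity
bounds it by the pure moments, and the Hilbert–Schmidt orthogonality of the `B i` makes this
bound small.
-/

namespace MatrixSpencer

section MaximumPrinciple

variable {κ : Type*}

theorem exists_eq_add_single [DecidableEq κ] {e : κ → ℕ} {k : κ} (hk : e k ≠ 0) :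
    ∃ c : κ → ℕ, e = c + Pi.single k 1 := by
  refine ⟨e - Pi.single k 1, (tsub_add_cancel_of_le fun j => ?_).symm⟩
  rcases eq_or_ne j k with rfl | hj
  · simpa using Nat.one_le_iff_ne_zero.2 hk
  · simp [hj]

variable [Fintype κ]

theorem exists_add_eq_and_sum_eq {m n : ℕ} (e : κ → ℕ) (he : ∑ k, e k = m + n) :
    ∃ a b : κ → ℕ, a + b = e ∧ ∑ k, a k = m ∧ ∑ k, b k = n := by
  classical
  induction m generalizing n with
  | zero => exact ⟨0, e, zero_add e, by simp, by simpa using he⟩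
  | succ m ih =>
    obtain ⟨a, b, rfl, ha, hb⟩ := ih (n := n + 1) (by omega)
    obtain ⟨k, hk⟩ : ∃ k, b k ≠ 0 := by
      by_contra! h
      simp [h] at hb
    obtain ⟨c, rfl⟩ := exists_eq_add_single hk
    refine ⟨a + Pi.single k 1, c, by abel, ?_, ?_⟩
    · simp [Finset.sum_add_distrib, ha]
    · simpa [Finset.sum_add_distrib] using hb

theorem eq_single_of_forall_ne [DecidableEq κ] {m : ℕ} {e : κ → ℕ} {k : κ} (he : ∑ j, e j = m)
    (h : ∀ j, j ≠ k → e j = 0) : e = Pi.single k m := by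
  have hk : e k = m := by rw [← he, Finset.sum_eq_single k (fun j _ => h j) (by simp)]
  funext j
  rcases eq_or_ne j k with rfl | hj
  · simpa using hk
  · simpa [hj] using h j hj

/-- Midpoint log-convexity makes the neighbours `e ± (δ k - δ j)` of an interior maximiser `e`
maximisers too, so a maximiser with extremal coordinate `k` is a vertex of the simplex. -/
theorem le_of_forall_single_le [DecidableEq κ] [Nonempty κ] {F : (κ → ℕ) → ℝ} (hF : ∀ e, 0 ≤ F e)
    (hconv : ∀ a b e, a + b = e + e → F e ^ 2 ≤ F a * F b) {m : ℕ} {R : ℝ}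
    (hvertex : ∀ k, F (Pi.single k m) ≤ R) {e : κ → ℕ} (he : ∑ k, e k = m) : F e ≤ R := by
  rcases Nat.eq_zero_or_pos m with rfl | hm
  · have h0 : e = Pi.single (Classical.arbitrary κ) 0 := by simpa [funext_iff] using he
    exact h0 ▸ hvertex _
  obtain ⟨p, hpS, hp⟩ := (Finset.piAntidiag Finset.univ m).exists_max_image F ⟨e, by simp [he]⟩
  simp only [Finset.mem_piAntidiag, Finset.mem_univ, implies_true, and_true] at hpS hp
  obtain ⟨k, hk⟩ : ∃ k, p k ≠ 0 := by
    by_contra! h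
    simp [h] at hpS
    omega
  obtain ⟨q, hqS, hq⟩ := ((Finset.piAntidiag Finset.univ m).filter (F p ≤ F ·)).exists_max_image
    (· k) ⟨p, by simp [hpS]⟩
  simp only [Finset.mem_filter, Finset.mem_piAntidiag, Finset.mem_univ, implies_true,
    and_true] at hqS hq
  have hqp : p k ≤ q k := hq p ⟨hpS, le_rfl⟩
  by_cases hvx : ∀ j, j ≠ k → q j = 0
  · exact (hp e he).trans (hqS.2.trans (eq_single_of_forall_ne hqS.1 hvx ▸ hvertex k))
  · push Not at hvx
    obtain ⟨j, hjk, hj⟩ := hvx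
    obtain ⟨b, rfl⟩ := exists_eq_add_single hj
    obtain ⟨c, rfl⟩ := exists_eq_add_single (e := b) (k := k) (by simp [hjk.symm] at hqp; omega)
    simp only [Pi.add_apply, Finset.sum_add_distrib, Finset.sum_pi_single', Finset.mem_univ,
      if_true] at hqS
    have hkk := hp (c + Pi.single k 1 + Pi.single k 1) (by simp [Finset.sum_add_distrib, ← hqS.1])
    have hjj := hp (c + Pi.single j 1 + Pi.single j 1) (by simp [Finset.sum_add_distrib, ← hqS.1])
    have hmid := hconv (c + Pi.single k 1 + Pi.single k 1) (c + Pi.single j 1 + Pi.single j 1)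
      (c + Pi.single k 1 + Pi.single j 1) (by abel)
    have hmax : F p ≤ F (c + Pi.single k 1 + Pi.single k 1) := by
      by_contra! hlt
      nlinarith [hF (c + Pi.single k 1 + Pi.single k 1), hF (c + Pi.single j 1 + Pi.single j 1)]
    have := hq _ ⟨by simp [Finset.sum_add_distrib, ← hqS.1], hmax⟩
    simp [hjk.symm] at this

end MaximumPrinciple

section SelfAdjoint

variable {V : Type*} [AddCommGroup V] [Module ℝ V] {β : LinearMap.BilinForm ℝ V}
  {S T : Module.End ℝ V}

theorem apply_sq_le (hβ : β.IsPosSemidef) (x y : V) : β x y ^ 2 ≤ β x x * β y y :=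
  β.apply_sq_le_of_symm hβ.nonneg ⟨hβ.isSymm.eq⟩ x y

theorem mul_mem_selfAdjointSubmodule (hS : S ∈ β.selfAdjointSubmodule)
    (hT : T ∈ β.selfAdjointSubmodule) (h : Commute S T) : S * T ∈ β.selfAdjointSubmodule := by
  have := LinearMap.IsAdjointPair.mul hS hT
  rwa [← h.eq] at this

theorem pow_mem_selfAdjointSubmodule (hT : T ∈ β.selfAdjointSubmodule) (n : ℕ) :
    T ^ n ∈ β.selfAdjointSubmodule := by
  induction n with
  | zero => exact LinearMap.isAdjointPair_one
  | succ n ih => exact pow_succ T n ▸ mul_mem_selfAdjointSubmodule ih hT (Commute.pow_self T n)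

variable {κ : Type*} [DecidableEq κ] {φ : Multiplicative (κ → ℕ) →* Module.End ℝ V}

theorem map_ofAdd_mem_selfAdjointSubmodule [Finite κ]
    (hφ : ∀ k, φ (.ofAdd (Pi.single k 1)) ∈ β.selfAdjointSubmodule) (e : κ → ℕ) :
    φ (.ofAdd e) ∈ β.selfAdjointSubmodule := by
  have := Fintype.ofFinite κ
  rw [← Finset.univ_sum_single e]
  induction (Finset.univ : Finset κ) using Finset.induction_on with
  | empty => exact map_one φ ▸ LinearMap.isAdjointPair_one
  | insert k s hk ih =>
    rw [Finset.sum_insert hk, ofAdd_add, map_mul]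
    refine mul_mem_selfAdjointSubmodule ?_ ih ((Commute.all _ _).map φ)
    have hpow : Pi.single k (e k) = e k • (Pi.single k 1 : κ → ℕ) := by simp [← Pi.single_smul]
    rw [hpow, ofAdd_nsmul, map_pow]
    exact pow_mem_selfAdjointSubmodule (hφ k) _

/-- For commuting self-adjoint operators, mixed moments of degree `2 * m` are dominated by the pure
ones: `e ↦ ‖φ e ξ‖²` is midpoint log-convex by Cauchy–Schwarz. -/
theorem abs_apply_monomial_le [Fintype κ] [Nonempty κ] (hβ : β.IsPosSemidef)
    (hφ : ∀ k, φ (.ofAdd (Pi.single k 1)) ∈ β.selfAdjointSubmodule) {m : ℕ} {R : ℝ} {x y : V}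
    (hx : ∀ k, β x (φ (.ofAdd (Pi.single k (2 * m))) x) ≤ R)
    (hy : ∀ k, β y (φ (.ofAdd (Pi.single k (2 * m))) y) ≤ R)
    {e : κ → ℕ} (he : ∑ k, e k = 2 * m) : |β x (φ (.ofAdd e) y)| ≤ R := by
  have hadj (a b : κ → ℕ) (v w : V) :
      β (φ (.ofAdd a) v) (φ (.ofAdd b) w) = β v (φ (.ofAdd (a + b)) w) := by
    rw [ofAdd_add, map_mul]
    exact map_ofAdd_mem_selfAdjointSubmodule hφ a v _
  have hsq (z : V) (hz : ∀ k, β z (φ (.ofAdd (Pi.single k (2 * m))) z) ≤ R) (a : κ → ℕ)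
      (ha : ∑ k, a k = m) : β (φ (.ofAdd a) z) (φ (.ofAdd a) z) ≤ R := by
    refine le_of_forall_single_le (F := fun a => β (φ (.ofAdd a) z) (φ (.ofAdd a) z))
      (fun a => hβ.nonneg _) (fun a b e hab => ?_) (fun k => ?_) ha
    · have := apply_sq_le hβ (φ (.ofAdd a) z) (φ (.ofAdd b) z)
      rwa [hadj, hab, ← hadj] at this
    · rw [hadj, ← Pi.single_add, ← two_mul]
      exact hz k
  obtain ⟨a, b, rfl, ha, hb⟩ := exists_add_eq_and_sum_eq e (he.trans (two_mul m))
  rw [← hadj]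
  have hR : 0 ≤ R := (hβ.nonneg _).trans (hsq x hx a ha)
  refine abs_le_of_sq_le_sq ((apply_sq_le hβ _ _).trans ?_) hR
  rw [sq]
  exact mul_le_mul (hsq x hx a ha) (hsq y hy b hb) (hβ.nonneg _) hR

end SelfAdjoint

section Fock

variable {ι E E' : Type*} [AddCommGroup E] [Module ℝ E] [AddCommGroup E'] [Module ℝ E']

/-- The algebraic full Fock space over `ℝ^ι` with coefficients in `E`: the word `[i₁, …, iₙ]` stands
for the elementary tensor `e_{i₁} ⊗ ⋯ ⊗ e_{iₙ}`. -/
abbrev Fock (ι E : Type*) [AddCommGroup E] := List ι →₀ E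

/-- The end of a word at which an operator on the Fock space acts. -/
inductive Side
  | left
  | right

/-- Adds a letter at the given end of a word. -/
def attach : Side → ι → List ι → List ι
  | .left, i, w => i :: w
  | .right, i, w => w ++ [i]

theorem attach_injective (s : Side) (i : ι) : Function.Injective (attach s i) := by
  cases s
  · exact List.cons_injective
  · exact fun _ _ h => List.append_cancel_right h

@[simp]
theorem attach_inj {s : Side} {i j : ι} {v w : List ι} :
    attach s i v = attach s j w ↔ i = j ∧ v = w := by
  cases s <;> simp [attach, and_comm]

@[simp]
theorem attach_ne_nil (s : Side) (i : ι) (w : List ι) : attach s i w ≠ [] := by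
  cases s <;> simp [attach]

theorem eq_nil_or_exists_attach (s : Side) (w : List ι) : w = [] ∨ ∃ i v, w = attach s i v := by
  cases s
  · cases w <;> simp [attach]
  · obtain rfl | ⟨v, i, rfl⟩ := List.eq_nil_or_concat w
    · exact .inl rfl
    · exact .inr ⟨i, v, List.concat_eq_append⟩

theorem attach_nil (s t : Side) (i : ι) : attach s i [] = attach t i [] := by
  cases s <;> cases t <;> rfl

theorem attach_comm {s t : Side} (hst : s ≠ t) (i j : ι) (w : List ι) :
    attach s i (attach t j w) = attach t j (attach s i w) := by
  cases s <;> cases t <;> first | rfl | exact absurd rfl hst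

section Operators

variable (E)

/-- The creation operator `e_i ⊗ ·` (left) or `· ⊗ e_i` (right). -/
noncomputable def create (s : Side) (i : ι) : Module.End ℝ (Fock ι E) :=
  Finsupp.lmapDomain E ℝ (attach s i)

/-- The annihilation operator, adjoint to `create`. -/
noncomputable def annihilate (s : Side) (i : ι) : Module.End ℝ (Fock ι E) :=
  Finsupp.lcomapDomain (attach s i) (attach_injective s i)

/-- The free semicircular family; left and right semicirculars commute. -/
noncomputable def semicircular (s : Side) (i : ι) : Module.End ℝ (Fock ι E) :=
  create E s i + annihilate E s i

end Operators

/-- The embedding of `E` as the multiples of the vacuum vector. -/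
noncomputable def vacuum (ι : Type*) : E →ₗ[ℝ] Fock ι E := Finsupp.lsingle []

/-- The vacuum coefficient; conjugating by `vacuum` and `vacuumCoeff` is the vacuum expectation. -/
noncomputable def vacuumCoeff (ι : Type*) : Fock ι E →ₗ[ℝ] E := Finsupp.lapply []

/-- The amplification `T ⊗ 1` of a linear map between coefficient spaces. -/
noncomputable def ampliate (ι : Type*) (T : E →ₗ[ℝ] E') : Fock ι E →ₗ[ℝ] Fock ι E' :=
  Finsupp.mapRange.linearMap T

theorem create_single (s : Side) (i : ι) (w : List ι) (x : E) :
    create E s i (Finsupp.single w x) = Finsupp.single (attach s i w) x := by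
  simp [create]

@[simp]
theorem create_apply_attach [DecidableEq ι] (s : Side) (i j : ι) (f : Fock ι E) (w : List ι) :
    create E s i f (attach s j w) = if i = j then f w else 0 := by
  split_ifs with h
  · exact h ▸ Finsupp.mapDomain_apply (attach_injective s i) f w
  · exact Finsupp.mapDomain_of_notMem_range _ _ (by simp [h])

@[simp]
theorem create_apply_nil (s : Side) (i : ι) (f : Fock ι E) : create E s i f [] = 0 :=
  Finsupp.mapDomain_of_notMem_range _ _ (by simp)

@[simp]
theorem annihilate_apply (s : Side) (i : ι) (f : Fock ι E) (w : List ι) :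
    annihilate E s i f w = f (attach s i w) := rfl

@[simp]
theorem vacuum_apply_attach (x : E) (s : Side) (i : ι) (w : List ι) :
    vacuum ι x (attach s i w) = 0 := Finsupp.single_eq_of_ne (attach_ne_nil s i w)

@[simp]
theorem vacuum_apply_nil (x : E) : vacuum ι x [] = x := Finsupp.single_eq_same

theorem vacuumCoeff_apply (f : Fock ι E) : vacuumCoeff ι f = f [] := rfl

@[simp]
theorem ampliate_apply (T : E →ₗ[ℝ] E') (f : Fock ι E) (w : List ι) :
    ampliate ι T f w = T (f w) := rfl

omit [Module ℝ E] in
theorem Fock.ext_attach (s : Side) {f g : Fock ι E} (h₀ : f [] = g [])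
    (h : ∀ i w, f (attach s i w) = g (attach s i w)) : f = g := by
  ext w
  obtain rfl | ⟨i, v, rfl⟩ := eq_nil_or_exists_attach s w
  exacts [h₀, h i v]

@[simp]
theorem vacuumCoeff_vacuum (x : E) : vacuumCoeff ι (vacuum ι x) = x := vacuum_apply_nil x

@[simp]
theorem vacuumCoeff_create (s : Side) (i : ι) (f : Fock ι E) :
    vacuumCoeff ι (create E s i f) = 0 := create_apply_nil s i f

@[simp]
theorem annihilate_vacuum (s : Side) (i : ι) (x : E) : annihilate E s i (vacuum ι x) = 0 :=
  Finsupp.ext fun w => vacuum_apply_attach x s i w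

theorem vacuumCoeff_annihilate (s t : Side) (i : ι) (f : Fock ι E) :
    vacuumCoeff ι (annihilate E s i f) = vacuumCoeff ι (annihilate E t i f) :=
  congrArg f (attach_nil s t i)

theorem vacuumCoeff_semicircular (s t : Side) (i : ι) (f : Fock ι E) :
    vacuumCoeff ι (semicircular E s i f) = vacuumCoeff ι (annihilate E t i f) := by
  simp [semicircular, vacuumCoeff_annihilate s t]

theorem semicircular_vacuum (s t : Side) (i : ι) (x : E) :
    semicircular E s i (vacuum ι x) = semicircular E t i (vacuum ι x) := by
  have h : create E s i (vacuum ι x) = create E t i (vacuum ι x) := by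
    simp only [vacuum, Finsupp.lsingle_apply, create_single, attach_nil s t i]
  simp [semicircular, h]

theorem vacuum_vacuumCoeff_add_sum_create_annihilate [Fintype ι] (s : Side) (f : Fock ι E) :
    vacuum ι (vacuumCoeff ι f) + ∑ i, create E s i (annihilate E s i f) = f := by
  classical
  refine Fock.ext_attach s ?_ fun i w => ?_ <;> simp [vacuumCoeff_apply]

section Commutation

variable {s t : Side} (hst : s ≠ t) (i j : ι) (f : Fock ι E)
include hst

theorem create_create_comm :
    create E s i (create E t j f) = create E t j (create E s i f) := by
  induction f using Finsupp.induction_linear with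
  | zero => simp
  | add f g hf hg => simp only [map_add, hf, hg]
  | single w x => simp only [create_single, attach_comm hst]

theorem annihilate_annihilate_comm :
    annihilate E s i (annihilate E t j f) = annihilate E t j (annihilate E s i f) :=
  Finsupp.ext fun w => congrArg f (attach_comm hst.symm j i w)

theorem annihilate_create [DecidableEq ι] :
    annihilate E s i (create E t j f) =
      create E t j (annihilate E s i f) + if i = j then vacuum ι (vacuumCoeff ι f) else 0 := by
  refine Fock.ext_attach t ?_ fun k w => ?_
  · rw [annihilate_apply, attach_nil s t, create_apply_attach]
    split_ifs <;> simp_all [vacuumCoeff_apply]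
  · rw [annihilate_apply, attach_comm hst, create_apply_attach, Finsupp.add_apply,
      create_apply_attach, annihilate_apply]
    split_ifs <;> simp

theorem annihilate_semicircular [DecidableEq ι] :
    annihilate E s i (semicircular E t j f) =
      semicircular E t j (annihilate E s i f) +
        if i = j then vacuum ι (vacuumCoeff ι f) else 0 := by
  simp only [semicircular, LinearMap.add_apply, map_add, annihilate_create hst,
    annihilate_annihilate_comm hst]
  abel

theorem semicircular_create [DecidableEq ι] :
    semicircular E s i (create E t j f) =
      create E t j (semicircular E s i f) + if i = j then vacuum ι (vacuumCoeff ι f) else 0 := by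
  simp only [semicircular, LinearMap.add_apply, map_add, annihilate_create hst,
    create_create_comm hst]
  abel

theorem commute_semicircular (i j : ι) : Commute (semicircular E s i) (semicircular E t j) := by
  classical
  refine LinearMap.ext fun f => ?_
  simp only [Module.End.mul_apply, semicircular, LinearMap.add_apply, map_add,
    create_create_comm hst, annihilate_annihilate_comm hst, annihilate_create hst,
    annihilate_create hst.symm, eq_comm (a := i)]
  abel

end Commutation

section Ampliation

theorem ampliate_single (T : E →ₗ[ℝ] E') (w : List ι) (x : E) :
    ampliate ι T (Finsupp.single w x) = Finsupp.single w (T x) := by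
  simp [ampliate]

@[simp]
theorem ampliate_vacuum (T : E →ₗ[ℝ] E') (x : E) :
    ampliate ι T (vacuum ι x) = vacuum ι (T x) := ampliate_single T [] x

@[simp]
theorem vacuumCoeff_ampliate (T : E →ₗ[ℝ] E') (f : Fock ι E) :
    vacuumCoeff ι (ampliate ι T f) = T (vacuumCoeff ι f) := rfl

theorem ampliate_annihilate (T : E →ₗ[ℝ] E') (s : Side) (i : ι) (f : Fock ι E) :
    ampliate ι T (annihilate E s i f) = annihilate E' s i (ampliate ι T f) := by
  ext w
  simp

theorem ampliate_create (T : E →ₗ[ℝ] E') (s : Side) (i : ι) (f : Fock ι E) :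
    ampliate ι T (create E s i f) = create E' s i (ampliate ι T f) := by
  induction f using Finsupp.induction_linear with
  | zero => simp
  | add f g hf hg => simp only [map_add, hf, hg]
  | single w x => simp only [create_single, ampliate_single]

theorem ampliate_semicircular (T : E →ₗ[ℝ] E') (s : Side) (i : ι) (f : Fock ι E) :
    ampliate ι T (semicircular E s i f) = semicircular E' s i (ampliate ι T f) := by
  simp only [semicircular, LinearMap.add_apply, map_add, ampliate_create, ampliate_annihilate]

theorem commute_ampliate {S T : Module.End ℝ E} (h : Commute S T) :
    Commute (ampliate ι S : Module.End ℝ (Fock ι E)) (ampliate ι T) :=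
  LinearMap.ext fun f => Finsupp.ext fun w => LinearMap.congr_fun h.eq (f w)

theorem commute_semicircular_ampliate (s : Side) (i : ι) (T : Module.End ℝ E) :
    Commute (semicircular E s i) (ampliate ι T) :=
  LinearMap.ext fun f => (ampliate_semicircular T s i f).symm

end Ampliation

section FockForm

variable (β : LinearMap.BilinForm ℝ E)

/-- The form `β ⊗ ⟨·, ·⟩` on `E ⊗ ⨁ (ℝ^ι)^{⊗ n}`, for which distinct words are orthonormal. -/
noncomputable def fockForm (ι : Type*) : LinearMap.BilinForm ℝ (Fock ι E) :=
  Finsupp.lsum ℝ fun w => β.compl₂ (Finsupp.lapply w)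

theorem fockForm_apply (f g : Fock ι E) : fockForm β ι f g = f.sum fun w x => β x (g w) := by
  simp [fockForm, Finsupp.sum, LinearMap.sum_apply]

@[simp]
theorem fockForm_single (w : List ι) (x : E) (g : Fock ι E) :
    fockForm β ι (Finsupp.single w x) g = β x (g w) := by
  simp [fockForm]

theorem fockForm_vacuum (x : E) (g : Fock ι E) :
    fockForm β ι (vacuum ι x) g = β x (vacuumCoeff ι g) := fockForm_single β [] x g

variable {β}

theorem isSymm_fockForm (hβ : β.IsSymm) : (fockForm β ι).IsSymm := by
  classical
  refine ⟨fun f g => ?_⟩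
  rw [fockForm_apply, fockForm_apply,
    Finsupp.sum_of_support_subset f Finset.subset_union_left _ (by simp),
    Finsupp.sum_of_support_subset g (Finset.subset_union_right (s₁ := f.support)) _ (by simp)]
  exact Finset.sum_congr rfl fun w _ => hβ.eq _ _

theorem isPosSemidef_fockForm (hβ : β.IsPosSemidef) : (fockForm β ι).IsPosSemidef where
  isSymm := isSymm_fockForm hβ.isSymm
  isNonneg := ⟨fun f => by
    rw [fockForm_apply]
    exact Finset.sum_nonneg fun w _ => hβ.nonneg _⟩

theorem fockForm_create (s : Side) (i : ι) (f g : Fock ι E) :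
    fockForm β ι (create E s i f) g = fockForm β ι f (annihilate E s i g) := by
  induction f using Finsupp.induction_linear with
  | zero => simp
  | add f f' hf hf' => simp only [map_add, LinearMap.add_apply, hf, hf']
  | single w x => simp only [create_single, fockForm_single, annihilate_apply]

theorem fockForm_ampliate {S T : Module.End ℝ E} (h : β.IsAdjointPair β S T) (f g : Fock ι E) :
    fockForm β ι (ampliate ι S f) g = fockForm β ι f (ampliate ι T g) := by
  induction f using Finsupp.induction_linear with
  | zero => simp
  | add f f' hf hf' => simp only [map_add, LinearMap.add_apply, hf, hf']
  | single w x =>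
    simp only [ampliate_single, fockForm_single, ampliate_apply]
    exact h _ _

theorem semicircular_mem_selfAdjointSubmodule (hβ : β.IsSymm) (s : Side) (i : ι) :
    semicircular E s i ∈ (fockForm β ι).selfAdjointSubmodule := by
  intro f g
  have hsymm := (isSymm_fockForm (ι := ι) hβ).eq
  simp only [semicircular, LinearMap.add_apply, map_add, fockForm_create]
  rw [hsymm (annihilate E s i f), ← fockForm_create, hsymm f, ← fockForm_create, add_comm]

theorem ampliate_mem_selfAdjointSubmodule {T : Module.End ℝ E}
    (h : T ∈ β.selfAdjointSubmodule) :
    ampliate ι T ∈ (fockForm β ι).selfAdjointSubmodule := fockForm_ampliate h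

end FockForm

end Fock

theorem Side.right_ne_left : Side.right ≠ Side.left := nofun

theorem pow_apply_comm {V W : Type*} [AddCommGroup V] [Module ℝ V] [AddCommGroup W] [Module ℝ W]
    {S : Module.End ℝ V} {T : Module.End ℝ W} {J : V →ₗ[ℝ] W} (h : ∀ v, J (S v) = T (J v)) (n : ℕ)
    (v : V) : J ((S ^ n) v) = (T ^ n) (J v) :=
  (LinearMap.congr_fun (Module.End.commute_pow_left_of_commute
    (LinearMap.ext fun v => (h v).symm) n) v).symm

section Pencil

open Finset

variable {ι E E' : Type*} [Fintype ι] [AddCommGroup E] [Module ℝ E] [AddCommGroup E'] [Module ℝ E']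

/-- The operator-valued semicircular element `A ⊗ 1 + ∑ i, B i ⊗ s i`. -/
noncomputable def pencil (s : Side) (A : Module.End ℝ E) (B : ι → Module.End ℝ E) :
    Module.End ℝ (Fock ι E) := ampliate ι A + ∑ i, semicircular E s i * ampliate ι (B i)

/-- The `m`-th operator-valued moment of a pencil: the vacuum expectation of its `m`-th power. -/
noncomputable def moment (A : Module.End ℝ E) (B : ι → Module.End ℝ E) (m : ℕ) :
    Module.End ℝ E := vacuumCoeff ι ∘ₗ (pencil .left A B ^ m) ∘ₗ vacuum ι

variable (A : Module.End ℝ E) (B : ι → Module.End ℝ E)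

theorem pencil_apply (s : Side) (f : Fock ι E) :
    pencil s A B f = ampliate ι A f + ∑ i, semicircular E s i (ampliate ι (B i) f) := by
  simp [pencil, LinearMap.sum_apply]

theorem moment_apply (m : ℕ) (x : E) :
    moment A B m x = vacuumCoeff ι ((pencil .left A B ^ m) (vacuum ι x)) := rfl

theorem moment_zero : moment A B 0 = 1 := LinearMap.ext fun _ => vacuumCoeff_vacuum _

section OppositeSide

variable {s t : Side} (hst : s ≠ t)
include hst

theorem annihilate_pencil (j : ι) (f : Fock ι E) :
    annihilate E s j (pencil t A B f) =
      pencil t A B (annihilate E s j f) + vacuum ι (B j (vacuumCoeff ι f)) := by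
  classical
  simp only [pencil_apply, map_add, map_sum, annihilate_semicircular hst, sum_add_distrib,
    sum_ite_eq, mem_univ, if_true, ← ampliate_annihilate, vacuumCoeff_ampliate, add_assoc]

theorem pencil_create (j : ι) (f : Fock ι E) :
    pencil s A B (create E t j f) =
      create E t j (pencil s A B f) + vacuum ι (B j (vacuumCoeff ι f)) := by
  classical
  simp only [pencil_apply, map_add, map_sum, ampliate_create, semicircular_create hst,
    sum_add_distrib, sum_ite_eq', mem_univ, if_true, vacuumCoeff_ampliate, add_assoc]

end OppositeSide

theorem annihilate_pencil_pow_vacuum (j : ι) (m : ℕ) (x : E) :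
    annihilate E .right j ((pencil .left A B ^ m) (vacuum ι x)) =
      ∑ b ∈ range m, (pencil .left A B ^ (m - 1 - b)) (vacuum ι (B j (moment A B b x))) := by
  induction m with
  | zero => simp
  | succ m ih =>
    rw [pow_succ', Module.End.mul_apply, annihilate_pencil A B Side.right_ne_left, ih,
      sum_range_succ, ← moment_apply, map_sum]
    congr 1
    · refine sum_congr rfl fun b hb => ?_
      rw [mem_range] at hb
      rw [← Module.End.mul_apply, ← pow_succ']
      congr 2
      omega
    · simp

theorem vacuumCoeff_pencil_pow_create (j : ι) (m : ℕ) (f : Fock ι E) :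
    vacuumCoeff ι ((pencil .left A B ^ m) (create E .right j f)) =
      ∑ a ∈ range m,
        moment A B a (B j (vacuumCoeff ι ((pencil .left A B ^ (m - 1 - a)) f))) := by
  induction m generalizing f with
  | zero => simp
  | succ m ih =>
    rw [pow_succ, Module.End.mul_apply, pencil_create A B Side.right_ne_left.symm, map_add, map_add,
      ih, sum_range_succ, ← moment_apply]
    congr 1
    · refine sum_congr rfl fun b hb => ?_
      rw [mem_range] at hb
      rw [show m + 1 - 1 - b = m - 1 - b + 1 by omega, pow_succ, Module.End.mul_apply]
    · simp

/-- Inserts the resolution of the identity by right creation operators next to `C`. -/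
theorem vacuumCoeff_pencil_pow_ampliate (C : Module.End ℝ E) (a b : ℕ) (x : E) :
    vacuumCoeff ι ((pencil .left A B ^ a)
        (ampliate ι C ((pencil .left A B ^ b) (vacuum ι x)))) =
      moment A B a (C (moment A B b x)) +
        ∑ j, ∑ a' ∈ range a, ∑ b' ∈ range b,
          moment A B a' (B j (vacuumCoeff ι ((pencil .left A B ^ (a - 1 - a'))
            (ampliate ι C ((pencil .left A B ^ (b - 1 - b'))
              (vacuum ι (B j (moment A B b' x)))))))) := by
  set f := (pencil .left A B ^ b) (vacuum ι x)
  conv_lhs =>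
    rw [← vacuum_vacuumCoeff_add_sum_create_annihilate .right (ampliate ι C f)]
  simp only [map_add, map_sum, ← moment_apply, vacuumCoeff_pencil_pow_create,
    ← ampliate_annihilate, f, annihilate_pencil_pow_vacuum, vacuumCoeff_ampliate]
  exact congrArg₂ _ rfl (sum_congr rfl fun j _ => sum_comm)

/-- The Schwinger–Dyson equation. -/
theorem vacuumCoeff_semicircular_pencil_pow (j : ι) (m : ℕ) (x : E) :
    vacuumCoeff ι (semicircular E .left j ((pencil .left A B ^ m) (vacuum ι x))) =
      ∑ b ∈ range m, moment A B (m - 1 - b) (B j (moment A B b x)) := by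
  rw [vacuumCoeff_semicircular .left .right, annihilate_pencil_pow_vacuum, map_sum]
  rfl

theorem pencil_vacuum (s t : Side) (x : E) :
    pencil s A B (vacuum ι x) = pencil t A B (vacuum ι x) := by
  simp only [pencil_apply, ampliate_vacuum, semicircular_vacuum s t]

section Intertwining

variable {A B} {A' : Module.End ℝ E'} {B' : ι → Module.End ℝ E'} {J : E →ₗ[ℝ] E'}
  (hA : ∀ x, J (A x) = A' (J x)) (hB : ∀ i x, J (B i x) = B' i (J x))
include hA hB

theorem ampliate_pencil (s : Side) (f : Fock ι E) :
    ampliate ι J (pencil s A B f) = pencil s A' B' (ampliate ι J f) := by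
  have h {C : Module.End ℝ E} {C' : Module.End ℝ E'} (hC : ∀ x, J (C x) = C' (J x))
      (g : Fock ι E) : ampliate ι J (ampliate ι C g) = ampliate ι C' (ampliate ι J g) :=
    Finsupp.ext fun w => hC (g w)
  simp only [pencil_apply, map_add, map_sum, ampliate_semicircular, h hA, h (hB _)]

theorem moment_apply_comm (m : ℕ) (x : E) : J (moment A B m x) = moment A' B' m (J x) := by
  rw [moment_apply, moment_apply, ← vacuumCoeff_ampliate, pow_apply_comm (ampliate_pencil hA hB _),
    ampliate_vacuum]

end Intertwining

section SelfAdjoint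

variable {A B} {β : LinearMap.BilinForm ℝ E} (hβ : β.IsSymm) (hA : A ∈ β.selfAdjointSubmodule)
  (hB : ∀ i, B i ∈ β.selfAdjointSubmodule)
include hβ hA hB

theorem pencil_mem_selfAdjointSubmodule (s : Side) :
    pencil s A B ∈ (fockForm β ι).selfAdjointSubmodule :=
  add_mem (ampliate_mem_selfAdjointSubmodule hA) <| sum_mem fun i _ =>
    mul_mem_selfAdjointSubmodule (semicircular_mem_selfAdjointSubmodule hβ s i)
      (ampliate_mem_selfAdjointSubmodule (hB i)) (commute_semicircular_ampliate s i (B i))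

theorem moment_mem_selfAdjointSubmodule (m : ℕ) :
    moment A B m ∈ β.selfAdjointSubmodule := by
  have h := pow_mem_selfAdjointSubmodule (pencil_mem_selfAdjointSubmodule hβ hA hB .left) m
  intro x y
  have hxy := h (vacuum ι x) (vacuum ι y)
  rw [(isSymm_fockForm hβ).eq, fockForm_vacuum, fockForm_vacuum] at hxy
  exact (hβ.eq _ _).trans hxy

end SelfAdjoint

theorem apply_moment (β : LinearMap.BilinForm ℝ E) (m : ℕ) (x y : E) :
    β x (moment A B m y) =
      fockForm β ι (vacuum ι x) ((pencil .left A B ^ m) (vacuum ι y)) :=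
  (fockForm_vacuum β x _).symm

section Commute

variable {A B}

theorem commute_ampliate_pencil {C : Module.End ℝ E} (hA : Commute C A)
    (hB : ∀ i, Commute C (B i)) (s : Side) : Commute (ampliate ι C) (pencil s A B) :=
  (commute_ampliate hA).add_right <| Commute.sum_right _ _ _ fun i _ =>
    (commute_semicircular_ampliate s i C).symm.mul_right (commute_ampliate (hB i))

theorem commute_semicircular_pencil {s t : Side} (hst : s ≠ t) (j : ι) :
    Commute (semicircular E s j) (pencil t A B) :=
  (commute_semicircular_ampliate s j A).add_right <| Commute.sum_right _ _ _ fun i _ =>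
    (commute_semicircular hst j i).mul_right (commute_semicircular_ampliate s j (B i))

theorem commute_pencil {A' : Module.End ℝ E} {B' : ι → Module.End ℝ E} (hA : Commute A A')
    (hAB' : ∀ i, Commute A (B' i)) (hBA' : ∀ i, Commute (B i) A')
    (hB : ∀ i j, Commute (B i) (B' j)) {s t : Side} (hst : s ≠ t) :
    Commute (pencil s A B) (pencil t A' B') :=
  (commute_ampliate_pencil hA hAB' t).add_left <| Commute.sum_left _ _ _ fun i _ =>
    (commute_semicircular_pencil hst i).mul_left (commute_ampliate_pencil (hBA' i) (hB i) t)

end Commute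

end Pencil

section Reverse

open Finset

variable {ι E : Type*} [AddCommGroup E] [Module ℝ E]

/-- Reversal of words, which exchanges left and right operators. -/
noncomputable def reverse (ι : Type*) : Fock ι E ≃ₗ[ℝ] Fock ι E :=
  Finsupp.domLCongr List.reverse_involutive.toPerm

theorem reverse_apply (f : Fock ι E) (w : List ι) : reverse ι f w = f w.reverse := rfl

theorem reverse_vacuum (x : E) : reverse ι (vacuum ι x) = vacuum ι x :=
  Finsupp.domLCongr_single _ _ _

theorem reverse_semicircular_left (i : ι) (f : Fock ι E) :
    reverse ι (semicircular E .left i f) = semicircular E .right i (reverse ι f) := by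
  classical
  have hc : reverse ι (create E .left i f) = create E .right i (reverse ι f) := by
    refine Fock.ext_attach .right (by simp [reverse_apply]) fun j w => ?_
    rw [create_apply_attach, reverse_apply, reverse_apply, ← create_apply_attach .left]
    simp [attach]
  have ha : reverse ι (annihilate E .left i f) = annihilate E .right i (reverse ι f) :=
    Finsupp.ext fun w => by simp [reverse_apply, attach]
  simp only [semicircular, LinearMap.add_apply, map_add, hc, ha]

variable [Fintype ι] (A : Module.End ℝ E) (B : ι → Module.End ℝ E)

theorem reverse_pencil_left (f : Fock ι E) :
    reverse ι (pencil .left A B f) = pencil .right A B (reverse ι f) := by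
  have h (T : Module.End ℝ E) (g : Fock ι E) :
    reverse ι (ampliate ι T g) = ampliate ι T (reverse ι g) :=
    Finsupp.ext fun _ => rfl
  simp only [pencil_apply, map_add, map_sum, reverse_semicircular_left, h]

theorem vacuumCoeff_pencil_pow_vacuum (s : Side) (m : ℕ) (x : E) :
    vacuumCoeff ι ((pencil s A B ^ m) (vacuum ι x)) = moment A B m x := by
  cases s
  · rfl
  · rw [← reverse_vacuum, ← LinearEquiv.coe_coe,
      ← pow_apply_comm (J := (reverse ι).toLinearMap) (reverse_pencil_left A B)]
    rfl

end Reverse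

section Crossing

theorem pairwise_fin_four {r : Fin 4 → Fin 4 → Prop} (hr : ∀ {k l}, r k l → r l k) (h₀₁ : r 0 1)
    (h₀₂ : r 0 2) (h₀₃ : r 0 3) (h₁₂ : r 1 2) (h₁₃ : r 1 3) (h₂₃ : r 2 3) : Pairwise r := by
  intro k l hkl
  fin_cases k <;> fin_cases l <;>
    first | exact absurd rfl hkl | assumption | exact hr (by assumption)

/-- The family of monomials `e ↦ ∏ k, T k ^ e k` in commuting elements, as a homomorphism. -/
def monomialHom {κ M : Type*} [Fintype κ] [DecidableEq κ] [Monoid M] (T : κ → M)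
    (hT : Pairwise fun k l => Commute (T k) (T l)) : Multiplicative (κ → ℕ) →* M :=
  (MonoidHom.noncommPiCoprod (fun k => powersHom M (T k)) fun _ _ hkl _ _ =>
    (hT hkl).pow_pow _ _).comp (MulEquiv.funMultiplicative κ ℕ).toMonoidHom

theorem monomialHom_ofAdd_single {κ M : Type*} [Fintype κ] [DecidableEq κ] [Monoid M] {T : κ → M}
    (hT : Pairwise fun k l => Commute (T k) (T l)) (k : κ) (n : ℕ) :
    monomialHom T hT (.ofAdd (Pi.single k n)) = T k ^ n :=
  MonoidHom.noncommPiCoprod_mulSingle (ϕ := fun k => powersHom M (T k))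
    (hcomm := fun _ _ hkl _ _ => (hT hkl).pow_pow _ _) k (.ofAdd n)

theorem monomialHom_fin_four {M : Type*} [Monoid M] {T : Fin 4 → M}
    (hT : Pairwise fun k l => Commute (T k) (T l)) (e : Fin 4 → ℕ) :
    monomialHom T hT (.ofAdd e) = T 0 ^ e 0 * T 1 ^ e 1 * T 2 ^ e 2 * T 3 ^ e 3 := by
  conv_lhs => rw [← Finset.univ_sum_single e, Fin.sum_univ_four]
  simp only [ofAdd_add, map_mul, monomialHom_ofAdd_single]

variable {ι E : Type*} [AddCommGroup E] [Module ℝ E]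

theorem ampliate_pow (T : Module.End ℝ E) (n : ℕ) :
    (ampliate ι T : Module.End ℝ (Fock ι E)) ^ n = ampliate ι (T ^ n) :=
  LinearMap.ext fun f => Finsupp.ext fun w =>
    pow_apply_comm (S := ampliate ι T) (J := Finsupp.lapply w) (fun _ => rfl) n f

variable [Fintype ι]

theorem moment_ampliate_vacuum (A : Module.End ℝ E) (B : ι → Module.End ℝ E) (m : ℕ) (x : E) :
    moment (ampliate ι A) (fun i => ampliate ι (B i)) m (vacuum ι x) =
      vacuum ι (moment A B m x) :=
  (moment_apply_comm (fun _ => (ampliate_vacuum _ _).symm)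
    (fun _ _ => (ampliate_vacuum _ _).symm) m x).symm

theorem fockForm_pencil_pow_vacuum {β : LinearMap.BilinForm ℝ E} (hβ : β.IsSymm)
    {A : Module.End ℝ E} {B : ι → Module.End ℝ E} (hA : A ∈ β.selfAdjointSubmodule)
    (hB : ∀ i, B i ∈ β.selfAdjointSubmodule) (m : ℕ) (x y : E) :
    fockForm β ι (vacuum ι x) ((pencil .left A B ^ m) (vacuum ι y)) = β (moment A B m x) y :=
  (apply_moment A B β m x y).symm.trans (moment_mem_selfAdjointSubmodule hβ hA hB m x y).symm

/-- Commuting copies of four pencils: the first two live on Fock spaces of their own, the last two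
on the left and right of a common one. -/
noncomputable def pencilTuple (A : Fin 4 → Module.End ℝ E) (B : Fin 4 → ι → Module.End ℝ E) :
    Fin 4 → Module.End ℝ (Fock ι (Fock ι (Fock ι E))) :=
  ![pencil .left (ampliate ι (ampliate ι (A 0))) fun i => ampliate ι (ampliate ι (B 0 i)),
    ampliate ι (pencil .left (ampliate ι (A 1)) fun i => ampliate ι (B 1 i)),
    ampliate ι (ampliate ι (pencil .left (A 2) (B 2))),
    ampliate ι (ampliate ι (pencil .right (A 3) (B 3)))]

variable {A : Fin 4 → Module.End ℝ E} {B : Fin 4 → ι → Module.End ℝ E}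

theorem pairwise_commute_pencilTuple (hAA : Pairwise fun k l => Commute (A k) (A l))
    (hAB : Pairwise fun k l => ∀ i, Commute (A k) (B l i))
    (hBB : Pairwise fun k l => ∀ i j, Commute (B k i) (B l j)) :
    Pairwise fun k l => Commute (pencilTuple A B k) (pencilTuple A B l) := by
  have hA {k l : Fin 4} (hkl : k ≠ l) (s : Side) :
      Commute (ampliate ι (A k) : Module.End ℝ (Fock ι E)) (pencil s (A l) (B l)) :=
    commute_ampliate_pencil (hAA hkl) (hAB hkl) s
  have hB {k l : Fin 4} (hkl : k ≠ l) (i : ι) (s : Side) :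
      Commute (ampliate ι (B k i) : Module.End ℝ (Fock ι E)) (pencil s (A l) (B l)) :=
    commute_ampliate_pencil (hAB hkl.symm i).symm (hBB hkl i) s
  have h₀₁ : Commute (pencilTuple A B 0) (pencilTuple A B 1) :=
    .symm <| commute_ampliate_pencil
      (.symm <| commute_ampliate_pencil (commute_ampliate (hAA (by decide)))
        (fun j => commute_ampliate (hAB (by decide) j)) _)
      (fun i => .symm <| commute_ampliate_pencil
        (commute_ampliate (hAB (by decide) i).symm)
        (fun j => commute_ampliate (hBB (by decide) i j)) _) _
  have h₀ {k : Fin 4} (hk : 0 ≠ k) (s : Side) :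
      Commute (pencilTuple A B 0) (ampliate ι (ampliate ι (pencil s (A k) (B k)))) :=
    .symm <| commute_ampliate_pencil (commute_ampliate (hA hk s).symm)
      (fun i => commute_ampliate (hB hk i s).symm) _
  have h₁ {k : Fin 4} (hk : 1 ≠ k) (s : Side) :
      Commute (pencilTuple A B 1) (ampliate ι (ampliate ι (pencil s (A k) (B k)))) :=
    commute_ampliate <| .symm <| commute_ampliate_pencil (hA hk s).symm
      (fun i => (hB hk i s).symm) _
  have h₂₃ : Commute (pencilTuple A B 2) (pencilTuple A B 3) :=
    commute_ampliate <| commute_ampliate <| commute_pencil (hAA (by decide)) (hAB (by decide))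
      (fun i => (hAB (by decide) i).symm) (hBB (by decide)) Side.right_ne_left.symm
  exact pairwise_fin_four Commute.symm h₀₁ (h₀ (by decide) _) (h₀ (by decide) _)
    (h₁ (by decide) _) (h₁ (by decide) _) h₂₃

variable {β : LinearMap.BilinForm ℝ E} (hβ : β.IsSymm) (hA : ∀ k, A k ∈ β.selfAdjointSubmodule)
  (hB : ∀ k i, B k i ∈ β.selfAdjointSubmodule)
include hβ hA hB

theorem pencilTuple_mem_selfAdjointSubmodule (k : Fin 4) :
    pencilTuple A B k ∈ (fockForm (fockForm (fockForm β ι) ι) ι).selfAdjointSubmodule := by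
  have hβ' := isSymm_fockForm (ι := ι) hβ
  have hA' k : ampliate ι (A k) ∈ (fockForm β ι).selfAdjointSubmodule :=
    ampliate_mem_selfAdjointSubmodule (hA k)
  have hB' k i : ampliate ι (B k i) ∈ (fockForm β ι).selfAdjointSubmodule :=
    ampliate_mem_selfAdjointSubmodule (hB k i)
  fin_cases k
  · exact pencil_mem_selfAdjointSubmodule (isSymm_fockForm hβ')
      (ampliate_mem_selfAdjointSubmodule (hA' 0))
      (fun i => ampliate_mem_selfAdjointSubmodule (hB' 0 i)) _
  · exact ampliate_mem_selfAdjointSubmodule (pencil_mem_selfAdjointSubmodule hβ' (hA' 1) (hB' 1) _)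
  · exact ampliate_mem_selfAdjointSubmodule <| ampliate_mem_selfAdjointSubmodule
      (pencil_mem_selfAdjointSubmodule hβ (hA 2) (hB 2) _)
  · exact ampliate_mem_selfAdjointSubmodule <| ampliate_mem_selfAdjointSubmodule
      (pencil_mem_selfAdjointSubmodule hβ (hA 3) (hB 3) _)

theorem fockForm_pencilTuple_vacuum (x y : E) (e : Fin 4 → ℕ) :
    fockForm (fockForm (fockForm β ι) ι) ι (vacuum ι (vacuum ι (vacuum ι x)))
        ((pencilTuple A B 0 ^ e 0 * pencilTuple A B 1 ^ e 1 * pencilTuple A B 2 ^ e 2 *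
          pencilTuple A B 3 ^ e 3) (vacuum ι (vacuum ι (vacuum ι y)))) =
      β (moment (A 1) (B 1) (e 1) (moment (A 0) (B 0) (e 0) x))
        (vacuumCoeff ι ((pencil .left (A 2) (B 2) ^ e 2)
          ((pencil .right (A 3) (B 3) ^ e 3) (vacuum ι y)))) := by
  have hβ' := isSymm_fockForm (ι := ι) hβ
  have hA' k : ampliate ι (A k) ∈ (fockForm β ι).selfAdjointSubmodule :=
    ampliate_mem_selfAdjointSubmodule (hA k)
  have hB' k i : ampliate ι (B k i) ∈ (fockForm β ι).selfAdjointSubmodule :=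
    ampliate_mem_selfAdjointSubmodule (hB k i)
  have hmoment : moment (ampliate ι (ampliate ι (A 0))) (fun i => ampliate ι (ampliate ι (B 0 i)))
      (e 0) (vacuum ι (vacuum ι x)) = vacuum ι (vacuum ι (moment (A 0) (B 0) (e 0) x)) := by
    rw [moment_ampliate_vacuum, moment_ampliate_vacuum]
  simp only [Module.End.mul_apply, pencilTuple, Matrix.cons_val, ampliate_pow, ampliate_vacuum]
  rw [fockForm_pencil_pow_vacuum (isSymm_fockForm hβ')
      (ampliate_mem_selfAdjointSubmodule (hA' 0))
      (fun i => ampliate_mem_selfAdjointSubmodule (hB' 0 i)), hmoment,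
    fockForm_pencil_pow_vacuum hβ' (hA' 1) (hB' 1),
    moment_ampliate_vacuum, fockForm_vacuum]

omit hβ in
/-- The crossing of the two pairs of moments is a mixed moment of the four commuting operators
`pencilTuple A B`, hence dominated by their pure moments. -/
theorem abs_apply_moment_pencil_le (hβ : β.IsPosSemidef)
    (hAA : Pairwise fun k l => Commute (A k) (A l))
    (hAB : Pairwise fun k l => ∀ i, Commute (A k) (B l i))
    (hBB : Pairwise fun k l => ∀ i j, Commute (B k i) (B l j)) {x y : E} {R : ℝ} {m : ℕ}
    (hx : ∀ k, β x (moment (A k) (B k) (2 * m) x) ≤ R)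
    (hy : ∀ k, β y (moment (A k) (B k) (2 * m) y) ≤ R)
    {w w' a b : ℕ} (he : w + w' + a + b = 2 * m) :
    |β (moment (A 1) (B 1) w' (moment (A 0) (B 0) w x))
      (vacuumCoeff ι ((pencil .left (A 2) (B 2) ^ a)
        ((pencil .right (A 3) (B 3) ^ b) (vacuum ι y))))| ≤ R := by
  have hT := pairwise_commute_pencilTuple hAA hAB hBB
  have hvertex {z : E} (hz : ∀ k, β z (moment (A k) (B k) (2 * m) z) ≤ R) (k : Fin 4) :
      fockForm (fockForm (fockForm β ι) ι) ι (vacuum ι (vacuum ι (vacuum ι z)))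
        (monomialHom (pencilTuple A B) hT (.ofAdd (Pi.single k (2 * m)))
          (vacuum ι (vacuum ι (vacuum ι z)))) ≤ R := by
    rw [monomialHom_fin_four, fockForm_pencilTuple_vacuum hβ.isSymm hA hB]
    specialize hz k
    rw [← moment_mem_selfAdjointSubmodule hβ.isSymm (hA k) (hB k) (2 * m) z z] at hz
    fin_cases k <;>
      simpa [moment_zero, vacuumCoeff_pencil_pow_vacuum,
        moment_mem_selfAdjointSubmodule hβ.isSymm (hA _) (hB _) (2 * m) z z] using hz
  have h := abs_apply_monomial_le
    (isPosSemidef_fockForm (isPosSemidef_fockForm (isPosSemidef_fockForm hβ)))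
    (φ := monomialHom (pencilTuple A B) hT) (fun k => by
      rw [monomialHom_ofAdd_single, pow_one]
      exact pencilTuple_mem_selfAdjointSubmodule hβ.isSymm hA hB k)
    (hvertex hx) (hvertex hy) (e := ![w, w', a, b]) (by simpa [Fin.sum_univ_four] using he)
  rwa [monomialHom_fin_four, fockForm_pencilTuple_vacuum hβ.isSymm hA hB] at h

end Crossing

open Finset Matrix

section HilbertSchmidt

variable {D : Type*} [Fintype D]

/-- The Hilbert–Schmidt inner product of real matrices. -/
noncomputable def hsForm (D : Type*) [Fintype D] : LinearMap.BilinForm ℝ (Matrix D D ℝ) :=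
  LinearMap.mk₂ ℝ (fun X Y => (Xᵀ * Y).trace) (by simp [add_mul]) (by simp) (by simp [mul_add])
    (by simp)

theorem hsForm_apply (X Y : Matrix D D ℝ) : hsForm D X Y = (Xᵀ * Y).trace := rfl

theorem hsForm_self (X : Matrix D D ℝ) : hsForm D X X = frobNormSq X := by
  rw [frobNormSq, sum_comm]
  simp [hsForm_apply, trace, mul_apply, sq]

theorem frobNormSq_nonneg (X : Matrix D D ℝ) : 0 ≤ frobNormSq X := by
  unfold frobNormSq; positivity

theorem isPosSemidef_hsForm : (hsForm D).IsPosSemidef where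
  eq X Y := by
    rw [hsForm_apply, hsForm_apply, ← trace_transpose, transpose_mul,
      transpose_transpose]
  nonneg X := hsForm_self X ▸ frobNormSq_nonneg X

theorem hsForm_one_apply [DecidableEq D] (X : Matrix D D ℝ) : hsForm D 1 X = X.trace := by
  simp [hsForm_apply]

theorem mulLeft_mem_selfAdjointSubmodule {A : Matrix D D ℝ} (hA : A.IsSymm) :
    LinearMap.mulLeft ℝ A ∈ (hsForm D).selfAdjointSubmodule := fun X Y => by
  simp [hsForm_apply, hA.eq, mul_assoc]

theorem mulRight_mem_selfAdjointSubmodule {A : Matrix D D ℝ} (hA : A.IsSymm) :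
    LinearMap.mulRight ℝ A ∈ (hsForm D).selfAdjointSubmodule := fun X Y => by
  simp [hsForm_apply, hA.eq, trace_mul_comm A, mul_assoc]

end HilbertSchmidt

theorem pow_apply_eq_of_commute {V : Type*} [AddCommGroup V] [Module ℝ V] {S T : Module.End ℝ V}
    (h : Commute S T) {v : V} (hv : S v = T v) (n : ℕ) : (S ^ n) v = (T ^ n) v := by
  induction n with
  | zero => rfl
  | succ n ih =>
    rw [pow_succ, Module.End.mul_apply, hv, ← Module.End.mul_apply, (h.pow_left n).eq,
      Module.End.mul_apply, ih, ← Module.End.mul_apply, ← pow_succ']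

section MatrixPencil

variable {ι D : Type*} [Fintype ι] [Fintype D] (A : Matrix D D ℝ) (B : ι → Matrix D D ℝ)

/-- The matrix-valued semicircular element `A ⊗ 1 + ∑ i, B i ⊗ s i`, acting by left
multiplication. -/
noncomputable abbrev leftPencil : Module.End ℝ (Fock ι (Matrix D D ℝ)) :=
  pencil .left (LinearMap.mulLeft ℝ A) fun i => LinearMap.mulLeft ℝ (B i)

/-- The right multiplication counterpart of `leftPencil`. -/
noncomputable abbrev rightPencil : Module.End ℝ (Fock ι (Matrix D D ℝ)) :=
  pencil .right (LinearMap.mulRight ℝ A) fun i => LinearMap.mulRight ℝ (B i)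

theorem commute_leftPencil_rightPencil (A' : Matrix D D ℝ) (B' : ι → Matrix D D ℝ) :
    Commute (leftPencil A B) (rightPencil A' B') :=
  commute_pencil (LinearMap.commute_mulLeft_right _ _)
    (fun _ => LinearMap.commute_mulLeft_right _ _)
    (fun _ => LinearMap.commute_mulLeft_right _ _)
    (fun _ _ => LinearMap.commute_mulLeft_right _ _) Side.right_ne_left.symm

section SelfAdjoint

variable {A B} (hA : A.IsSymm) (hB : ∀ i, (B i).IsSymm)
include hA hB

theorem leftPencil_mem_selfAdjointSubmodule :
    leftPencil A B ∈ (fockForm (hsForm D) ι).selfAdjointSubmodule :=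
  pencil_mem_selfAdjointSubmodule isPosSemidef_hsForm.isSymm (mulLeft_mem_selfAdjointSubmodule hA)
    (fun i => mulLeft_mem_selfAdjointSubmodule (hB i)) _

theorem rightPencil_mem_selfAdjointSubmodule :
    rightPencil A B ∈ (fockForm (hsForm D) ι).selfAdjointSubmodule :=
  pencil_mem_selfAdjointSubmodule isPosSemidef_hsForm.isSymm (mulRight_mem_selfAdjointSubmodule hA)
    (fun i => mulRight_mem_selfAdjointSubmodule (hB i)) _

end SelfAdjoint

/-- The matrix moments sandwiching a matrix `C`: the vacuum expectation of `X ^ a * C * X ^ b` for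
the semicircular matrix `X`, with the two powers acting on opposite sides. -/
noncomputable def twoSidedMoment (a b : ℕ) : Module.End ℝ (Matrix D D ℝ) :=
  vacuumCoeff ι ∘ₗ (leftPencil A B ^ a * rightPencil A B ^ b) ∘ₗ vacuum ι

theorem twoSidedMoment_apply (a b : ℕ) (C : Matrix D D ℝ) :
    twoSidedMoment A B a b C =
      vacuumCoeff ι ((leftPencil A B ^ a) ((rightPencil A B ^ b) (vacuum ι C))) := rfl

variable [DecidableEq D]

theorem leftPencil_vacuum_one :
    leftPencil A B (vacuum ι 1) = rightPencil A B (vacuum ι 1) := by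
  rw [leftPencil, pencil_vacuum _ _ .left .right, rightPencil, pencil_apply, pencil_apply]
  simp [ampliate_vacuum]

theorem leftPencil_pow_vacuum_one (n : ℕ) :
    (leftPencil A B ^ n) (vacuum ι 1) = (rightPencil A B ^ n) (vacuum ι 1) :=
  pow_apply_eq_of_commute (commute_leftPencil_rightPencil A B A B) (leftPencil_vacuum_one A B) n

/-- The matrix-valued moments of `leftPencil`. -/
noncomputable def momentMatrix (n : ℕ) : Matrix D D ℝ :=
  vacuumCoeff ι ((leftPencil A B ^ n) (vacuum ι 1))

theorem moment_mulLeft (n : ℕ) :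
    moment (LinearMap.mulLeft ℝ A) (fun i => LinearMap.mulLeft ℝ (B i)) n =
      LinearMap.mulLeft ℝ (momentMatrix A B n) := by
  refine LinearMap.ext fun X => ?_
  have h := moment_apply_comm (J := LinearMap.mulRight ℝ X) (A := LinearMap.mulLeft ℝ A)
    (A' := LinearMap.mulLeft ℝ A) (B := fun i => LinearMap.mulLeft ℝ (B i))
    (B' := fun i => LinearMap.mulLeft ℝ (B i)) (by simp [mul_assoc]) (by simp [mul_assoc]) n 1
  rw [LinearMap.mulRight_apply, LinearMap.mulRight_apply, one_mul] at h
  exact h.symm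

theorem moment_mulRight (n : ℕ) :
    moment (LinearMap.mulRight ℝ A) (fun i => LinearMap.mulRight ℝ (B i)) n =
      LinearMap.mulRight ℝ (momentMatrix A B n) := by
  have hone : moment (LinearMap.mulRight ℝ A) (fun i => LinearMap.mulRight ℝ (B i)) n 1 =
      momentMatrix A B n := by
    rw [momentMatrix, leftPencil_pow_vacuum_one]
    exact (vacuumCoeff_pencil_pow_vacuum _ _ .right n 1).symm
  refine LinearMap.ext fun X => ?_
  have h := moment_apply_comm (J := LinearMap.mulLeft ℝ X) (A := LinearMap.mulRight ℝ A)
    (A' := LinearMap.mulRight ℝ A) (B := fun i => LinearMap.mulRight ℝ (B i))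
    (B' := fun i => LinearMap.mulRight ℝ (B i)) (by simp [mul_assoc]) (by simp [mul_assoc]) n 1
  rw [LinearMap.mulLeft_apply, LinearMap.mulLeft_apply, hone, mul_one] at h
  exact h.symm

theorem moment_mulVecLin (n : ℕ) :
    moment A.mulVecLin (fun i => (B i).mulVecLin) n = (momentMatrix A B n).mulVecLin := by
  refine LinearMap.ext fun v => ?_
  have h := moment_apply_comm (J := (mulVecBilin ℝ ℝ).flip v)
    (A := LinearMap.mulLeft ℝ A) (B := fun i => LinearMap.mulLeft ℝ (B i)) (A' := A.mulVecLin)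
    (B' := fun i => (B i).mulVecLin) (by simp) (by simp) n 1
  simpa [moment_mulLeft] using h.symm

theorem momentMatrix_zero : momentMatrix A B 0 = 1 := vacuumCoeff_vacuum _

theorem transpose_momentMatrix (n : ℕ) :
    (momentMatrix A B n)ᵀ = momentMatrix Aᵀ (fun i => (B i)ᵀ) n := by
  have h := moment_apply_comm (J := (transposeLinearEquiv D D ℝ ℝ).toLinearMap)
    (A := LinearMap.mulLeft ℝ A) (B := fun i => LinearMap.mulLeft ℝ (B i))
    (A' := LinearMap.mulRight ℝ Aᵀ) (B' := fun i => LinearMap.mulRight ℝ (B i)ᵀ) (by simp)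
    (by simp) n 1
  simpa [moment_mulLeft, moment_mulRight] using h

theorem isSymm_momentMatrix {A : Matrix D D ℝ} {B : ι → Matrix D D ℝ} (hA : A.IsSymm)
    (hB : ∀ i, (B i).IsSymm) (n : ℕ) : (momentMatrix A B n).IsSymm := by
  rw [Matrix.IsSymm, transpose_momentMatrix, hA.eq, funext fun i => (hB i).eq]

theorem momentMatrix_succ (n : ℕ) :
    momentMatrix A B (n + 1) = A * momentMatrix A B n +
      ∑ i, ∑ b ∈ range n,
        B i * momentMatrix A B (n - 1 - b) * (B i * momentMatrix A B b) := by
  have h : momentMatrix A B (n + 1) =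
      vacuumCoeff ι (leftPencil A B ((leftPencil A B ^ n) (vacuum ι 1))) := by
    rw [momentMatrix, pow_succ', Module.End.mul_apply]
  rw [h, leftPencil, pencil_apply, map_add, map_sum, vacuumCoeff_ampliate]
  refine congrArg₂ _ rfl (sum_congr rfl fun i _ => ?_)
  rw [← ampliate_semicircular, vacuumCoeff_ampliate, vacuumCoeff_semicircular_pencil_pow]
  simp only [moment_mulLeft, LinearMap.mulLeft_apply, mul_one, mul_sum, mul_assoc]

end MatrixPencil

theorem two_mul_sum_range_odd (u : ℕ → ℝ) (k : ℕ) :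
    2 * ∑ b ∈ range (2 * k + 1), u b =
      u 0 + u (2 * k) + ∑ i ∈ range k, (u (2 * i) + 2 * u (2 * i + 1) + u (2 * i + 2)) := by
  induction k with
  | zero => simp; ring
  | succ k ih =>
    rw [show 2 * (k + 1) + 1 = 2 * k + 1 + 1 + 1 by ring, sum_range_succ, sum_range_succ, mul_add,
      mul_add, ih, sum_range_succ, show 2 * (k + 1) = 2 * k + 1 + 1 by ring]
    ring

/-- A homogeneous polynomial of even degree with all coefficients `1` is a sum of squares. -/
theorem sum_apply_pow_mul_pow_nonneg {V : Type*} [AddCommGroup V] [Module ℝ V]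
    {β : LinearMap.BilinForm ℝ V} (hβ : β.IsPosSemidef) {S T : Module.End ℝ V}
    (hS : S ∈ β.selfAdjointSubmodule) (hT : T ∈ β.selfAdjointSubmodule) (hST : Commute S T)
    (v : V) (k : ℕ) : 0 ≤ ∑ b ∈ range (2 * k + 1), β v ((S ^ b * T ^ (2 * k - b)) v) := by
  have hmove (a b c d : ℕ) :
      β ((S ^ a * T ^ b) v) ((S ^ c * T ^ d) v) = β v ((S ^ (a + c) * T ^ (b + d)) v) := by
    rw [mul_mem_selfAdjointSubmodule (pow_mem_selfAdjointSubmodule hS a)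
      (pow_mem_selfAdjointSubmodule hT b) (hST.pow_pow a b) v, ← Module.End.mul_apply]
    congr 2
    rw [pow_add, pow_add, mul_assoc, mul_assoc, ← mul_assoc _ (S ^ c), ← (hST.pow_pow c b).eq,
      mul_assoc]
  refine nonneg_of_mul_nonneg_right (a := 2) ?_ two_pos
  rw [two_mul_sum_range_odd]
  refine add_nonneg (add_nonneg ?_ ?_) (sum_nonneg fun i hi => ?_)
  · have h := hβ.nonneg ((S ^ 0 * T ^ k) v)
    rw [hmove] at h
    simpa [two_mul] using h
  · have h := hβ.nonneg ((S ^ k * T ^ 0) v)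
    rw [hmove] at h
    simpa [two_mul] using h
  · obtain ⟨j, rfl⟩ := Nat.exists_eq_add_of_lt (mem_range.1 hi)
    have h := hβ.nonneg ((S ^ (i + 1) * T ^ j) v + (S ^ i * T ^ (j + 1)) v)
    simp only [map_add, LinearMap.add_apply, hmove] at h
    rw [show 2 * (i + j + 1) - 2 * i = j + 1 + (j + 1) by omega,
      show 2 * (i + j + 1) - (2 * i + 1) = j + (j + 1) by omega,
      show 2 * (i + j + 1) - (2 * i + 2) = j + j by omega]
    ring_nf at h ⊢
    exact h

section MatrixMoments

variable {ι D : Type*} [Fintype ι] [Fintype D]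

section TwoSided

variable (A : Matrix D D ℝ) (B : ι → Matrix D D ℝ)

theorem ampliate_mulRight_leftPencil (X : Matrix D D ℝ) (f : Fock ι (Matrix D D ℝ)) :
    ampliate ι (LinearMap.mulRight ℝ X) (leftPencil A B f) =
      leftPencil A B (ampliate ι (LinearMap.mulRight ℝ X) f) :=
  ampliate_pencil (by simp [Matrix.mul_assoc]) (by simp [Matrix.mul_assoc]) _ f

theorem ampliate_mulLeft_rightPencil (X : Matrix D D ℝ) (f : Fock ι (Matrix D D ℝ)) :
    ampliate ι (LinearMap.mulLeft ℝ X) (rightPencil A B f) =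
      rightPencil A B (ampliate ι (LinearMap.mulLeft ℝ X) f) :=
  ampliate_pencil (by simp [Matrix.mul_assoc]) (by simp [Matrix.mul_assoc]) _ f

theorem vacuumCoeff_leftPencil_pow_ampliate (a b : ℕ) (C X : Matrix D D ℝ) :
    vacuumCoeff ι ((leftPencil A B ^ a) (ampliate ι (LinearMap.mulLeft ℝ C)
        ((leftPencil A B ^ b) (vacuum ι X)))) = twoSidedMoment A B a b C * X := by
  classical
  have hX : vacuum ι X = ampliate ι (LinearMap.mulRight ℝ X) (vacuum ι 1) := by
    simp [ampliate_vacuum]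
  have hC : ampliate ι (LinearMap.mulLeft ℝ C) (vacuum ι 1) = vacuum ι C := by
    simp [ampliate_vacuum]
  have hcomm (f : Fock ι (Matrix D D ℝ)) : ampliate ι (LinearMap.mulLeft ℝ C)
      (ampliate ι (LinearMap.mulRight ℝ X) f) =
      ampliate ι (LinearMap.mulRight ℝ X) (ampliate ι (LinearMap.mulLeft ℝ C) f) :=
    Finsupp.ext fun w => (mul_assoc C (f w) X).symm
  rw [hX, ← pow_apply_comm (ampliate_mulRight_leftPencil A B X), hcomm,
    ← pow_apply_comm (ampliate_mulRight_leftPencil A B X), vacuumCoeff_ampliate,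
    leftPencil_pow_vacuum_one, pow_apply_comm (ampliate_mulLeft_rightPencil A B C), hC]
  rfl

theorem twoSidedMoment_eq [DecidableEq D] (a b : ℕ) (C : Matrix D D ℝ) :
    twoSidedMoment A B a b C = momentMatrix A B a * C * momentMatrix A B b +
      ∑ j, ∑ a' ∈ range a, ∑ b' ∈ range b, momentMatrix A B a' * B j *
        twoSidedMoment A B (a - 1 - a') (b - 1 - b') C * B j * momentMatrix A B b' := by
  have h := vacuumCoeff_pencil_pow_ampliate (LinearMap.mulLeft ℝ A)
    (fun i => LinearMap.mulLeft ℝ (B i)) (LinearMap.mulLeft ℝ C) a b 1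
  simp only [vacuumCoeff_leftPencil_pow_ampliate, moment_mulLeft,
    LinearMap.mulLeft_apply, mul_one, ← mul_assoc] at h
  exact h

end TwoSided

variable {A : Matrix D D ℝ} {B : ι → Matrix D D ℝ} (hA : A.IsSymm) (hB : ∀ i, (B i).IsSymm)

variable (A B) in
/-- Up to a factor, the second derivative of the trace of the `(2k+2)`-nd moment with respect to
`A`. -/
noncomputable def hessianForm (k : ℕ) : LinearMap.BilinForm ℝ (Matrix D D ℝ) :=
  (hsForm D).compl₂ (∑ b ∈ range (2 * k + 1), twoSidedMoment A B b (2 * k - b))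

theorem hessianForm_apply (k : ℕ) (X Y : Matrix D D ℝ) :
    hessianForm A B k X Y =
      ∑ b ∈ range (2 * k + 1), hsForm D X (twoSidedMoment A B b (2 * k - b) Y) := by
  simp [hessianForm, LinearMap.sum_apply]

theorem hsForm_twoSidedMoment (a b : ℕ) (X Y : Matrix D D ℝ) :
    hsForm D X (twoSidedMoment A B a b Y) = fockForm (hsForm D) ι (vacuum ι X)
      ((leftPencil A B ^ a * rightPencil A B ^ b) (vacuum ι Y)) :=
  (fockForm_vacuum _ _ _).symm

include hA hB

theorem twoSidedMoment_mem_selfAdjointSubmodule (a b : ℕ) :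
    twoSidedMoment A B a b ∈ (hsForm D).selfAdjointSubmodule := by
  have hsymm := isPosSemidef_hsForm (D := D).isSymm
  have h := mul_mem_selfAdjointSubmodule
    (pow_mem_selfAdjointSubmodule (leftPencil_mem_selfAdjointSubmodule hA hB) a)
    (pow_mem_selfAdjointSubmodule (rightPencil_mem_selfAdjointSubmodule hA hB) b)
    ((commute_leftPencil_rightPencil A B A B).pow_pow a b)
  intro X Y
  rw [hsymm.eq, hsForm_twoSidedMoment, hsForm_twoSidedMoment, ← h,
    (isSymm_fockForm hsymm).eq]

theorem isPosSemidef_hessianForm (k : ℕ) : (hessianForm A B k).IsPosSemidef where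
  eq X Y := by
    simp only [hessianForm_apply]
    refine sum_congr rfl fun b _ => ?_
    rw [← twoSidedMoment_mem_selfAdjointSubmodule hA hB, (isPosSemidef_hsForm (D := D)).isSymm.eq]
  nonneg X := by
    simp only [hessianForm_apply, hsForm_twoSidedMoment]
    exact sum_apply_pow_mul_pow_nonneg (isPosSemidef_fockForm isPosSemidef_hsForm)
      (leftPencil_mem_selfAdjointSubmodule hA hB) (rightPencil_mem_selfAdjointSubmodule hA hB)
      (commute_leftPencil_rightPencil A B A B) _ k

end MatrixMoments

section PosSemidef

open scoped MatrixOrder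

variable {ι D : Type*} [Fintype D]

/-- The standard inner product of real vectors. -/
abbrev dotForm (D : Type*) [Fintype D] : LinearMap.BilinForm ℝ (D → ℝ) := dotProductBilin ℝ ℝ

theorem isPosSemidef_dotForm : (dotForm D).IsPosSemidef where
  eq x y := dotProduct_comm x y
  nonneg x := Fintype.sum_nonneg fun i => mul_self_nonneg (x i)

theorem mulVecLin_mem_selfAdjointSubmodule {A : Matrix D D ℝ} (hA : A.IsSymm) :
    A.mulVecLin ∈ (dotForm D).selfAdjointSubmodule := fun x y => by
  simp [dotProduct_mulVec, ← mulVec_transpose, hA.eq]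

theorem trace_mul_nonneg {M N : Matrix D D ℝ} (hM : M.PosSemidef) (hN : N.PosSemidef) :
    0 ≤ (M * N).trace := by
  classical
  obtain ⟨F, rfl⟩ := CStarAlgebra.nonneg_iff_eq_star_mul_self.1 hM.nonneg
  rw [star_eq_conjTranspose, mul_assoc, trace_mul_comm]
  exact (hN.mul_mul_conjTranspose_same F).trace_nonneg

theorem trace_mul_le [DecidableEq D] {M K : Matrix D D ℝ} (hM : M.PosSemidef) {c : ℝ}
    (hK : K ≤ c • 1) : (M * K).trace ≤ c * M.trace := by
  have h := trace_mul_nonneg hM (Matrix.le_iff.1 hK)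
  simpa [mul_sub] using h

theorem posSemidef_momentMatrix [Fintype ι] [DecidableEq D] {A : Matrix D D ℝ}
    {B : ι → Matrix D D ℝ} (hA : A.IsSymm) (hB : ∀ i, (B i).IsSymm) (k : ℕ) :
    (momentMatrix A B (2 * k)).PosSemidef := by
  refine .of_dotProduct_mulVec_nonneg
    (by rw [IsHermitian, conjTranspose_eq_transpose_of_trivial, isSymm_momentMatrix hA hB])
    fun v => ?_
  have hβ := isPosSemidef_dotForm (D := D)
  have hself := pow_mem_selfAdjointSubmodule (pencil_mem_selfAdjointSubmodule (ι := ι) hβ.isSymm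
    (mulVecLin_mem_selfAdjointSubmodule hA)
    (fun i => mulVecLin_mem_selfAdjointSubmodule (hB i)) .left) k
  have h := apply_moment A.mulVecLin (fun i => (B i).mulVecLin) (dotForm D) (2 * k) v v
  rw [moment_mulVecLin, two_mul, pow_add, Module.End.mul_apply, ← hself] at h
  rw [star_trivial, two_mul]
  exact ((isPosSemidef_fockForm hβ).nonneg _).trans_eq h.symm

end PosSemidef

section Leg

variable {κ D : Type*} [DecidableEq κ] [Fintype D]

/-- The matrix `C` acting on the tensor factor `k` of `(ℝ ^ D) ^ ⊗κ`, whose elements are encoded as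
functions of a multi-index `κ → D`. -/
def leg (k : κ) (C : Matrix D D ℝ) : Module.End ℝ ((κ → D) → ℝ) where
  toFun z α := ∑ a, C (α k) a * z (Function.update α k a)
  map_add' z z' := by ext; simp [mul_add, sum_add_distrib]
  map_smul' c z := by ext; simp [mul_left_comm, mul_sum]

theorem leg_apply (k : κ) (C : Matrix D D ℝ) (z : (κ → D) → ℝ) (α : κ → D) :
    leg k C z α = ∑ a, C (α k) a * z (Function.update α k a) := rfl

theorem leg_mem_selfAdjointSubmodule [Fintype κ] (k : κ) {C : Matrix D D ℝ} (hC : C.IsSymm) :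
    leg k C ∈ (dotForm (κ → D)).selfAdjointSubmodule := by
  intro z w
  let swap : (κ → D) × D → (κ → D) × D := fun p => (Function.update p.1 k p.2, p.1 k)
  have hswap : swap.Involutive := fun p => by simp [swap]
  simp only [dotProductBilin_apply_apply, dotProduct, leg_apply, sum_mul, mul_sum,
    ← Fintype.sum_prod_type']
  refine Fintype.sum_equiv hswap.toPerm _ _ fun p => ?_
  simp [swap, hC.apply]
  ring

theorem commute_leg {k l : κ} (hkl : k ≠ l) (C C' : Matrix D D ℝ) :
    Commute (leg k C) (leg l C') := by
  refine LinearMap.ext fun z => funext fun α => ?_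
  simp only [Module.End.mul_apply, leg_apply, Function.update_of_ne hkl,
    Function.update_of_ne hkl.symm, mul_sum, Function.update_comm hkl, mul_left_comm]
  exact sum_comm

theorem moment_leg {ι : Type*} [Fintype ι] [DecidableEq D] (k : κ) (A : Matrix D D ℝ)
    (B : ι → Matrix D D ℝ) (n : ℕ) :
    moment (leg k A) (fun i => leg k (B i)) n = leg k (momentMatrix A B n) := by
  refine LinearMap.ext fun z => funext fun α => ?_
  let slice : ((κ → D) → ℝ) →ₗ[ℝ] D → ℝ := LinearMap.funLeft ℝ ℝ (Function.update α k)
  have hslice (C : Matrix D D ℝ) (z : (κ → D) → ℝ) :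
      slice (leg k C z) = C.mulVecLin (slice z) := by
    ext; simp [slice, LinearMap.funLeft_apply, leg_apply, mulVec, dotProduct]
  have h := congrFun (moment_apply_comm (hslice A) (fun i => hslice (B i)) n z) (α k)
  rw [moment_mulVecLin, ← hslice] at h
  simpa [slice, LinearMap.funLeft_apply] using h

theorem leg_comp_arrowCongr (σ : Equiv.Perm κ) (k : κ) (C : Matrix D D ℝ) (z : (κ → D) → ℝ) :
    leg k C (z ∘ σ.arrowCongr (Equiv.refl D)) =
      leg (σ k) C z ∘ σ.arrowCongr (Equiv.refl D) := by
  ext α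
  simp [leg_apply, Equiv.arrowCongr, Function.update_comp_equiv]

theorem dotProduct_leg_comp_arrowCongr [Fintype κ] (σ : Equiv.Perm κ) (k : κ) (C : Matrix D D ℝ)
    (z : (κ → D) → ℝ) :
    z ∘ σ.arrowCongr (Equiv.refl D) ⬝ᵥ leg k C (z ∘ σ.arrowCongr (Equiv.refl D)) =
      z ⬝ᵥ leg (σ k) C z := by
  rw [leg_comp_arrowCongr, comp_equiv_dotProduct_comp_equiv]

end Leg

section Crossing

open scoped MatrixOrder

variable {ι D : Type*}

/-- The tensor `P ⊗ Q`, regarded as a function of its four matrix indices. -/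
def matrixTensor (P : Matrix D D ℝ) : Matrix D D ℝ →ₗ[ℝ] (Fin 4 → D) → ℝ where
  toFun Q α := P (α 0) (α 1) * Q (α 2) (α 3)
  map_add' Q Q' := by ext; simp [mul_add]
  map_smul' c Q := by ext; simp [mul_left_comm]

theorem matrixTensor_apply (P Q : Matrix D D ℝ) (α : Fin 4 → D) :
    matrixTensor P Q α = P (α 0) (α 1) * Q (α 2) (α 3) := rfl

/-- The rotation `α ↦ (α 1, α 2, α 3, α 0)` of the four matrix indices. -/
def rotateIndex : (Fin 4 → D) ≃ (Fin 4 → D) :=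
  (finRotate 4).symm.arrowCongr (Equiv.refl D)

theorem matrixTensor_rotateIndex (P Q : Matrix D D ℝ) (α : Fin 4 → D) :
    matrixTensor P Q (rotateIndex α) = P (α 1) (α 2) * Q (α 3) (α 0) := rfl

section Fintype

variable [Fintype D]

theorem leg_zero_matrixTensor (C P Q : Matrix D D ℝ) :
    leg 0 C (matrixTensor P Q) = matrixTensor (C * P) Q := by
  ext α
  simp [leg_apply, matrixTensor_apply, mul_apply, sum_mul, mul_assoc]

theorem leg_two_matrixTensor (C P Q : Matrix D D ℝ) :
    leg 2 C (matrixTensor P Q) = matrixTensor P (C * Q) := by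
  ext α
  simp [leg_apply, matrixTensor_apply, mul_apply, mul_sum, mul_left_comm]

theorem leg_three_matrixTensor {C : Matrix D D ℝ} (hC : C.IsSymm) (P Q : Matrix D D ℝ) :
    leg 3 C (matrixTensor P Q) = matrixTensor P (Q * C) := by
  ext α
  simp [leg_apply, matrixTensor_apply, mul_apply, mul_sum, mul_assoc, mul_comm (C _ _), hC.apply]

theorem sum_fin_four_arrow (f : (Fin 4 → D) → ℝ) :
    ∑ α, f α = ∑ a, ∑ b, ∑ c, ∑ d, f ![a, b, c, d] := by
  have hcons {n : ℕ} (g : (Fin (n + 1) → D) → ℝ) :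
      ∑ α, g α = ∑ a, ∑ α : Fin n → D, g (vecCons a α) := by
    rw [← Fintype.sum_prod_type']
    exact (Fintype.sum_equiv (Fin.consEquiv fun _ => D) _ _ fun _ => rfl).symm
  simp only [hcons, Fintype.sum_unique]
  simp [Subsingleton.elim default ![]]

theorem matrixTensor_dotProduct (P Q P' Q' : Matrix D D ℝ) :
    matrixTensor P Q ⬝ᵥ matrixTensor P' Q' = hsForm D P P' * hsForm D Q Q' := by
  have hsForm_eq_sum (X Y : Matrix D D ℝ) : hsForm D X Y = ∑ a, ∑ b, X a b * Y a b := by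
    simp only [hsForm_apply, trace, diag_apply, mul_apply, transpose_apply]
    exact sum_comm
  simp only [dotProduct, sum_fin_four_arrow, matrixTensor_apply, hsForm_eq_sum, sum_mul]
  simp [mul_sum, mul_mul_mul_comm]

theorem matrixTensor_rotateIndex_dotProduct (P Q P' Q' : Matrix D D ℝ) :
    (matrixTensor P Q ∘ rotateIndex) ⬝ᵥ matrixTensor P' Q' = (P' * P * Q' * Q).trace := by
  simp only [dotProduct, sum_fin_four_arrow, Function.comp_apply, matrixTensor_rotateIndex]
  simp only [matrixTensor_apply, Matrix.mul_assoc, trace, diag_apply, mul_apply, mul_sum]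
  refine sum_congr rfl fun a _ => sum_congr rfl fun b _ => sum_congr rfl fun c _ =>
    sum_congr rfl fun d _ => ?_
  simp only [Matrix.cons_val]
  ring

end Fintype

variable [Fintype ι]

/-- The tensor `∑ i, B i ⊗ B i`. -/
def pairTensor (B : ι → Matrix D D ℝ) : (Fin 4 → D) → ℝ := ∑ i, matrixTensor (B i) (B i)

theorem pairTensor_comp_swap {B : ι → Matrix D D ℝ} (hB : ∀ i, (B i).IsSymm) :
    pairTensor B ∘ (Equiv.swap 0 1).arrowCongr (Equiv.refl D) = pairTensor B := by
  ext α
  simp only [pairTensor, Function.comp_apply, Finset.sum_apply]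
  exact sum_congr rfl fun i _ => congrArg (· * _) ((hB i).apply _ _)

theorem pairTensor_comp_addRight_two (B : ι → Matrix D D ℝ) :
    pairTensor B ∘ (Equiv.addRight (2 : Fin 4)).arrowCongr (Equiv.refl D) = pairTensor B := by
  ext α
  simp only [pairTensor, Function.comp_apply, Finset.sum_apply]
  exact sum_congr rfl fun i _ => mul_comm _ _

variable [Fintype D]

theorem pairTensor_dotProduct_leg {B : ι → Matrix D D ℝ} (hB : ∀ i, (B i).IsSymm)
    (M : Matrix D D ℝ) (k : Fin 4) :
    pairTensor B ⬝ᵥ leg k M (pairTensor B) = pairTensor B ⬝ᵥ leg 0 M (pairTensor B) := by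
  have hperm {σ : Equiv.Perm (Fin 4)}
      (hσ : pairTensor B ∘ σ.arrowCongr (Equiv.refl D) = pairTensor B) (l : Fin 4) :
      pairTensor B ⬝ᵥ leg (σ l) M (pairTensor B) = pairTensor B ⬝ᵥ leg l M (pairTensor B) := by
    rw [← dotProduct_leg_comp_arrowCongr, hσ]
  fin_cases k
  · rfl
  · exact hperm (pairTensor_comp_swap hB) 0
  · exact hperm (pairTensor_comp_addRight_two B) 0
  · exact (hperm (pairTensor_comp_addRight_two B) 1).trans (hperm (pairTensor_comp_swap hB) 0)

theorem pairTensor_dotProduct_leg_le [DecidableEq D] {B : ι → Matrix D D ℝ}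
    (hB : ∀ i, (B i).IsSymm) (hBB : Pairwise fun i j => hsForm D (B i) (B j) = 0) {Λ : ℝ}
    (hΛ : ∑ i, frobNormSq (B i) • (B i * B i) ≤ Λ • 1) {M : Matrix D D ℝ} (hM : M.PosSemidef)
    (k : Fin 4) : pairTensor B ⬝ᵥ leg k M (pairTensor B) ≤ Λ * M.trace := by
  have hterm (i : ι) : hsForm D (M * B i) (B i) = (M * (B i * B i)).trace := by
    rw [isPosSemidef_hsForm.isSymm.eq, hsForm_apply, (hB i).eq, trace_mul_comm, mul_assoc]
  calc pairTensor B ⬝ᵥ leg k M (pairTensor B)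
      = ∑ i, ∑ j, hsForm D (M * B j) (B i) * hsForm D (B j) (B i) := by
        rw [pairTensor_dotProduct_leg hB, dotProduct_comm]
        simp only [pairTensor, map_sum, leg_zero_matrixTensor, dotProduct_sum, sum_dotProduct,
          matrixTensor_dotProduct]
    _ = (M * ∑ i, frobNormSq (B i) • (B i * B i)).trace := by
        simp only [Finset.mul_sum, trace_sum]
        refine sum_congr rfl fun i _ => ?_
        rw [sum_eq_single i (fun j _ hji => by rw [hBB hji, mul_zero]) (by simp), hsForm_self,
          hterm, mul_comm, Matrix.mul_smul, trace_smul, smul_eq_mul]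
    _ ≤ Λ * M.trace := trace_mul_le hM hΛ

theorem leg_one_leg_zero_pairTensor_rotateIndex (B : ι → Matrix D D ℝ) {M : Matrix D D ℝ}
    (hM : M.IsSymm) (M' : Matrix D D ℝ) :
    leg 1 M' (leg 0 M (pairTensor B ∘ rotateIndex)) =
      ∑ i, matrixTensor (M' * B i) (B i * M) ∘ rotateIndex := by
  rw [rotateIndex, leg_comp_arrowCongr, leg_comp_arrowCongr,
    show (finRotate 4).symm 0 = 3 by decide, show (finRotate 4).symm 1 = 0 by decide]
  simp only [pairTensor, map_sum, leg_three_matrixTensor hM, leg_zero_matrixTensor]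
  ext α
  simp

theorem vacuumCoeff_leg_pencil_matrixTensor {A : Matrix D D ℝ} {B : ι → Matrix D D ℝ}
    (hA : A.IsSymm) (hB : ∀ i, (B i).IsSymm) (P Q : Matrix D D ℝ) (a b : ℕ) :
    vacuumCoeff ι ((pencil .left (leg 2 A) (fun i => leg 2 (B i)) ^ a)
      ((pencil .right (leg 3 A) (fun i => leg 3 (B i)) ^ b) (vacuum ι (matrixTensor P Q)))) =
      matrixTensor P (twoSidedMoment A B a b Q) := by
  have hleft := ampliate_pencil (J := matrixTensor P) (A := LinearMap.mulLeft ℝ A)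
    (B := fun i => LinearMap.mulLeft ℝ (B i)) (A' := leg 2 A) (B' := fun i => leg 2 (B i))
    (fun X => (leg_two_matrixTensor A P X).symm) (fun i X => (leg_two_matrixTensor _ P X).symm)
  have hright := ampliate_pencil (J := matrixTensor P) (A := LinearMap.mulRight ℝ A)
    (B := fun i => LinearMap.mulRight ℝ (B i)) (A' := leg 3 A) (B' := fun i => leg 3 (B i))
    (fun X => (leg_three_matrixTensor hA P X).symm)
    (fun i X => (leg_three_matrixTensor (hB i) P X).symm)
  rw [twoSidedMoment_apply, ← vacuumCoeff_ampliate, pow_apply_comm (hleft .left),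
    pow_apply_comm (hright .right), ampliate_vacuum]

theorem abs_sum_crossing_le [DecidableEq D] {A : Matrix D D ℝ} {B : ι → Matrix D D ℝ}
    (hA : A.IsSymm) (hB : ∀ i, (B i).IsSymm)
    (hBB : Pairwise fun i j => hsForm D (B i) (B j) = 0) {Λ : ℝ}
    (hΛ : ∑ i, frobNormSq (B i) • (B i * B i) ≤ Λ • 1) {w w' a b m : ℕ}
    (he : w + w' + a + b = 2 * m) :
    |∑ i, ∑ j, (B i * momentMatrix A B w' * B j * twoSidedMoment A B a b (B i) * B j *
      momentMatrix A B w).trace| ≤ Λ * (momentMatrix A B (2 * m)).trace := by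
  have hvertex := pairTensor_dotProduct_leg_le hB hBB hΛ (posSemidef_momentMatrix hA hB m)
  have hmoment (k : Fin 4) (n : ℕ) := moment_leg k A B n
  have h := abs_apply_moment_pencil_le (β := dotForm (Fin 4 → D)) (A := fun k => leg k A)
    (B := fun k i => leg k (B i)) (fun k => leg_mem_selfAdjointSubmodule k hA)
    (fun k i => leg_mem_selfAdjointSubmodule k (hB i)) isPosSemidef_dotForm
    (fun k l hkl => commute_leg hkl A A) (fun k l hkl i => commute_leg hkl A (B i))
    (fun k l hkl i j => commute_leg hkl (B i) (B j))
    (x := pairTensor B ∘ rotateIndex) (y := pairTensor B)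
    (R := Λ * (momentMatrix A B (2 * m)).trace)
    (fun k => by
      rw [hmoment, dotProductBilin_apply_apply, rotateIndex, dotProduct_leg_comp_arrowCongr]
      exact hvertex _)
    (fun k => by rw [hmoment]; exact hvertex k) he
  refine h.trans_eq' (congrArg _ ?_)
  have hx := leg_one_leg_zero_pairTensor_rotateIndex B (isSymm_momentMatrix hA hB w)
    (momentMatrix A B w')
  have hy := vacuumCoeff_leg_pencil_matrixTensor hA hB
  simp only [hmoment, hx, dotProductBilin_apply_apply]
  simp only [pairTensor, map_sum, hy, dotProduct_sum, sum_dotProduct,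
    matrixTensor_rotateIndex_dotProduct, mul_assoc]

end Crossing

section WeakDerivative

variable {𝒜 : Type*} [Ring 𝒜] [Algebra ℝ 𝒜]

theorem hasDerivAt_apply_pow (ψ : 𝒜 →ₗ[ℝ] ℝ) (L S W : 𝒜) (n : ℕ) (t : ℝ) :
    HasDerivAt (fun s : ℝ => ψ ((L + s • S + s ^ 2 • W) ^ n))
      (∑ a ∈ range n, ψ ((L + t • S + t ^ 2 • W) ^ a * (S + (2 * t) • W) *
        (L + t • S + t ^ 2 • W) ^ (n - 1 - a))) t := by
  induction n generalizing ψ with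
  | zero => simpa using hasDerivAt_const t _
  | succ n ih =>
    have hL := ih (ψ ∘ₗ LinearMap.mulLeft ℝ L)
    have hS := (hasDerivAt_id t).fun_mul (ih (ψ ∘ₗ LinearMap.mulLeft ℝ S))
    have hW := (hasDerivAt_pow 2 t).fun_mul (ih (ψ ∘ₗ LinearMap.mulLeft ℝ W))
    refine ((hL.fun_add hS).fun_add hW).congr_deriv ?_ |>.congr_of_eventuallyEq
      (.of_forall fun s => ?_)
    · rw [sum_range_succ']
      have hstep (a : ℕ) (X : 𝒜) : ψ ((L + t • S + t ^ 2 • W) ^ (a + 1) * (S + (2 * t) • W) * X) =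
          ψ (L * ((L + t • S + t ^ 2 • W) ^ a * (S + (2 * t) • W) * X)) +
          t * ψ (S * ((L + t • S + t ^ 2 • W) ^ a * (S + (2 * t) • W) * X)) +
          t ^ 2 * ψ (W * ((L + t • S + t ^ 2 • W) ^ a * (S + (2 * t) • W) * X)) := by
        simp only [pow_succ', mul_assoc, add_mul, smul_mul_assoc, map_add, map_smul, smul_eq_mul]
      simp only [hstep, sum_add_distrib, ← Finset.mul_sum, Nat.add_sub_cancel,
        Nat.sub_add_eq, Nat.sub_right_comm n _ 1, pow_zero, one_mul, Nat.sub_zero, add_mul,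
        smul_mul_assoc, map_add, map_smul, smul_eq_mul, LinearMap.comp_apply,
        LinearMap.mulLeft_apply, id]
      push_cast
      ring
    · simp only [pow_succ', add_mul, smul_mul_assoc, map_add, map_smul, smul_eq_mul,
        LinearMap.comp_apply, LinearMap.mulLeft_apply, id]

end WeakDerivative

theorem exists_forall_le_add_mul_sq {φ φ' : ℝ → ℝ} {φ'' C : ℝ} (h1 : ∀ s, HasDerivAt φ (φ' s) s)
    (h2 : HasDerivAt φ' φ'' 0) (h0 : φ' 0 = 0) (hC : φ'' < 2 * C) :
    ∃ ε > 0, ∀ s ∈ Set.Ioo 0 ε, φ s ≤ φ 0 + C * s ^ 2 := by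
  have hlt : ∀ᶠ s in nhdsWithin (0 : ℝ) (Set.Ioi 0), φ' s < 2 * C * s := by
    have hslope := (hasDerivAt_iff_tendsto_slope.1 h2).eventually_lt_const hC
    filter_upwards [nhdsGT_le_nhdsNE 0 hslope, self_mem_nhdsWithin] with s hs hpos
    rwa [slope_def_field, h0, sub_zero, sub_zero, div_lt_iff₀ hpos] at hs
  obtain ⟨ε, hε, hsub⟩ := mem_nhdsGT_iff_exists_Ioo_subset.1 hlt
  refine ⟨ε, hε, fun s hs => ?_⟩
  have hd (x : ℝ) : HasDerivAt (fun x => φ x - C * x ^ 2) (φ' x - 2 * C * x) x :=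
    ((h1 x).fun_sub ((hasDerivAt_pow 2 x).const_mul C)).congr_deriv (by push_cast; ring)
  have hanti : AntitoneOn (fun x => φ x - C * x ^ 2) (Set.Icc 0 s) := by
    refine antitoneOn_of_deriv_nonpos (convex_Icc 0 s)
      (fun x _ => (hd x).continuousAt.continuousWithinAt)
      (fun x _ => (hd x).differentiableAt.differentiableWithinAt) fun x hx => ?_
    rw [interior_Icc] at hx
    rw [(hd x).deriv]
    exact sub_nonpos.2 (hsub ⟨hx.1, hx.2.trans hs.2⟩).le
  have := hanti (Set.left_mem_Icc.2 hs.1.le) (Set.right_mem_Icc.2 hs.1.le) hs.1.le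
  norm_num at this
  linarith

section VacuumTrace

section LeftPencil

variable {ι D : Type*} [Fintype ι] [Fintype D] (A A' : Matrix D D ℝ) (B B' : ι → Matrix D D ℝ)

theorem leftPencil_add : leftPencil (A + A') (B + B') = leftPencil A B + leftPencil A' B' := by
  refine LinearMap.ext fun f => ?_
  have h (X Y : Matrix D D ℝ) : ampliate ι (LinearMap.mulLeft ℝ (X + Y)) f =
      ampliate ι (LinearMap.mulLeft ℝ X) f + ampliate ι (LinearMap.mulLeft ℝ Y) f :=
    Finsupp.ext fun w => add_mul X Y (f w)
  simp only [LinearMap.add_apply, pencil_apply, Pi.add_apply, h, map_add, sum_add_distrib]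
  abel

theorem leftPencil_smul (c : ℝ) : leftPencil (c • A) (c • B) = c • leftPencil A B := by
  refine LinearMap.ext fun f => ?_
  have h (X : Matrix D D ℝ) : ampliate ι (LinearMap.mulLeft ℝ (c • X)) f =
      c • ampliate ι (LinearMap.mulLeft ℝ X) f :=
    Finsupp.ext fun w => smul_mul_assoc c X (f w)
  simp only [LinearMap.smul_apply, pencil_apply, Pi.smul_apply, h, map_smul, smul_add, smul_sum]

theorem leftPencil_eq_add : leftPencil A B = leftPencil A 0 + leftPencil 0 B := by
  rw [← leftPencil_add, add_zero, zero_add]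

theorem leftPencil_path (S : Matrix D D ℝ) (c s : ℝ) :
    leftPencil (A + s • S) ((1 + s ^ 2 * c) • B) =
      leftPencil A B + s • leftPencil S 0 + s ^ 2 • (c • leftPencil 0 B) := by
  rw [← leftPencil_smul, ← leftPencil_smul, ← leftPencil_smul, ← leftPencil_add,
    ← leftPencil_add, smul_zero, smul_zero, smul_zero, add_zero, add_zero, add_smul, one_smul,
    mul_smul]

theorem leftPencil_zero_apply (f : Fock ι (Matrix D D ℝ)) :
    leftPencil A 0 f = ampliate ι (LinearMap.mulLeft ℝ A) f := by
  have h0 : ampliate ι (LinearMap.mulLeft ℝ (0 : Matrix D D ℝ)) f = 0 :=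
    Finsupp.ext fun w => zero_mul (f w)
  simp only [pencil_apply, Pi.zero_apply, h0, map_zero, sum_const_zero, add_zero]

end LeftPencil

/-- The trace state of operators on the Fock space: vacuum expectation followed by the matrix
trace. -/
noncomputable def vacuumTrace (ι D : Type*) [Fintype D] [DecidableEq D] :
    Module.End ℝ (Fock ι (Matrix D D ℝ)) →ₗ[ℝ] ℝ :=
  fockForm (hsForm D) ι (vacuum ι 1) ∘ₗ LinearMap.applyₗ (vacuum ι 1)

variable {ι D : Type*} [Fintype D] [DecidableEq D]

theorem vacuumTrace_apply (T : Module.End ℝ (Fock ι (Matrix D D ℝ))) :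
    vacuumTrace ι D T = fockForm (hsForm D) ι (vacuum ι 1) (T (vacuum ι 1)) := rfl

theorem vacuumTrace_eq_trace (T : Module.End ℝ (Fock ι (Matrix D D ℝ))) :
    vacuumTrace ι D T = (vacuumCoeff ι (T (vacuum ι 1))).trace := by
  rw [vacuumTrace_apply, fockForm_vacuum, hsForm_one_apply]

variable [Fintype ι]

/-- Traciality of the vacuum state: the left powers acting on the vacuum can be replaced by right
ones, which commute with `U`. -/
theorem vacuumTrace_pow_mul_mul_pow {A : Matrix D D ℝ} {B : ι → Matrix D D ℝ} (hA : A.IsSymm)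
    (hB : ∀ i, (B i).IsSymm) {U : Module.End ℝ (Fock ι (Matrix D D ℝ))}
    (hU : Commute U (rightPencil A B)) (a b : ℕ) :
    vacuumTrace ι D (leftPencil A B ^ a * U * leftPencil A B ^ b) =
      vacuumTrace ι D (U * leftPencil A B ^ (a + b)) := by
  have hL := pow_mem_selfAdjointSubmodule (leftPencil_mem_selfAdjointSubmodule hA hB) a
  have hR := pow_mem_selfAdjointSubmodule (rightPencil_mem_selfAdjointSubmodule hA hB) a
  have hcomm := (hU.mul_left ((commute_leftPencil_rightPencil A B A B).pow_left b)).pow_right a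
  simp only [vacuumTrace_apply, mul_assoc, Module.End.mul_apply]
  rw [← hL, leftPencil_pow_vacuum_one, hR, ← Module.End.mul_apply U,
    ← Module.End.mul_apply _ (U * _), ← hcomm.eq, Module.End.mul_apply,
    ← leftPencil_pow_vacuum_one, Module.End.mul_apply, ← Module.End.mul_apply (_ ^ b), ← pow_add,
    add_comm]

variable (A : Matrix D D ℝ) (B : ι → Matrix D D ℝ)

theorem vacuumTrace_leftPencil_pow (n : ℕ) :
    vacuumTrace ι D (leftPencil A B ^ n) = (momentMatrix A B n).trace := vacuumTrace_eq_trace _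

theorem vacuumTrace_leftPencil_zero_mul_pow (S : Matrix D D ℝ) (n : ℕ) :
    vacuumTrace ι D (leftPencil S 0 * leftPencil A B ^ n) = (S * momentMatrix A B n).trace := by
  rw [vacuumTrace_eq_trace, Module.End.mul_apply, leftPencil_zero_apply, vacuumCoeff_ampliate,
    LinearMap.mulLeft_apply, momentMatrix]

theorem vacuumTrace_leftPencil_zero_mul_pow_mul_pow {S : Matrix D D ℝ} (hS : S.IsSymm) (a b : ℕ) :
    vacuumTrace ι D (leftPencil S 0 * (leftPencil A B ^ a * leftPencil S 0 * leftPencil A B ^ b)) =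
      hsForm D S (twoSidedMoment A B a b S) := by
  simp only [vacuumTrace_eq_trace, Module.End.mul_apply, leftPencil_zero_apply,
    vacuumCoeff_ampliate, vacuumCoeff_leftPencil_pow_ampliate, mul_one, hsForm_apply, hS.eq,
    LinearMap.mulLeft_apply]

/-- The contribution of the semicircular term to the trace of the `n+1`-st moment. -/
noncomputable def interaction (n : ℕ) : ℝ :=
  ∑ i, ∑ b ∈ range n, (B i * momentMatrix A B (n - 1 - b) * (B i * momentMatrix A B b)).trace

theorem vacuumTrace_leftPencil_semicircular_mul_pow (n : ℕ) :
    vacuumTrace ι D (leftPencil 0 B * leftPencil A B ^ n) = interaction A B n := by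
  have h : vacuumTrace ι D (leftPencil A B * leftPencil A B ^ n) =
      (A * momentMatrix A B n).trace + interaction A B n := by
    rw [← pow_succ', vacuumTrace_leftPencil_pow, momentMatrix_succ]
    simp only [trace_add, trace_sum, interaction]
  nth_rw 1 [leftPencil_eq_add] at h
  rwa [add_mul, map_add, vacuumTrace_leftPencil_zero_mul_pow, add_right_inj] at h

end VacuumTrace

theorem isSymm_smul_apply {ι D : Type*} {B : ι → Matrix D D ℝ} (hB : ∀ i, (B i).IsSymm) (q : ℝ)
    (i : ι) : ((q • B) i).IsSymm := by
  rw [Pi.smul_apply]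
  exact (hB i).smul q

section Taylor

variable {ι D : Type*} [Fintype ι] [Fintype D] [DecidableEq D]
  {A S : Matrix D D ℝ} {B : ι → Matrix D D ℝ}

theorem hasDerivAt_trace_momentMatrix (hA : A.IsSymm) (hS : S.IsSymm) (hB : ∀ i, (B i).IsSymm)
    (c : ℝ) (n : ℕ) (t : ℝ) :
    HasDerivAt (fun s : ℝ => (momentMatrix (A + s • S) ((1 + s ^ 2 * c) • B) n).trace)
      (n * vacuumTrace ι D ((leftPencil S 0 + (2 * t) • c • leftPencil 0 B) *
        leftPencil (A + t • S) ((1 + t ^ 2 * c) • B) ^ (n - 1))) t := by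
  have h := hasDerivAt_apply_pow (vacuumTrace ι D) (leftPencil A B) (leftPencil S 0)
    (c • leftPencil 0 B) n t
  simp only [← leftPencil_path, vacuumTrace_leftPencil_pow] at h
  refine h.congr_deriv ?_
  have hcomm := ((commute_leftPencil_rightPencil S 0 (A + t • S) ((1 + t ^ 2 * c) • B)).add_left
    (((commute_leftPencil_rightPencil 0 B _ _).smul_left c).smul_left (2 * t)))
  have hB' := isSymm_smul_apply hB (1 + t ^ 2 * c)
  rw [sum_congr rfl fun a ha => by
    rw [vacuumTrace_pow_mul_mul_pow (hA.add (hS.smul t)) hB' hcomm,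
      Nat.add_sub_cancel' (Nat.le_sub_one_of_lt (mem_range.1 ha))]]
  rw [sum_const, card_range, nsmul_eq_mul]

theorem hasDerivAt_vacuumTrace_mul_pow (hS : S.IsSymm) (A : Matrix D D ℝ) (B : ι → Matrix D D ℝ)
    (c : ℝ) (k : ℕ) :
    HasDerivAt (fun t : ℝ => vacuumTrace ι D ((leftPencil S 0 + (2 * t) • c • leftPencil 0 B) *
        leftPencil (A + t • S) ((1 + t ^ 2 * c) • B) ^ (2 * k + 1)))
      (hessianForm A B k S S + 2 * c * interaction A B (2 * k + 1)) 0 := by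
  have hS' := hasDerivAt_apply_pow (vacuumTrace ι D ∘ₗ LinearMap.mulLeft ℝ (leftPencil S 0))
    (leftPencil A B) (leftPencil S 0) (c • leftPencil 0 B) (2 * k + 1) 0
  have hB' := ((hasDerivAt_id (0 : ℝ)).const_mul (2 * c)).fun_mul
    (hasDerivAt_apply_pow (vacuumTrace ι D ∘ₗ LinearMap.mulLeft ℝ (leftPencil 0 B))
      (leftPencil A B) (leftPencil S 0) (c • leftPencil 0 B) (2 * k + 1) 0)
  refine ((hS'.fun_add hB').congr_deriv ?_).congr_of_eventuallyEq (.of_forall fun t => ?_)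
  · simp only [zero_smul, zero_pow two_ne_zero, add_zero, mul_zero, zero_mul, mul_one, id,
      LinearMap.comp_apply, LinearMap.mulLeft_apply, vacuumTrace_leftPencil_semicircular_mul_pow,
      vacuumTrace_leftPencil_zero_mul_pow_mul_pow A B hS, hessianForm_apply, Nat.add_sub_cancel]
  · simp only [leftPencil_path, add_mul, smul_mul_assoc, map_add, map_smul, smul_eq_mul,
      LinearMap.comp_apply, LinearMap.mulLeft_apply, id]
    ring

theorem exists_trace_momentMatrix_le (hA : A.IsSymm) (hS : S.IsSymm) (hB : ∀ i, (B i).IsSymm)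
    {c C : ℝ} {k : ℕ} (h0 : (S * momentMatrix A B (2 * k + 1)).trace = 0)
    (hC : (2 * k + 2) * (hessianForm A B k S S + 2 * c * interaction A B (2 * k + 1)) < 2 * C) :
    ∃ ε > 0, ∀ s ∈ Set.Ioo (0 : ℝ) ε,
      (momentMatrix (A + s • S) ((1 + s ^ 2 * c) • B) (2 * k + 2)).trace ≤
        (momentMatrix A B (2 * k + 2)).trace + C * s ^ 2 := by
  obtain ⟨ε, hε, h⟩ := exists_forall_le_add_mul_sq
    (hasDerivAt_trace_momentMatrix hA hS hB c (2 * k + 2))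
    ((hasDerivAt_vacuumTrace_mul_pow hS A B c k).const_mul _)
    (by simp [vacuumTrace_leftPencil_zero_mul_pow, h0]) (by push_cast; exact hC)
  exact ⟨ε, hε, fun s hs => by simpa using h s hs⟩

theorem continuous_momentMatrix {X : Type*} [TopologicalSpace X] {A : X → Matrix D D ℝ}
    {B : X → ι → Matrix D D ℝ} (hA : Continuous A) (hB : Continuous B) (n : ℕ) :
    Continuous fun x => momentMatrix (A x) (B x) n := by
  induction n using Nat.strong_induction_on with
  | _ n ih =>
    cases n with
    | zero => simpa only [momentMatrix_zero] using continuous_const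
    | succ n =>
      simp only [momentMatrix_succ]
      have hB (i : ι) : Continuous fun x => B x i := (continuous_apply i).comp hB
      refine (hA.matrix_mul (ih n n.lt_succ_self)).add
        (continuous_finsetSum _ fun i _ => continuous_finsetSum _ fun b hb => ?_)
      have := mem_range.1 hb
      exact ((hB i).matrix_mul (ih _ (by omega))).matrix_mul
        ((hB i).matrix_mul (ih _ (by omega)))

end Taylor

section HessianBound
open scoped MatrixOrder

variable {ι D : Type*} [Fintype ι] [Fintype D] [DecidableEq D]
  {A : Matrix D D ℝ} {B : ι → Matrix D D ℝ} {Λ : ℝ}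

theorem hsForm_twoSidedMoment_self (A : Matrix D D ℝ) (B : ι → Matrix D D ℝ) (a b : ℕ)
    {C : Matrix D D ℝ} (hC : C.IsSymm) :
    hsForm D C (twoSidedMoment A B a b C) =
      (C * momentMatrix A B b * (C * momentMatrix A B a)).trace +
      ∑ j, ∑ a' ∈ range a, ∑ b' ∈ range b, (C * momentMatrix A B a' * B j *
        twoSidedMoment A B (a - 1 - a') (b - 1 - b') C * B j * momentMatrix A B b').trace := by
  rw [hsForm_apply, hC.eq, twoSidedMoment_eq, mul_add, trace_add, trace_mul_comm (C * _)]
  simp only [Finset.mul_sum, trace_sum, mul_assoc]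

variable (hA : A.IsSymm) (hB : ∀ i, (B i).IsSymm)
  (hBB : Pairwise fun i j => hsForm D (B i) (B j) = 0)
  (hΛ : ∑ i, frobNormSq (B i) • (B i * B i) ≤ Λ • 1)
include hA hB hBB hΛ

theorem sum_hsForm_twoSidedMoment_le {a b k : ℕ} (hab : a + b = 2 * (k + 1)) :
    ∑ i, hsForm D (B i) (twoSidedMoment A B a b (B i)) ≤
      ∑ i, (B i * momentMatrix A B b * (B i * momentMatrix A B a)).trace +
        a * b * (Λ * (momentMatrix A B (2 * k)).trace) := by
  rw [sum_congr rfl fun i _ => hsForm_twoSidedMoment_self A B a b (hB i), sum_add_distrib]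
  refine add_le_add_right ?_ _
  have hcomm (u : ι → ι → ℕ → ℕ → ℝ) :
      ∑ i, ∑ j, ∑ a' ∈ range a, ∑ b' ∈ range b, u i j a' b' =
        ∑ a' ∈ range a, ∑ b' ∈ range b, ∑ i, ∑ j, u i j a' b' := by
    simp only [sum_comm (s := univ) (t := range _)]
  rw [hcomm]
  calc _ ≤ ∑ _ ∈ range a, ∑ _ ∈ range b, Λ * (momentMatrix A B (2 * k)).trace := by
        refine sum_le_sum fun a' ha' => sum_le_sum fun b' hb' => (le_abs_self _).trans ?_
        refine abs_sum_crossing_le hA hB hBB hΛ ?_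
        have := mem_range.1 ha'
        have := mem_range.1 hb'
        omega
    _ = _ := by
        simp only [sum_const, card_range, nsmul_eq_mul]
        ring

theorem sum_hessianForm_le (k : ℕ) :
    ∑ i, hessianForm A B (k + 1) (B i) (B i) ≤ interaction A B (2 * (k + 1) + 1) +
      (2 * (k + 2)) ^ 3 * (Λ * (momentMatrix A B (2 * k)).trace) := by
  have hμ : 0 ≤ Λ * (momentMatrix A B (2 * k)).trace :=
    (abs_nonneg _).trans (abs_sum_crossing_le hA hB hBB hΛ (add_zero (2 * k + 0 + 0)))
  simp only [hessianForm_apply, interaction]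
  rw [sum_comm, sum_comm (s := univ)]
  have hle (b : ℕ) (hb : b ∈ range (2 * (k + 1) + 1)) :
      ∑ i, hsForm D (B i) (twoSidedMoment A B b (2 * (k + 1) - b) (B i)) ≤
        ∑ i, (B i * momentMatrix A B (2 * (k + 1) - b) * (B i * momentMatrix A B b)).trace +
          (2 * (k + 2)) ^ 2 * (Λ * (momentMatrix A B (2 * k)).trace) := by
    have hb := mem_range_succ_iff.1 hb
    refine (sum_hsForm_twoSidedMoment_le hA hB hBB hΛ (Nat.add_sub_cancel' hb)).trans ?_
    gcongr
    rw [sq]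
    gcongr
    · exact_mod_cast hb.trans (by omega)
    · exact_mod_cast (Nat.sub_le _ _).trans (by omega)
  refine (sum_le_sum hle).trans ?_
  rw [sum_add_distrib, sum_const, card_range, nsmul_eq_mul]
  refine add_le_add_right ?_ _
  rw [pow_succ' _ 2, mul_assoc]
  gcongr
  push_cast
  linarith

end HessianBound

section MomentComparison

variable {V : Type*} [AddCommGroup V] [Module ℝ V] {β : LinearMap.BilinForm ℝ V}

theorem abs_pow_mul_apply_pow_le (hβ : β.IsPosSemidef) {T : Module.End ℝ V}
    (hT : T ∈ β.selfAdjointSubmodule) {c R : ℝ} {x : V} {m a b : ℕ} (hab : a + b = 2 * m)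
    (hx : β x ((T ^ (2 * m)) x) ≤ R) (hc : c ^ (2 * m) * β x x ≤ R) :
    |c ^ a * β x ((T ^ b) x)| ≤ R := by
  let T' : Fin 2 → Module.End ℝ V := ![T, c • 1]
  have hcomm : Pairwise fun k l => Commute (T' k) (T' l) := by
    have h : Commute T (c • 1) := (Commute.one_right T).smul_right c
    intro k l
    fin_cases k <;> fin_cases l <;> simp [T', h, h.symm]
  have hone : (1 : Module.End ℝ V) ∈ β.selfAdjointSubmodule := fun _ _ => rfl
  have hpow (k : Fin 2) : β x (monomialHom T' hcomm (.ofAdd (Pi.single k (2 * m))) x) ≤ R := by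
    rw [monomialHom_ofAdd_single]
    fin_cases k
    · exact hx
    · simpa [T', smul_pow] using hc
  have h := abs_apply_monomial_le hβ (φ := monomialHom T' hcomm) (fun k => by
      rw [monomialHom_ofAdd_single, pow_one]
      fin_cases k
      · exact hT
      · exact Submodule.smul_mem _ c hone) hpow hpow (e := ![b, a])
    (by simp [add_comm, hab])
  have hmon : monomialHom T' hcomm (.ofAdd ![b, a]) = c ^ a • T ^ b := by
    conv_lhs => rw [← Finset.univ_sum_single ![b, a], Fin.sum_univ_two]
    simp [ofAdd_add, monomialHom_ofAdd_single, T', smul_pow]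
  rwa [hmon, LinearMap.smul_apply, map_smul, smul_eq_mul] at h

end MomentComparison

section SemicircularNorm

variable {ι E : Type*} [Fintype ι] [AddCommGroup E] [Module ℝ E] {β : LinearMap.BilinForm ℝ E}
  (B : ι → Module.End ℝ E)

/-- The creation part of `pencil .left 0 B`. -/
noncomputable def creationPart : Module.End ℝ (Fock ι E) :=
  ∑ i, create E .left i * ampliate ι (B i)

/-- The annihilation part of `pencil .left 0 B`. -/
noncomputable def annihilationPart : Module.End ℝ (Fock ι E) :=
  ∑ i, annihilate E .left i * ampliate ι (B i)

theorem pencil_zero : pencil .left 0 B = creationPart B + annihilationPart B := by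
  have h : ampliate ι (0 : Module.End ℝ E) = 0 := LinearMap.ext fun f => Finsupp.ext fun w => rfl
  simp only [pencil, h, zero_add, creationPart, annihilationPart, semicircular, add_mul,
    sum_add_distrib]

theorem fockForm_creationPart_self (f : Fock ι E) :
    fockForm β ι (creationPart B f) (creationPart B f) =
      ∑ i, fockForm β ι (ampliate ι (B i) f) (ampliate ι (B i) f) := by
  classical
  have h (i j : ι) (g : Fock ι E) :
      annihilate E .left i (create E .left j g) = if j = i then g else 0 :=
    Finsupp.ext fun w => by
      rw [annihilate_apply, create_apply_attach]
      split_ifs <;> rfl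
  simp only [creationPart, LinearMap.sum_apply, map_sum, Module.End.mul_apply, fockForm_create, h]
  simp [apply_ite]

variable {B} {s : ℝ}

theorem fockForm_creationPart (hB : ∀ i, B i ∈ β.selfAdjointSubmodule) (f g : Fock ι E) :
    fockForm β ι (creationPart B f) g = fockForm β ι f (annihilationPart B g) := by
  simp only [creationPart, annihilationPart, LinearMap.sum_apply, map_sum, Module.End.mul_apply,
    fockForm_create, fockForm_ampliate (hB _), ampliate_annihilate]

theorem fockForm_creationPart_self_le (hs : ∀ x, ∑ i, β (B i x) (B i x) ≤ s * β x x)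
    (f : Fock ι E) :
    fockForm β ι (creationPart B f) (creationPart B f) ≤ s * fockForm β ι f f := by
  have hsum (i : ι) : fockForm β ι (ampliate ι (B i) f) (ampliate ι (B i) f) =
      ∑ w ∈ f.support, β (B i (f w)) (B i (f w)) := by
    have hsupp : (ampliate ι (B i) f).support ⊆ f.support :=
      Finsupp.support_mapRange (hf := map_zero (B i))
    rw [fockForm_apply, Finsupp.sum_of_support_subset _ hsupp _ fun w _ => by simp]
    rfl
  rw [fockForm_creationPart_self, sum_congr rfl fun i _ => hsum i, sum_comm, fockForm_apply,
    Finsupp.sum, Finset.mul_sum]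
  exact sum_le_sum fun w _ => hs (f w)

variable (hβ : β.IsPosSemidef) (hB : ∀ i, B i ∈ β.selfAdjointSubmodule) (hs0 : 0 ≤ s)
  (hs : ∀ x, ∑ i, β (B i x) (B i x) ≤ s * β x x)
include hβ hB hs0 hs

theorem fockForm_annihilationPart_self_le (f : Fock ι E) :
    fockForm β ι (annihilationPart B f) (annihilationPart B f) ≤ s * fockForm β ι f f := by
  have hF := isPosSemidef_fockForm (ι := ι) hβ
  set g := annihilationPart B f
  have hcs := apply_sq_le hF (creationPart B g) f
  rw [fockForm_creationPart hB, sq] at hcs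
  refine (hF.nonneg g).eq_or_lt.elim (fun h0 => h0 ▸ mul_nonneg hs0 (hF.nonneg f)) fun h0 =>
    le_of_mul_le_mul_left ?_ h0
  calc fockForm β ι g g * fockForm β ι g g
      ≤ fockForm β ι (creationPart B g) (creationPart B g) * fockForm β ι f f := hcs
    _ ≤ s * fockForm β ι g g * fockForm β ι f f :=
        mul_le_mul_of_nonneg_right (fockForm_creationPart_self_le hs g) (hF.nonneg f)
    _ = fockForm β ι g g * (s * fockForm β ι f f) := by ring

theorem fockForm_pencil_zero_self_le (f : Fock ι E) :
    fockForm β ι (pencil .left 0 B f) (pencil .left 0 B f) ≤ 4 * s * fockForm β ι f f := by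
  have hc := fockForm_creationPart_self_le hs f
  have ha := fockForm_annihilationPart_self_le hβ hB hs0 hs f
  have hparallelogram :=
    (isPosSemidef_fockForm (ι := ι) hβ).nonneg (creationPart B f - annihilationPart B f)
  rw [pencil_zero]
  simp only [map_sub, map_add, LinearMap.sub_apply, LinearMap.add_apply] at hparallelogram ⊢
  linarith

theorem fockForm_pencil_zero_pow_self_le (m : ℕ) (f : Fock ι E) :
    fockForm β ι ((pencil .left 0 B ^ m) f) ((pencil .left 0 B ^ m) f) ≤
      (4 * s) ^ m * fockForm β ι f f := by
  induction m with
  | zero => simp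
  | succ m ih =>
    rw [pow_succ', Module.End.mul_apply, pow_succ', mul_assoc]
    exact (fockForm_pencil_zero_self_le hβ hB hs0 hs _).trans (by gcongr)

end SemicircularNorm

theorem fockForm_vacuum_one {ι D : Type*} [Fintype D] [DecidableEq D] :
    fockForm (hsForm D) ι (vacuum ι 1) (vacuum ι 1) = Fintype.card D := by
  rw [fockForm_vacuum, vacuumCoeff_vacuum, hsForm_one_apply, trace_one]

open scoped MatrixOrder in
theorem dotProduct_mulVec_le_trace_mul {D : Type*} [Fintype D] {M : Matrix D D ℝ}
    (hM : M.PosSemidef) (v : D → ℝ) : v ⬝ᵥ M *ᵥ v ≤ M.trace * (v ⬝ᵥ v) := by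
  classical
  have hrank : vecMulVec v v ≤ (v ⬝ᵥ v) • (1 : Matrix D D ℝ) := by
    refine Matrix.le_iff.2 (.of_dotProduct_mulVec_nonneg ?_ fun w => ?_)
    · exact IsHermitian.sub (by simp [IsHermitian]) (by simp [IsHermitian])
    · have h : (v ⬝ᵥ w) ^ 2 ≤ (v ⬝ᵥ v) * (w ⬝ᵥ w) := apply_sq_le isPosSemidef_dotForm v w
      simp only [sub_mulVec, smul_mulVec, one_mulVec, vecMulVec_mulVec, star_trivial,
        dotProduct_sub, dotProduct_smul, smul_eq_mul, MulOpposite.smul_eq_mul_unop,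
        MulOpposite.unop_op, dotProduct_comm w v]
      linarith
  have h := trace_mul_le hM hrank
  rw [mul_vecMulVec, trace_vecMulVec, dotProduct_comm] at h
  linarith

section MomentBounds

variable {ι D : Type*} [Fintype ι] [Fintype D] [DecidableEq D]
  {A : Matrix D D ℝ} {B : ι → Matrix D D ℝ} (hA : A.IsSymm) (hB : ∀ i, (B i).IsSymm)

open scoped MatrixOrder in
theorem trace_momentMatrix_zero_le (hB : ∀ i, (B i).IsSymm) {s : ℝ} (hs0 : 0 ≤ s)
    (hs : ∑ i, B i * B i ≤ s • 1) (m : ℕ) :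
    (momentMatrix 0 B (2 * m)).trace ≤ Fintype.card D * (4 * s) ^ m := by
  have hsum (X : Matrix D D ℝ) : ∑ i, hsForm D (LinearMap.mulLeft ℝ (B i) X)
      (LinearMap.mulLeft ℝ (B i) X) ≤ s * hsForm D X X := by
    have h := trace_mul_le (posSemidef_self_mul_conjTranspose X) hs
    rw [conjTranspose_eq_transpose_of_trivial, trace_mul_comm X, ← hsForm_apply] at h
    refine le_of_eq_of_le ?_ h
    simp only [Finset.mul_sum, trace_sum, hsForm_apply, LinearMap.mulLeft_apply, transpose_mul,
      (hB _).eq]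
    refine sum_congr rfl fun i _ => ?_
    rw [mul_assoc X, trace_mul_comm X]
    simp only [mul_assoc]
  have hself := pow_mem_selfAdjointSubmodule
    (leftPencil_mem_selfAdjointSubmodule isSymm_zero hB) m
  rw [← vacuumTrace_leftPencil_pow, vacuumTrace_apply, two_mul, pow_add, Module.End.mul_apply,
    ← hself, leftPencil, LinearMap.mulLeft_zero_eq_zero]
  refine (fockForm_pencil_zero_pow_self_le isPosSemidef_hsForm
    (fun i => mulLeft_mem_selfAdjointSubmodule (hB i)) hs0 hsum m _).trans_eq ?_
  rw [fockForm_vacuum_one, mul_comm]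

include hA hB

theorem trace_momentMatrix_nonneg (k : ℕ) : 0 ≤ (momentMatrix A B (2 * k)).trace :=
  (posSemidef_momentMatrix hA hB k).trace_nonneg

theorem pow_mul_trace_momentMatrix_le {c : ℝ} {a b m : ℕ} (hab : a + b = 2 * m) :
    c ^ a * (momentMatrix A B b).trace ≤
      (momentMatrix A B (2 * m)).trace + Fintype.card D * c ^ (2 * m) := by
  have hc : 0 ≤ Fintype.card D * c ^ (2 * m) :=
    mul_nonneg (Nat.cast_nonneg _) ((even_two_mul m).pow_nonneg c)
  have h := abs_pow_mul_apply_pow_le (isPosSemidef_fockForm (ι := ι) isPosSemidef_hsForm)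
    (leftPencil_mem_selfAdjointSubmodule hA hB) (x := vacuum ι 1) (c := c) hab
    (R := (momentMatrix A B (2 * m)).trace + Fintype.card D * c ^ (2 * m))
  simp only [← vacuumTrace_apply, vacuumTrace_leftPencil_pow, fockForm_vacuum_one] at h
  exact (le_abs_self _).trans (h (by linarith)
    (by linarith [trace_momentMatrix_nonneg hA hB m]))

/-- The vacuum component of the pencil applied to the vacuum vector `v` is `A v`. -/
theorem dotProduct_mulVec_self_le_moment (v : D → ℝ) :
    A *ᵥ v ⬝ᵥ A *ᵥ v ≤ v ⬝ᵥ momentMatrix A B 2 *ᵥ v := by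
  have hβ := isPosSemidef_dotForm (D := D)
  set P := pencil .left A.mulVecLin fun i => (B i).mulVecLin
  have hP : P ∈ (fockForm (dotForm D) ι).selfAdjointSubmodule :=
    pencil_mem_selfAdjointSubmodule hβ.isSymm (mulVecLin_mem_selfAdjointSubmodule hA)
      (fun i => mulVecLin_mem_selfAdjointSubmodule (hB i)) _
  have hvac : vacuumCoeff ι (P (vacuum ι v)) = A *ᵥ v := by
    simpa [moment_apply, momentMatrix_succ, momentMatrix_zero] using
      LinearMap.congr_fun (moment_mulVecLin A B 1) v
  have hmoment : fockForm (dotForm D) ι (P (vacuum ι v)) (P (vacuum ι v)) =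
      v ⬝ᵥ momentMatrix A B 2 *ᵥ v := by
    rw [hP, ← Module.End.mul_apply, ← sq, ← apply_moment, moment_mulVecLin]
    rfl
  have hcs := apply_sq_le (isPosSemidef_fockForm (ι := ι) hβ) (vacuum ι (A *ᵥ v)) (P (vacuum ι v))
  rw [fockForm_vacuum, fockForm_vacuum, hvac, vacuumCoeff_vacuum, hmoment, sq] at hcs
  refine (hβ.nonneg (A *ᵥ v)).eq_or_lt.elim (fun h0 => ?_) fun h0 => le_of_mul_le_mul_left hcs h0
  exact h0.symm.trans_le (hmoment ▸ (isPosSemidef_fockForm hβ).nonneg _)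

theorem dotProduct_mulVec_self_le {c : ℝ} (hc : 0 < c) (k : ℕ)
    (h : (momentMatrix A B (2 * (k + 1))).trace ≤ c ^ (2 * (k + 1))) (v : D → ℝ) :
    A *ᵥ v ⬝ᵥ A *ᵥ v ≤ c ^ 2 * (v ⬝ᵥ v) := by
  have hβ := isPosSemidef_dotForm (D := D)
  set P := pencil .left A.mulVecLin fun i => (B i).mulVecLin
  have hP : P ∈ (fockForm (dotForm D) ι).selfAdjointSubmodule :=
    pencil_mem_selfAdjointSubmodule hβ.isSymm (mulVecLin_mem_selfAdjointSubmodule hA)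
      (fun i => mulVecLin_mem_selfAdjointSubmodule (hB i)) _
  have hmoment (n : ℕ) : fockForm (dotForm D) ι (vacuum ι v) ((P ^ n) (vacuum ι v)) =
      v ⬝ᵥ momentMatrix A B n *ᵥ v := by
    rw [← apply_moment, moment_mulVecLin]
    rfl
  have hvac : fockForm (dotForm D) ι (vacuum ι v) (vacuum ι v) = v ⬝ᵥ v := by
    rw [fockForm_vacuum, vacuumCoeff_vacuum]
    rfl
  have htrace : v ⬝ᵥ momentMatrix A B (2 * (k + 1)) *ᵥ v ≤
      (momentMatrix A B (2 * (k + 1))).trace * (v ⬝ᵥ v) :=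
    dotProduct_mulVec_le_trace_mul (posSemidef_momentMatrix hA hB (k + 1)) v
  have hle := abs_pow_mul_apply_pow_le (isPosSemidef_fockForm (ι := ι) hβ) hP (x := vacuum ι v)
    (c := c) (R := c ^ (2 * (k + 1)) * (v ⬝ᵥ v)) (a := 2 * k) (b := 2) (by ring)
    ((hmoment _).trans_le (htrace.trans (mul_le_mul_of_nonneg_right h (hβ.nonneg v))))
    (by rw [hvac])
  rw [hmoment, mul_add, pow_add, mul_assoc] at hle
  exact (dotProduct_mulVec_self_le_moment hA hB v).trans
    (le_of_mul_le_mul_left ((le_abs_self _).trans hle) (by positivity))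

end MomentBounds

section OperatorNorm

open scoped Matrix.Norms.L2Operator

variable {D : Type*} [Fintype D] [DecidableEq D]

theorem opNorm_eq_norm (M : Matrix D D ℝ) : opNorm M = ‖M‖ := (l2_opNorm_def M).symm

theorem opNorm_zero : opNorm (0 : Matrix D D ℝ) = 0 := by rw [opNorm_eq_norm, norm_zero]

theorem opNorm_add_le (M M' : Matrix D D ℝ) : opNorm (M + M') ≤ opNorm M + opNorm M' := by
  simpa only [opNorm_eq_norm] using norm_add_le M M'

theorem opNorm_smul (c : ℝ) (M : Matrix D D ℝ) : opNorm (c • M) = |c| * opNorm M := by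
  rw [opNorm_eq_norm, opNorm_eq_norm, norm_smul, Real.norm_eq_abs]

theorem opNorm_sum_le {ι : Type*} (s : Finset ι) (M : ι → Matrix D D ℝ) :
    opNorm (∑ i ∈ s, M i) ≤ ∑ i ∈ s, opNorm (M i) := by
  simpa only [opNorm_eq_norm] using norm_sum_le s M

theorem opNorm_le_iff {M : Matrix D D ℝ} {c : ℝ} (hc : 0 ≤ c) :
    opNorm M ≤ c ↔ ∀ v, M *ᵥ v ⬝ᵥ M *ᵥ v ≤ c ^ 2 * (v ⬝ᵥ v) := by
  have hnorm (v : D → ℝ) : ‖WithLp.toLp 2 v‖ ^ 2 = v ⬝ᵥ v := by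
    rw [EuclideanSpace.real_norm_sq_eq, dotProduct]
    exact sum_congr rfl fun u _ => sq (v u)
  rw [opNorm, ContinuousLinearMap.opNorm_le_iff hc, (WithLp.equiv 2 (D → ℝ)).symm.surjective.forall]
  refine forall_congr' fun v => ?_
  rw [← hnorm, ← hnorm, ← mul_pow, sq_le_sq₀ (norm_nonneg _) (mul_nonneg hc (norm_nonneg _))]
  rfl

end OperatorNorm

section Cube

variable {υ : Type*} [Fintype υ] {α x y : υ → ℝ}

/-- The weighted square norm `∑ u, α u * x u ^ 2`, which measures the progress of the rounding. -/
def weightedNormSq (α x : υ → ℝ) : ℝ := ∑ u, α u * x u ^ 2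

theorem weightedNormSq_nonneg (hα : ∀ u, 0 ≤ α u) (x : υ → ℝ) : 0 ≤ weightedNormSq α x :=
  sum_nonneg fun u _ => mul_nonneg (hα u) (sq_nonneg _)

theorem weightedNormSq_pos (hα : ∀ u, 0 < α u) (hy : y ≠ 0) : 0 < weightedNormSq α y := by
  obtain ⟨u, hu⟩ := Function.ne_iff.1 hy
  exact sum_pos' (fun u _ => mul_nonneg (hα u).le (sq_nonneg _))
    ⟨u, mem_univ u, mul_pos (hα u) (sq_pos_of_ne_zero hu)⟩

theorem weightedNormSq_le_sum (hα : ∀ u, 0 ≤ α u) (hx : ∀ u, |x u| ≤ 1) :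
    weightedNormSq α x ≤ ∑ u, α u :=
  sum_le_sum fun u _ => mul_le_of_le_one_right (hα u) ((sq_le_one_iff_abs_le_one _).2 (hx u))

theorem weightedNormSq_add_smul (h : ∑ u, α u * x u * y u = 0) (s : ℝ) :
    weightedNormSq α (x + s • y) = weightedNormSq α x + s ^ 2 * weightedNormSq α y := by
  have hexpand : weightedNormSq α (x + s • y) = weightedNormSq α x +
      2 * s * (∑ u, α u * x u * y u) + s ^ 2 * weightedNormSq α y := by
    simp only [weightedNormSq, Finset.mul_sum, ← sum_add_distrib, Pi.add_apply, Pi.smul_apply,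
      smul_eq_mul]
    exact sum_congr rfl fun u _ => by ring
  rw [hexpand, h, mul_zero, add_zero]

theorem continuous_weightedNormSq : Continuous (weightedNormSq α) := by
  unfold weightedNormSq
  fun_prop

theorem exists_forall_abs_add_smul_le_one {υ : Type*} [Finite υ] {x y : υ → ℝ}
    (hx : ∀ u, |x u| ≤ 1) (hy : ∀ u, ¬|x u| < 1 → y u = 0) :
    ∃ ε > (0 : ℝ), ∀ s ∈ Set.Ioo 0 ε, ∀ u, |(x + s • y) u| ≤ 1 := by
  have h (u : υ) : ∀ᶠ s in nhdsWithin (0 : ℝ) (Set.Ioi 0), |(x + s • y) u| ≤ 1 := by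
    by_cases hu : |x u| < 1
    · have hc : Continuous fun s : ℝ => |(x + s • y) u| := by
        simp only [Pi.add_apply, Pi.smul_apply, smul_eq_mul]
        fun_prop
      exact ((hc.continuousAt.eventually_lt continuousAt_const (by simpa using hu)).filter_mono
        nhdsWithin_le_nhds).mono fun s hs => hs.le
    · exact .of_forall fun s => by simpa [hy u hu] using hx u
  exact mem_nhdsGT_iff_exists_Ioo_subset.1 (Filter.eventually_all.2 h)

theorem isCompact_forall_abs_le_one {υ : Type*} [Finite υ] :
    IsCompact {x : υ → ℝ | ∀ u, |x u| ≤ 1} := by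
  cases nonempty_fintype υ
  have h : {x : υ → ℝ | ∀ u, |x u| ≤ 1} = Metric.closedBall 0 1 := by
    ext x
    rw [mem_closedBall_zero_iff, pi_norm_le_iff_of_nonneg zero_le_one]
    rfl
  exact h ▸ isCompact_closedBall 0 1

theorem mul_exp_neg_weightedNormSq_add_smul_le {φ : (υ → ℝ) → ℝ} {γ s : ℝ} (hφ : 0 ≤ φ x)
    (horth : ∑ u, α u * x u * y u = 0)
    (hle : φ (x + s • y) ≤ φ x + γ * weightedNormSq α y * φ x * s ^ 2) :
    φ (x + s • y) * Real.exp (-γ * weightedNormSq α (x + s • y)) ≤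
      φ x * Real.exp (-γ * weightedNormSq α x) := calc
  _ ≤ φ x * Real.exp (γ * (s ^ 2 * weightedNormSq α y)) *
        Real.exp (-γ * weightedNormSq α (x + s • y)) := by
      refine mul_le_mul_of_nonneg_right (hle.trans ?_) (Real.exp_pos _).le
      have h := mul_le_mul_of_nonneg_left
        (Real.add_one_le_exp (γ * (s ^ 2 * weightedNormSq α y))) hφ
      linarith
  _ = φ x * Real.exp (-γ * weightedNormSq α x) := by
      rw [mul_assoc, ← Real.exp_add, weightedNormSq_add_smul horth]
      congr 2
      ring

/-- Maximize `weightedNormSq α` among the points of the cube at which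
`φ * exp (-γ * weightedNormSq α)` has not increased. -/
theorem exists_sum_fractional_le {φ : (υ → ℝ) → ℝ} (hφ : Continuous φ) (hφ0 : ∀ x, 0 ≤ φ x)
    (hα : ∀ u, 0 < α u) {γ R : ℝ} (hγ : 0 ≤ γ)
    (hstep : ∀ x : υ → ℝ, (∀ u, |x u| ≤ 1) → R < ∑ u with |x u| < 1, α u →
      ∃ y ≠ 0, (∀ u, ¬|x u| < 1 → y u = 0) ∧ ∑ u, α u * x u * y u = 0 ∧
        ∃ ε > (0 : ℝ), ∀ s ∈ Set.Ioo 0 ε,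
          φ (x + s • y) ≤ φ x + γ * weightedNormSq α y * φ x * s ^ 2)
    {x₀ : υ → ℝ} (hx₀ : ∀ u, |x₀ u| ≤ 1) :
    ∃ x : υ → ℝ, (∀ u, |x u| ≤ 1) ∧ ∑ u with |x u| < 1, α u ≤ R ∧
      φ x ≤ φ x₀ * Real.exp (γ * ∑ u, α u) := by
  have hα' (u : υ) : 0 ≤ α u := (hα u).le
  set G : (υ → ℝ) → ℝ := fun x => φ x * Real.exp (-γ * weightedNormSq α x) with hG
  have hGc : Continuous G := hφ.mul (by have := continuous_weightedNormSq (α := α); fun_prop)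
  obtain ⟨x, ⟨hx, hGx⟩, hmax⟩ :=
    (isCompact_forall_abs_le_one.inter_right
      (isClosed_le hGc (continuous_const (y := G x₀)))).exists_isMaxOn
      ⟨x₀, hx₀, le_refl (G x₀)⟩ continuous_weightedNormSq.continuousOn
  refine ⟨x, hx, not_lt.1 fun hlt => ?_, ?_⟩
  · obtain ⟨y, hy, hfrac, horth, ε, hε, hle⟩ := hstep x hx hlt
    obtain ⟨ε', hε', hmem⟩ := exists_forall_abs_add_smul_le_one hx hfrac
    obtain ⟨s, hs0, hs⟩ := _root_.exists_between (lt_min hε hε')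
    rw [lt_min_iff] at hs
    have hGs : G (x + s • y) ≤ G x :=
      mul_exp_neg_weightedNormSq_add_smul_le (hφ0 x) horth (hle s ⟨hs0, hs.1⟩)
    have h := hmax ⟨hmem s ⟨hs0, hs.2⟩, hGs.trans hGx⟩
    have hpos : 0 < s ^ 2 * weightedNormSq α y :=
      mul_pos (pow_pos hs0 2) (weightedNormSq_pos hα hy)
    rw [Set.mem_ofPred_eq, weightedNormSq_add_smul horth] at h
    linarith
  · calc φ x = G x * Real.exp (γ * weightedNormSq α x) := by
          rw [hG, mul_assoc, ← Real.exp_add, neg_mul, neg_add_cancel, Real.exp_zero, mul_one]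
      _ ≤ φ x₀ * Real.exp (γ * ∑ u, α u) := by
          have h₀ : G x₀ ≤ φ x₀ := mul_le_of_le_one_right (hφ0 x₀) <| Real.exp_le_one_iff.2 <|
            mul_nonpos_of_nonpos_of_nonneg (neg_nonpos.2 hγ) (weightedNormSq_nonneg hα' x₀)
          have := weightedNormSq_le_sum hα' hx
          gcongr
          · exact hφ0 x₀
          · exact hGx.trans h₀

end Cube

theorem sub_weightedNormSq_div_mem_Icc {υ : Type*} [Fintype υ] {α x : υ → ℝ} {N : ℝ}
    (hα : ∀ u, 0 ≤ α u) (hαN : ∑ u, α u ≤ N) (hx : ∀ u, |x u| ≤ 1) :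
    33 - weightedNormSq α x / N ∈ Set.Icc 32 33 := by
  have hw := (weightedNormSq_le_sum hα hx).trans hαN
  have hw0 := weightedNormSq_nonneg hα x
  have h1 := div_le_one_of_le₀ hw (hw0.trans hw)
  have h0 := div_nonneg hw0 (hw0.trans hw)
  constructor <;> linarith

theorem isSymm_linearCombination {υ D : Type*} [Fintype υ] {A : υ → Matrix D D ℝ}
    (hA : ∀ u, (A u).IsSymm) (y : υ → ℝ) : (Fintype.linearCombination ℝ A y).IsSymm := by
  simp only [Fintype.linearCombination_apply, IsSymm, transpose_sum, transpose_smul, (hA _).eq]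

section Rounding

open scoped MatrixOrder

variable {ι D υ : Type*} [Fintype ι] [Fintype D] [DecidableEq D] [Fintype υ]
  {B : ι → Matrix D D ℝ} (hB : ∀ i, (B i).IsSymm)
  (hBB : Pairwise fun i j => hsForm D (B i) (B j) = 0) {Λ κ : ℝ}
  (hΛ : ∑ i, frobNormSq (B i) • (B i * B i) ≤ Λ • 1) {k : ℕ} (hκ : (2 * (k + 2)) ^ 3 * Λ ≤ κ ^ 4)

section Step

variable {A : Matrix D D ℝ} (hA : A.IsSymm)

include hB hA hBB hΛ hκ

theorem sum_hessianForm_smul_le (q : ℝ) :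
    ∑ i, hessianForm A (q • B) (k + 1) ((q • B) i) ((q • B) i) ≤
      interaction A (q • B) (2 * (k + 1) + 1) + q ^ 4 *
        ((momentMatrix A (q • B) (2 * (k + 2))).trace + Fintype.card D * κ ^ (2 * (k + 2))) := by
  have hqB := isSymm_smul_apply hB q
  have hfrob (X : Matrix D D ℝ) : frobNormSq (q • X) = q ^ 2 * frobNormSq X := by
    rw [← hsForm_self, ← hsForm_self, map_smul, map_smul, LinearMap.smul_apply, smul_smul,
      smul_eq_mul, sq]
  have hq4 : 0 ≤ q ^ 4 := by positivity
  have hqΛ : ∑ i, frobNormSq ((q • B) i) • ((q • B) i * (q • B) i) ≤ (q ^ 4 * Λ) • 1 := by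
    have h := smul_le_smul_of_nonneg_left hΛ hq4
    simp only [Finset.smul_sum, smul_smul] at h
    refine (sum_congr rfl fun i _ => ?_).trans_le h
    rw [Pi.smul_apply, hfrob, smul_mul_smul_comm, smul_smul]
    congr 1
    ring
  have hqBB : Pairwise fun i j => hsForm D ((q • B) i) ((q • B) j) = 0 := fun i j hij => by
    simp [hBB hij]
  have h := sum_hessianForm_le hA hqB hqBB hqΛ k
  have hκ' : (2 * (k + 2)) ^ 3 * (Λ * (momentMatrix A (q • B) (2 * k)).trace) ≤
      (momentMatrix A (q • B) (2 * (k + 2))).trace + Fintype.card D * κ ^ (2 * (k + 2)) := by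
    rw [← mul_assoc]
    exact (mul_le_mul_of_nonneg_right hκ (trace_momentMatrix_nonneg hA hqB k)).trans
      (pow_mul_trace_momentMatrix_le hA hqB (by ring))
  linarith [mul_le_mul_of_nonneg_left hκ' hq4]

theorem hessianForm_sub_interaction_le {S : Matrix D D ℝ} {q r : ℝ} (hq : q ∈ Set.Icc 32 33)
    (hr : 0 ≤ r)
    (hSQ : hessianForm A (q • B) (k + 1) S S ≤
      64 * r * ∑ i, hessianForm A (q • B) (k + 1) (B i) (B i))
    (hpos : 0 ≤ (momentMatrix A (q • B) (2 * (k + 2))).trace +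
      Fintype.card D * κ ^ (2 * (k + 2))) :
    hessianForm A (q • B) (k + 1) S S +
        2 * (-r / q) * interaction A (q • B) (2 * (k + 1) + 1) ≤
      2 * 33 ^ 3 * r * ((momentMatrix A (q • B) (2 * (k + 2))).trace +
        Fintype.card D * κ ^ (2 * (k + 2))) := by
  set Ψ := (momentMatrix A (q • B) (2 * (k + 2))).trace + Fintype.card D * κ ^ (2 * (k + 2))
  have hq0 : 0 < q := by linarith [hq.1]
  have hqB := isSymm_smul_apply hB q
  set H := ∑ i, hessianForm A (q • B) (k + 1) (B i) (B i)
  have hH0 : 0 ≤ H := sum_nonneg fun i _ => (isPosSemidef_hessianForm hA hqB (k + 1)).nonneg (B i)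
  have hH : q ^ 2 * H ≤ interaction A (q • B) (2 * (k + 1) + 1) + q ^ 4 * Ψ := by
    refine le_of_eq_of_le ?_ (sum_hessianForm_smul_le hB hBB hΛ hκ hA q)
    simp only [H, Finset.mul_sum, Pi.smul_apply, map_smul, LinearMap.smul_apply, smul_eq_mul, sq,
      mul_assoc]
  calc _ ≤ 2 * r / q * (q ^ 2 * H - interaction A (q • B) (2 * (k + 1) + 1)) := by
        have : 64 * r * H ≤ 2 * q * r * H := by gcongr; linarith [hq.1]
        have e : 2 * r / q * (q ^ 2 * H) = 2 * q * r * H := by field_simp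
        rw [mul_sub, e]
        refine (add_le_add_left (hSQ.trans this) _).trans_eq ?_
        ring
    _ ≤ 2 * r / q * (q ^ 4 * Ψ) := by gcongr; linarith
    _ = 2 * q ^ 3 * r * Ψ := by field_simp
    _ ≤ 2 * 33 ^ 3 * r * Ψ := by gcongr; exact hq.2

/-- The decrease of the coefficient `q` of the semicircular part at rate `r` pays for most of the
second-order growth caused by the perturbation `S`. -/
theorem exists_trace_momentMatrix_smul_le {S : Matrix D D ℝ} (hS : S.IsSymm) {q r : ℝ}
    (hq : q ∈ Set.Icc 32 33) (hr : 0 < r)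
    (hS0 : (S * momentMatrix A (q • B) (2 * (k + 1) + 1)).trace = 0)
    (hSQ : hessianForm A (q • B) (k + 1) S S ≤
      64 * r * ∑ i, hessianForm A (q • B) (k + 1) (B i) (B i))
    (hpos : 0 < (momentMatrix A (q • B) (2 * (k + 2))).trace +
      Fintype.card D * κ ^ (2 * (k + 2))) :
    ∃ ε > 0, ∀ s ∈ Set.Ioo (0 : ℝ) ε,
      (momentMatrix (A + s • S) ((q - r * s ^ 2) • B) (2 * (k + 2))).trace ≤
        (momentMatrix A (q • B) (2 * (k + 2))).trace + (2 * 33 ^ 3 + 1) * (k + 2) * r *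
          ((momentMatrix A (q • B) (2 * (k + 2))).trace +
            Fintype.card D * κ ^ (2 * (k + 2))) * s ^ 2 := by
  set Ψ := (momentMatrix A (q • B) (2 * (k + 2))).trace + Fintype.card D * κ ^ (2 * (k + 2))
  have hq0 : 0 < q := by linarith [hq.1]
  have hrate := hessianForm_sub_interaction_le hB hBB hΛ hκ hA hq hr.le hSQ hpos.le
  obtain ⟨ε, hε, h⟩ := exists_trace_momentMatrix_le hA hS (isSymm_smul_apply hB q)
    (c := -r / q) (k := k + 1) (C := (2 * 33 ^ 3 + 1) * (k + 2) * r * Ψ) hS0 (by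
      have hrΨ : 0 < r * Ψ := mul_pos hr hpos
      push_cast
      nlinarith)
  refine ⟨ε, hε, fun s hs => ?_⟩
  have hpath : (1 + s ^ 2 * (-r / q)) • q • B = (q - r * s ^ 2) • B := by
    rw [smul_smul]
    congr 1
    field_simp
    ring
  exact hpath ▸ h s hs

end Step

variable {A : υ → Matrix D D ℝ} (hA : ∀ u, (A u).IsSymm) {α : υ → ℝ} {N : ℝ}

/-- Every positive semidefinite form and every pair of linear constraints admit a direction,
supported on a prescribed set of more than half the total weight `N`, along which the form is
controlled by its values at the `B i`. -/
def HasDirections (A : υ → Matrix D D ℝ) (α : υ → ℝ) (N : ℝ) (B : ι → Matrix D D ℝ) : Prop :=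
  ∀ s : Finset υ, N / 2 < ∑ u ∈ s, α u → ∀ Q : LinearMap.BilinForm ℝ (Matrix D D ℝ),
    Q.IsPosSemidef → ∀ l₁ l₂ : (υ → ℝ) →ₗ[ℝ] ℝ, ∃ y ≠ 0, (∀ u ∉ s, y u = 0) ∧ l₁ y = 0 ∧ l₂ y = 0 ∧
      Q (Fintype.linearCombination ℝ A y) (Fintype.linearCombination ℝ A y) ≤
        64 * (weightedNormSq α y / N) * ∑ i, Q (B i) (B i)

/-- A smooth proxy for the operator norm of `∑ u, (x u - x₀ u) • A u`: the even moment of order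
`2 * (k + 2)` after adding a semicircular part, whose coefficient decreases from `33` to `32` as the
rounding progresses. The constant term keeps lower moments under control. -/
noncomputable def potential (A : υ → Matrix D D ℝ) (α : υ → ℝ) (N : ℝ) (B : ι → Matrix D D ℝ)
    (κ : ℝ) (k : ℕ) (x₀ x : υ → ℝ) : ℝ :=
  (momentMatrix (Fintype.linearCombination ℝ A (x - x₀)) ((33 - weightedNormSq α x / N) • B)
    (2 * (k + 2))).trace + Fintype.card D * κ ^ (2 * (k + 2))

theorem continuous_potential (A : υ → Matrix D D ℝ) (α : υ → ℝ) (N : ℝ) (B : ι → Matrix D D ℝ)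
    (κ : ℝ) (k : ℕ) (x₀ : υ → ℝ) : Continuous (potential A α N B κ k x₀) := by
  have hw := continuous_weightedNormSq (α := α)
  refine ((continuous_momentMatrix ?_ ?_ _).matrix_trace).add_const _
  · simp only [Fintype.linearCombination_apply]
    fun_prop
  · fun_prop

include hB

theorem potential_self_le (A : υ → Matrix D D ℝ) (hα : ∀ u, 0 ≤ α u) (hαN : ∑ u, α u ≤ N)
    {σ : ℝ} (hσ0 : 0 ≤ σ) (hσ : ∑ i, B i * B i ≤ σ ^ 2 • 1) (hκ0 : 0 ≤ κ) {x₀ : υ → ℝ}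
    (hx₀ : ∀ u, |x₀ u| ≤ 1) :
    potential A α N B κ k x₀ x₀ ≤ Fintype.card D * (66 * σ + κ) ^ (2 * (k + 2)) := by
  obtain ⟨hq, hq'⟩ := sub_weightedNormSq_div_mem_Icc hα hαN hx₀
  set q := 33 - weightedNormSq α x₀ / N with hqdef
  have hqσ : ∑ i, (q • B) i * (q • B) i ≤ (33 * σ) ^ 2 • 1 := by
    have h := smul_le_smul_of_nonneg_left hσ (sq_nonneg q)
    simp only [Finset.smul_sum, smul_smul] at h
    refine (sum_congr rfl fun i _ => ?_).trans_le (h.trans ?_)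
    · rw [Pi.smul_apply, smul_mul_smul_comm, sq]
    · rw [← mul_pow]
      refine smul_le_smul_of_nonneg_right ?_ PosSemidef.one.nonneg
      gcongr
  have hle := trace_momentMatrix_zero_le (isSymm_smul_apply hB q) (by positivity) hqσ (k + 2)
  rw [potential, sub_self, map_zero, ← hqdef]
  calc _ ≤ Fintype.card D * ((66 * σ) ^ (2 * (k + 2)) + κ ^ (2 * (k + 2))) := by
        rw [mul_add (Fintype.card D : ℝ)]
        gcongr
        refine hle.trans_eq ?_
        rw [pow_mul (66 * σ)]
        ring
    _ ≤ _ := by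
        gcongr
        exact pow_add_pow_le (by positivity) hκ0 (by lia)

include hA

theorem potential_pos [Nonempty D] (hκ0 : 0 < κ) (x₀ x : υ → ℝ) :
    0 < potential A α N B κ k x₀ x :=
  add_pos_of_nonneg_of_pos
    (trace_momentMatrix_nonneg (isSymm_linearCombination hA _) (isSymm_smul_apply hB _) _)
    (mul_pos (Nat.cast_pos.2 Fintype.card_pos) (pow_pos hκ0 _))

include hBB hΛ hκ in
theorem exists_potential_add_smul_le [Nonempty D] (hκ0 : 0 < κ) (hα : ∀ u, 0 < α u) (hN : 0 < N)
    (hαN : ∑ u, α u ≤ N) (hdir : HasDirections A α N B) (x₀ : υ → ℝ) {x : υ → ℝ}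
    (hx : ∀ u, |x u| ≤ 1) (hfrac : N / 2 < ∑ u with |x u| < 1, α u) :
    ∃ y ≠ 0, (∀ u, ¬|x u| < 1 → y u = 0) ∧ ∑ u, α u * x u * y u = 0 ∧
      ∃ ε > (0 : ℝ), ∀ s ∈ Set.Ioo 0 ε, potential A α N B κ k x₀ (x + s • y) ≤
        potential A α N B κ k x₀ x + (2 * 33 ^ 3 + 1) * (k + 2) / N * weightedNormSq α y *
          potential A α N B κ k x₀ x * s ^ 2 := by
  set L := Fintype.linearCombination ℝ A with hL
  set q := 33 - weightedNormSq α x / N with hq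
  have hq₃₂ : q ∈ Set.Icc 32 33 :=
    sub_weightedNormSq_div_mem_Icc (fun u => (hα u).le) hαN hx
  have hX := isSymm_linearCombination hA (x - x₀)
  obtain ⟨y, hy, hysupp, hl₁, hl₂, hQ⟩ := hdir _ hfrac (hessianForm (L (x - x₀)) (q • B) (k + 1))
    (isPosSemidef_hessianForm hX (isSymm_smul_apply hB q) _)
    (∑ u, (α u * x u) • LinearMap.proj u)
    (traceLinearMap D ℝ ℝ ∘ₗ
      LinearMap.mulRight ℝ (momentMatrix (L (x - x₀)) (q • B) (2 * (k + 1) + 1)) ∘ₗ L)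
  have horth : ∑ u, α u * x u * y u = 0 := by simpa using hl₁
  refine ⟨y, hy, fun u hu => hysupp u (by simpa using hu), horth, ?_⟩
  obtain ⟨ε, hε, h⟩ := exists_trace_momentMatrix_smul_le hB hBB hΛ hκ hX
    (isSymm_linearCombination hA y) hq₃₂
    (div_pos (weightedNormSq_pos hα hy) hN) hl₂ hQ (potential_pos hB hA hκ0 x₀ x)
  refine ⟨ε, hε, fun s hs => ?_⟩
  have hXs : L (x - x₀) + s • L y = L (x + s • y - x₀) := by
    rw [← map_smul, ← map_add, add_sub_right_comm]
  have hqs : q - weightedNormSq α y / N * s ^ 2 = 33 - weightedNormSq α (x + s • y) / N := by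
    rw [weightedNormSq_add_smul horth, hq]
    ring
  have hs' := add_le_add_left (h s hs) (Fintype.card D * κ ^ (2 * (k + 2)))
  rw [hXs, hqs] at hs'
  refine hs'.trans_eq ?_
  simp only [potential, ← hL, ← hq]
  ring

/-- The factor by which the rounding may exceed its initial bound `66 * σ + κ`. -/
noncomputable def growthFactor : ℝ := Real.exp (1 + (2 * 33 ^ 3 + 1) / 2)

include hBB hΛ hκ in
theorem exists_rounding [Nonempty D] (hκ0 : 0 < κ) (hα : ∀ u, 0 < α u) (hN : 0 < N)
    (hαN : ∑ u, α u ≤ N) (hdir : HasDirections A α N B) {σ : ℝ} (hσ0 : 0 ≤ σ)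
    (hσ : ∑ i, B i * B i ≤ σ ^ 2 • 1) (hD : Fintype.card D ≤ Real.exp (2 * (k + 2)))
    {x₀ : υ → ℝ} (hx₀ : ∀ u, |x₀ u| ≤ 1) :
    ∃ x : υ → ℝ, (∀ u, |x u| ≤ 1) ∧ ∑ u with |x u| < 1, α u ≤ N / 2 ∧
      opNorm (Fintype.linearCombination ℝ A (x - x₀)) ≤
        (66 * σ + κ) * growthFactor := by
  rw [growthFactor]
  obtain ⟨x, hx, hfrac, hle⟩ := exists_sum_fractional_le (R := N / 2)
    (γ := (2 * 33 ^ 3 + 1) * (k + 2) / N) (continuous_potential A α N B κ k x₀)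
    (fun x => (potential_pos hB hA hκ0 x₀ x).le) hα (by positivity)
    (fun x hx hlt => exists_potential_add_smul_le hB hBB hΛ hκ hA hκ0 hα hN hαN hdir x₀ hx hlt) hx₀
  refine ⟨x, hx, hfrac, ?_⟩
  have hc : 0 < (66 * σ + κ) * Real.exp (1 + (2 * 33 ^ 3 + 1) / 2) := by positivity
  refine (opNorm_le_iff hc.le).2 (dotProduct_mulVec_self_le (isSymm_linearCombination hA _)
    (isSymm_smul_apply hB (33 - weightedNormSq α x / N)) hc (k + 1) ?_)
  have hexp : Real.exp ((2 * 33 ^ 3 + 1) * (k + 2) / N * ∑ u, α u) ≤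
      Real.exp ((2 * 33 ^ 3 + 1) * (k + 2)) := by
    rw [Real.exp_le_exp, div_mul_eq_mul_div, div_le_iff₀ hN]
    gcongr
  calc (momentMatrix _ _ (2 * (k + 1 + 1))).trace ≤ potential A α N B κ k x₀ x :=
        le_add_of_nonneg_right (by positivity)
    _ ≤ Fintype.card D * (66 * σ + κ) ^ (2 * (k + 2)) * Real.exp ((2 * 33 ^ 3 + 1) * (k + 2)) :=
        hle.trans <| mul_le_mul
          (potential_self_le hB A (fun u => (hα u).le) hαN hσ0 hσ hκ0.le hx₀) hexp
          (Real.exp_pos _).le (by positivity)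
    _ ≤ Real.exp (2 * (k + 2)) * (66 * σ + κ) ^ (2 * (k + 2)) *
          Real.exp ((2 * 33 ^ 3 + 1) * (k + 2)) := by gcongr
    _ = ((66 * σ + κ) * Real.exp (1 + (2 * 33 ^ 3 + 1) / 2)) ^ (2 * (k + 1 + 1)) := by
        rw [mul_pow, ← Real.exp_nat_mul, mul_right_comm, ← Real.exp_add, mul_comm]
        congr 2
        push_cast
        ring

end Rounding

theorem finrank_le_finrank_inf_ker_add {E F : Type*} [AddCommGroup E] [Module ℝ E]
    [FiniteDimensional ℝ E] [AddCommGroup F] [Module ℝ F] [FiniteDimensional ℝ F]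
    (W : Submodule ℝ E) (ψ : E →ₗ[ℝ] F) :
    Module.finrank ℝ W ≤
      Module.finrank ℝ (W ⊓ LinearMap.ker ψ : Submodule ℝ E) + Module.finrank ℝ F := by
  have h := LinearMap.finrank_range_add_finrank_ker (ψ.domRestrict W)
  rw [LinearMap.ker_domRestrict, ← Submodule.finrank_map_subtype_eq,
    Submodule.map_comap_subtype] at h
  have := (LinearMap.range (ψ.domRestrict W)).finrank_le
  lia

section OrthonormalFamilies

variable {E : Type*} [NormedAddCommGroup E] [InnerProductSpace ℝ E] {β : LinearMap.BilinForm ℝ E}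

theorem sum_inner_smul_eq_of_mem_span {κ : Type*} [Fintype κ] {g : κ → E} (hg : Orthonormal ℝ g)
    {x : E} (hx : x ∈ Submodule.span ℝ (Set.range g)) : ∑ j, inner ℝ x (g j) • g j = x := by
  obtain ⟨c, rfl⟩ := (Submodule.mem_span_range_iff_exists_fun ℝ).1 hx
  exact sum_congr rfl fun j _ => by rw [hg.inner_left_fintype]; rfl

theorem sum_apply_self_le_of_orthonormal {ι κ : Type*} [Fintype ι] [Fintype κ]
    (hβ : β.IsPosSemidef) {h : ι → E} {g : κ → E} (hh : Orthonormal ℝ h) (hg : Orthonormal ℝ g)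
    (hmem : ∀ i, h i ∈ Submodule.span ℝ (Set.range g)) :
    ∑ i, β (h i) (h i) ≤ ∑ j, β (g j) (g j) := by
  classical
  let P : E →ₗ[ℝ] E := ∑ i, (innerₗ E (h i)).smulRight (h i)
  have hP (x : E) : P x = ∑ i, inner ℝ (h i) x • h i := by simp [P, LinearMap.sum_apply]
  have hPh (i : ι) : P (h i) = h i := by simp [hP, orthonormal_iff_ite.1 hh]
  have hsum (R : E →ₗ[ℝ] E) : ∑ j, β (P (g j)) (R (g j)) = ∑ i, β (h i) (R (h i)) := by
    simp_rw [hP, map_sum, LinearMap.sum_apply, map_smul, LinearMap.smul_apply]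
    rw [sum_comm]
    refine sum_congr rfl fun i _ => ?_
    conv_rhs => arg 2; rw [← sum_inner_smul_eq_of_mem_span hg (hmem i)]
    simp
  have horth : ∑ j, β (P (g j)) (g j - P (g j)) = 0 := by simpa [hPh] using hsum (.id - P)
  calc ∑ i, β (h i) (h i) = ∑ j, β (P (g j)) (P (g j)) := by simpa [hPh] using (hsum P).symm
    _ ≤ ∑ j, (β (P (g j)) (P (g j)) + β (g j - P (g j)) (g j - P (g j))) :=
        sum_le_sum fun j _ => le_add_of_nonneg_right (hβ.nonneg _)
    _ = ∑ j, (β (g j) (g j) - 2 * β (P (g j)) (g j - P (g j))) := by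
        refine sum_congr rfl fun j _ => ?_
        have hsymm : β (g j) (P (g j)) = β (P (g j)) (g j) := hβ.isSymm.eq _ _
        simp only [map_sub, LinearMap.sub_apply, hsymm]
        ring
    _ = ∑ j, β (g j) (g j) := by rw [sum_sub_distrib, ← Finset.mul_sum, horth, mul_zero, sub_zero]

variable [FiniteDimensional ℝ E]

theorem exists_norm_eq_one_finrank_mul_apply_self_le {κ : Type*} [Fintype κ]
    (hβ : β.IsPosSemidef) {g : κ → E} (hg : Orthonormal ℝ g) {W : Submodule ℝ E}
    (hW : W ≤ Submodule.span ℝ (Set.range g)) (hpos : 0 < Module.finrank ℝ W) :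
    ∃ y ∈ W, ‖y‖ = 1 ∧ Module.finrank ℝ W * β y y ≤ ∑ j, β (g j) (g j) := by
  let b := stdOrthonormalBasis ℝ W
  have hb : Orthonormal ℝ fun i => (b i : E) := b.orthonormal.comp_linearIsometry W.subtypeₗᵢ
  have hle := sum_apply_self_le_of_orthonormal hβ hb hg fun i => hW (b i).2
  have hne : (univ : Finset (Fin (Module.finrank ℝ W))).Nonempty := ⟨⟨0, hpos⟩, mem_univ _⟩
  obtain ⟨i, -, hi⟩ := exists_le_of_sum_le (s := univ) hne
    (f := fun i => Module.finrank ℝ W * β (b i) (b i)) (g := fun _ => ∑ j, β (g j) (g j)) (by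
      rw [← Finset.mul_sum, sum_const, card_univ, Fintype.card_fin, nsmul_eq_mul]
      gcongr)
  exact ⟨b i, (b i).2, hb.1 i, hi⟩

theorem exists_orthonormalBasis_pairwise_apply_eq_zero (hβ : β.IsSymm) :
    ∃ b : OrthonormalBasis (Fin (Module.finrank ℝ E)) ℝ E,
      Pairwise fun i j => β (b i) (b j) = 0 := by
  have hinner : LinearMap.BilinForm.Nondegenerate (innerₗ E) :=
    ⟨fun x hx => inner_self_eq_zero.1 (hx x), fun x hx => inner_self_eq_zero.1 (hx x)⟩
  let T := β.symmCompOfNondegenerate _ hinner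
  have hT (x y : E) : inner ℝ (T x) y = β x y :=
    β.symmCompOfNondegenerate_left_apply hinner y x
  have hsymm : T.IsSymmetric := fun x y => by
    rw [hT, real_inner_comm, hT]
    exact hβ.eq x y
  refine ⟨hsymm.eigenvectorBasis rfl, fun i j hij => ?_⟩
  beta_reduce
  rw [← hT, hsymm.apply_eigenvectorBasis, inner_smul_left, OrthonormalBasis.inner_eq_zero _ hij,
    mul_zero]

/-- Diagonalize `β` on the kernel of `ψ` and discard the few directions where it is large. -/
theorem exists_orthonormal_apply_self_le {κ F : Type*} [Fintype κ] [AddCommGroup F] [Module ℝ F]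
    [FiniteDimensional ℝ F] (hβ : β.IsPosSemidef) (g : OrthonormalBasis κ ℝ E) {c K : ℝ}
    (hc : 0 < c) (hK : 0 < K) (hg : ∀ j, β (g j) (g j) ≤ c) (ψ : E →ₗ[ℝ] F) :
    ∃ (r : ℕ) (h : Fin r → E), Orthonormal ℝ h ∧ (Pairwise fun i j => β (h i) (h j) = 0) ∧
      (∀ i, ψ (h i) = 0) ∧ (∀ i, β (h i) (h i) ≤ K * c) ∧
      (Fintype.card κ : ℝ) ≤ r + Module.finrank ℝ F + Fintype.card κ / K := by
  obtain ⟨b, hb⟩ := exists_orthonormalBasis_pairwise_apply_eq_zero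
    (β := β.restrict (LinearMap.ker ψ)) (hβ.isSymm.restrict _)
  have hbo : Orthonormal ℝ fun i => (b i : E) :=
    b.orthonormal.comp_linearIsometry (LinearMap.ker ψ).subtypeₗᵢ
  let J := univ.filter fun i => β (b i) (b i) ≤ K * c
  have hlarge : (#(univ.filter fun i => ¬β (b i) (b i) ≤ K * c) : ℝ) ≤ Fintype.card κ / K := by
    rw [le_div_iff₀ hK, ← mul_le_mul_iff_left₀ hc, mul_assoc]
    calc _ = ∑ i with ¬β (b i) (b i) ≤ K * c, K * c := by rw [sum_const, nsmul_eq_mul]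
      _ ≤ ∑ i with ¬β (b i) (b i) ≤ K * c, β (b i) (b i) :=
          sum_le_sum fun i hi => (not_le.1 (mem_filter.1 hi).2).le
      _ ≤ ∑ i, β (b i) (b i) :=
          sum_le_sum_of_subset_of_nonneg (filter_subset _ _) fun i _ _ => hβ.nonneg _
      _ ≤ ∑ j, β (g j) (g j) := sum_apply_self_le_of_orthonormal hβ hbo g.orthonormal fun i => by
          rw [← g.coe_toBasis, g.toBasis.span_eq]
          trivial
      _ ≤ ∑ _j : κ, c := sum_le_sum fun j _ => hg j
      _ = Fintype.card κ * c := by rw [sum_const, card_univ, nsmul_eq_mul]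
  have hcard : Fintype.card κ ≤
      #J + #(univ.filter fun i => ¬β (b i) (b i) ≤ K * c) + Module.finrank ℝ F := by
    rw [card_filter_add_card_filter_not, card_univ, Fintype.card_fin,
      ← Module.finrank_eq_card_basis g.toBasis, add_comm, ← ψ.finrank_range_add_finrank_ker]
    gcongr
    exact (LinearMap.range ψ).finrank_le
  let e := J.orderEmbOfFin rfl
  refine ⟨#J, fun i => b (e i), hbo.comp e e.injective, fun i j hij => hb (e.injective.ne hij),
    fun i => (b (e i)).2, fun i => (mem_filter.1 (J.orderEmbOfFin_mem rfl i)).2, ?_⟩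
  have : (Fintype.card κ : ℝ) ≤ _ := Nat.cast_le.2 hcard
  push_cast at this
  linarith

end OrthonormalFamilies

section LevelCounting

variable {υ : Type*}

theorem sum_mul_card_filter_eq {κ : Type*} [Fintype κ] [DecidableEq κ] (s : Finset υ) (ℓ : υ → κ)
    (w : κ → ℝ) : ∑ k, w k * #{u ∈ s | ℓ u = k} = ∑ u ∈ s, w (ℓ u) := by
  simp [← sum_fiberwise' s ℓ w, mul_comm]

theorem exists_pos_mul_le_mul_sum {κ : Type*} [Fintype κ] {a q : κ → ℝ} (ha : ∀ k, 0 ≤ a k)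
    (hq : ∀ k, 0 ≤ q k) {M : ℝ} (hM : 0 < M) (h : M ≤ ∑ k, a k) :
    ∃ k, 0 < a k ∧ M * q k ≤ a k * ∑ k, q k := by
  by_contra! hlt
  obtain ⟨k, -, hk⟩ : ∃ k ∈ univ, 0 < a k :=
    exists_lt_of_sum_lt (by simpa only [sum_const_zero] using hM.trans_le h)
  have hsum : ∑ k, a k * ∑ k, q k < ∑ k, M * q k := by
    refine sum_lt_sum (fun k _ => ?_) ⟨k, mem_univ k, hlt k hk⟩
    obtain h0 | h0 := (ha k).eq_or_lt
    · rw [← h0, zero_mul]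
      exact mul_nonneg hM.le (hq k)
    · exact (hlt k h0).le
  rw [← Finset.sum_mul, ← Finset.mul_sum] at hsum
  exact hsum.not_ge (mul_le_mul_of_nonneg_right h (sum_nonneg fun k _ => hq k))

theorem sum_range_sixteen_pow_le (n : ℕ) : ∑ k ∈ range n, (16 : ℝ) ^ k ≤ 16 ^ n / 15 := by
  rw [geom_sum_eq (by norm_num)]
  linarith

variable [Fintype υ] {T : ℕ} (ℓ : υ → Fin T)

theorem sum_sixteen_pow_mul_card_lt_le :
    ∑ k : Fin T, (16 : ℝ) ^ (k : ℕ) * #{u | k < ℓ u} ≤ (∑ u, (16 : ℝ) ^ (ℓ u : ℕ)) / 15 := by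
  have hlower (m : Fin T) : ∑ k with k < m, (16 : ℝ) ^ (k : ℕ) = ∑ k ∈ range m, (16 : ℝ) ^ k := by
    rw [← Nat.Iio_eq_range, ← Fin.map_valEmbedding_Iio, sum_map]
    exact sum_congr (by ext; simp) fun _ _ => rfl
  calc _ = ∑ u, ∑ k with k < ℓ u, (16 : ℝ) ^ (k : ℕ) := by
        simp_rw [sum_filter]
        rw [sum_comm]
        simp_rw [← sum_filter, sum_const, nsmul_eq_mul, mul_comm]
    _ ≤ ∑ u, (16 : ℝ) ^ (ℓ u : ℕ) / 15 :=
        sum_le_sum fun u _ => (hlower _).trans_le (sum_range_sixteen_pow_le _)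
    _ = _ := (sum_div _ _ _).symm

theorem div_le_sum_sixteen_pow_mul {N : ℝ} (hαN : ∑ u, (16 : ℝ) ^ (ℓ u : ℕ) ≤ N)
    (hT : (16 : ℝ) ^ T ≤ N) {s : Finset υ} (hs : N / 2 < ∑ u ∈ s, (16 : ℝ) ^ (ℓ u : ℕ))
    {d : Fin T → ℕ} (hd : ∀ k, (#{u ∈ s | ℓ u = k} : ℝ) ≤
      d k + 2 + #{u | k < ℓ u} + #{u | ℓ u = k} / 24) :
    N / 64 ≤ ∑ k : Fin T, (16 : ℝ) ^ (k : ℕ) * d k := by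
  have hN : 0 < N := (by positivity : (0 : ℝ) < 16 ^ T).trans_le hT
  have hgeom : ∑ k : Fin T, (16 : ℝ) ^ (k : ℕ) ≤ N / 15 := by
    rw [Fin.sum_univ_eq_sum_range (fun k => (16 : ℝ) ^ k) T]
    exact (sum_range_sixteen_pow_le T).trans (by gcongr)
  have hhigher := sum_sixteen_pow_mul_card_lt_le ℓ
  have hlevel (s : Finset υ) := sum_mul_card_filter_eq s ℓ fun k => (16 : ℝ) ^ (k : ℕ)
  have hsum : ∑ u ∈ s, (16 : ℝ) ^ (ℓ u : ℕ) ≤ ∑ k : Fin T, (16 : ℝ) ^ (k : ℕ) * d k +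
      2 * ∑ k : Fin T, (16 : ℝ) ^ (k : ℕ) + ∑ k : Fin T, (16 : ℝ) ^ (k : ℕ) * #{u | k < ℓ u} +
      (∑ u, (16 : ℝ) ^ (ℓ u : ℕ)) / 24 := by
    rw [← hlevel s, ← hlevel univ, Finset.mul_sum, sum_div, ← sum_add_distrib, ← sum_add_distrib,
      ← sum_add_distrib]
    refine sum_le_sum fun k _ => (mul_le_mul_of_nonneg_left (hd k) (by positivity)).trans_eq ?_
    ring
  linarith

end LevelCounting

section ExtendZero

variable {υ : Type*} {p : υ → Prop}

/-- Extension by zero of a vector indexed by the coordinates satisfying `p`. -/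
noncomputable def extendZero (p : υ → Prop) : EuclideanSpace ℝ (Subtype p) →ₗ[ℝ] υ → ℝ :=
  Function.ExtendByZero.linearMap ℝ Subtype.val ∘ₗ (WithLp.linearEquiv 2 ℝ _).toLinearMap

theorem extendZero_apply (y : EuclideanSpace ℝ (Subtype p)) (u : Subtype p) :
    extendZero p y u = y u :=
  Subtype.val_injective.extend_apply _ _ _

theorem extendZero_apply_of_not (y : EuclideanSpace ℝ (Subtype p)) {u : υ} (hu : ¬p u) :
    extendZero p y u = 0 :=
  Function.extend_apply' _ _ _ fun ⟨v, hv⟩ => hu (hv ▸ v.2)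

theorem sum_extendZero [Fintype υ] [DecidablePred p] {M : Type*} [AddCommMonoid M]
    {φ : υ → ℝ → M} (hφ : ∀ u, φ u 0 = 0) (y : EuclideanSpace ℝ (Subtype p)) :
    ∑ u, φ u (extendZero p y u) = ∑ u : Subtype p, φ u (y u) := by
  rw [← Fintype.sum_subtype_add_sum_subtype p]
  simp only [extendZero_apply, fun u : { u // ¬p u } => extendZero_apply_of_not y u.2, hφ,
    sum_const_zero, add_zero]

theorem weightedNormSq_extendZero [Fintype υ] [DecidablePred p] {α : υ → ℝ} {c : ℝ}
    (hα : ∀ u, p u → α u = c) (y : EuclideanSpace ℝ (Subtype p)) :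
    weightedNormSq α (extendZero p y) = c * ‖y‖ ^ 2 := by
  rw [weightedNormSq, sum_extendZero (φ := fun u t => α u * t ^ 2) (by simp),
    EuclideanSpace.real_norm_sq_eq, Finset.mul_sum]
  exact sum_congr rfl fun u _ => by rw [hα u u.2]

end ExtendZero

section Pullback

variable {V : Type*} [AddCommGroup V] [Module ℝ V] {β : LinearMap.BilinForm ℝ V}

theorem isPosSemidef_comp {W : Type*} [AddCommGroup W] [Module ℝ W] (hβ : β.IsPosSemidef)
    (f : W →ₗ[ℝ] V) : (LinearMap.BilinForm.comp β f f).IsPosSemidef where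
  eq _ _ := hβ.isSymm.eq _ _
  nonneg _ := hβ.isNonneg.nonneg _

variable {υ : Type*} [Fintype υ] {p : υ → Prop} (A : υ → V)

/-- The pullback of a bilinear form along `y ↦ ∑ u, y u • A u`, restricted to the vectors supported
on the coordinates satisfying `p`. -/
noncomputable def pullback (β : LinearMap.BilinForm ℝ V) (A : υ → V) (p : υ → Prop) :
    LinearMap.BilinForm ℝ (EuclideanSpace ℝ (Subtype p)) :=
  β.comp (Fintype.linearCombination ℝ A ∘ₗ extendZero p)
    (Fintype.linearCombination ℝ A ∘ₗ extendZero p)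

theorem pullback_apply (x y : EuclideanSpace ℝ (Subtype p)) :
    pullback β A p x y = β (Fintype.linearCombination ℝ A (extendZero p x))
      (Fintype.linearCombination ℝ A (extendZero p y)) := rfl

theorem isPosSemidef_pullback (hβ : β.IsPosSemidef) : (pullback β A p).IsPosSemidef :=
  isPosSemidef_comp hβ _

variable [DecidablePred p]

theorem pullback_basisFun (u : Subtype p) :
    pullback β A p (EuclideanSpace.basisFun _ ℝ u) (EuclideanSpace.basisFun _ ℝ u) =
      β (A u) (A u) := by
  classical
  have h : Fintype.linearCombination ℝ A (extendZero p (EuclideanSpace.basisFun _ ℝ u)) = A u := by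
    rw [Fintype.linearCombination_apply,
      sum_extendZero (φ := fun u t => t • A u) fun _ => zero_smul _ _]
    simp
  rw [pullback_apply, h]

theorem sum_pullback_apply_self_le {ι : Type*} [Fintype ι] (hβ : β.IsPosSemidef)
    {h : ι → EuclideanSpace ℝ (Subtype p)} (hh : Orthonormal ℝ h) :
    ∑ i, pullback β A p (h i) (h i) ≤ ∑ u : Subtype p, β (A u) (A u) := by
  let g := EuclideanSpace.basisFun (Subtype p) ℝ
  calc ∑ i, pullback β A p (h i) (h i)
      ≤ ∑ u, pullback β A p (g u) (g u) :=
        sum_apply_self_le_of_orthonormal (isPosSemidef_pullback A hβ) hh g.orthonormal fun i => by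
          rw [← OrthonormalBasis.coe_toBasis, g.toBasis.span_eq]
          exact Submodule.mem_top
    _ = _ := sum_congr rfl fun u _ => pullback_basisFun A u

end Pullback

section Loewner

open scoped MatrixOrder

variable {D : Type*} [Fintype D] {M M' : Matrix D D ℝ}

theorem dotProduct_mul_self_mulVec (hM : M.IsSymm) (v : D → ℝ) :
    v ⬝ᵥ (M * M) *ᵥ v = M *ᵥ v ⬝ᵥ M *ᵥ v := by
  rw [← mulVec_mulVec, dotProduct_mulVec, ← mulVec_transpose, hM.eq]

theorem le_of_dotProduct_mulVec_le (hM : M.IsSymm) (hM' : M'.IsSymm)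
    (h : ∀ v, v ⬝ᵥ M *ᵥ v ≤ v ⬝ᵥ M' *ᵥ v) : M ≤ M' := by
  refine le_iff.2 (.of_dotProduct_mulVec_nonneg ?_ fun v => ?_)
  · exact (conjTranspose_eq_transpose_of_trivial _).trans (hM'.sub hM)
  · rw [star_trivial, sub_mulVec, dotProduct_sub]
    exact sub_nonneg.2 (h v)

theorem isSymm_sum_mul_self {ι : Type*} [Fintype ι] {B : ι → Matrix D D ℝ}
    (hB : ∀ i, (B i).IsSymm) : (∑ i, B i * B i).IsSymm := by
  simp only [IsSymm, transpose_sum, transpose_mul, (hB _).eq]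

theorem mul_self_nonneg_of_isSymm (hM : M.IsSymm) : 0 ≤ M * M := by
  have h := posSemidef_conjTranspose_mul_self M
  rw [conjTranspose_eq_transpose_of_trivial, hM.eq] at h
  exact nonneg_iff_posSemidef.2 h

theorem mul_self_le_one_of_opNorm_le_one [DecidableEq D] (hM : M.IsSymm) (h : opNorm M ≤ 1) :
    M * M ≤ 1 := by
  refine le_of_dotProduct_mulVec_le ?_ isSymm_one fun v => ?_
  · rw [IsSymm, transpose_mul, hM.eq]
  · rw [dotProduct_mul_self_mulVec hM, one_mulVec]
    simpa using (opNorm_le_iff zero_le_one).1 h v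

theorem sum_mul_self_le_sum_mul_self {ι κ : Type*} [Fintype ι] [Fintype κ]
    {B : ι → Matrix D D ℝ} {C : κ → Matrix D D ℝ} (hB : ∀ i, (B i).IsSymm)
    (hC : ∀ j, (C j).IsSymm) (h : ∀ Q : LinearMap.BilinForm ℝ (Matrix D D ℝ), Q.IsPosSemidef →
      ∑ i, Q (B i) (B i) ≤ ∑ j, Q (C j) (C j)) :
    ∑ i, B i * B i ≤ ∑ j, C j * C j := by
  refine le_of_dotProduct_mulVec_le (isSymm_sum_mul_self hB) (isSymm_sum_mul_self hC) fun v => ?_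
  simp only [sum_mulVec, dotProduct_sum, dotProduct_mul_self_mulVec (hB _),
    dotProduct_mul_self_mulVec (hC _)]
  exact h _ (isPosSemidef_comp isPosSemidef_dotForm ((mulVecBilin ℝ ℝ).flip v))

end Loewner

section LevelFrame

variable {υ D : Type*} [Fintype υ] [Fintype D] {T : ℕ} {A : υ → Matrix D D ℝ} {ℓ : υ → Fin T}
  {f : ℝ}

/-- For each level `k`, an orthonormal family of vectors supported on the coordinates of level `k`
which almost spans them and whose matrices `∑ u, y u • A u` have small Frobenius norm, are pairwise
Hilbert–Schmidt orthogonal, and are orthogonal to every `A u` of higher level. -/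
structure LevelFrame (A : υ → Matrix D D ℝ) (ℓ : υ → Fin T) (f : ℝ) where
  /-- The number of vectors of each level. -/
  rank : Fin T → ℕ
  /-- The vectors of each level. -/
  vec (k : Fin T) : Fin (rank k) → EuclideanSpace ℝ { u // ℓ u = k }
  orthonormal (k : Fin T) : Orthonormal ℝ (vec k)
  pairwise (k : Fin T) : Pairwise fun i j =>
    pullback (hsForm D) A (ℓ · = k) (vec k i) (vec k j) = 0
  apply_eq_zero {k : Fin T} {u : υ} (hu : k < ℓ u) (i : Fin (rank k)) :
    hsForm D (Fintype.linearCombination ℝ A (extendZero (ℓ · = k) (vec k i))) (A u) = 0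
  apply_self_le (k : Fin T) (i : Fin (rank k)) :
    pullback (hsForm D) A (ℓ · = k) (vec k i) (vec k i) ≤ 24 * (16 ^ (k : ℕ) * f ^ 2)
  card_le (k : Fin T) :
    (#{u | ℓ u = k} : ℝ) ≤ rank k + #{u | k < ℓ u} + #{u | ℓ u = k} / 24

theorem nonempty_levelFrame (hf : 0 < f) (hA : ∀ u, frobNormSq (A u) ≤ 16 ^ (ℓ u : ℕ) * f ^ 2) :
    Nonempty (LevelFrame A ℓ f) := by
  have h (k : Fin T) := exists_orthonormal_apply_self_le (K := 24) (c := 16 ^ (k : ℕ) * f ^ 2)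
    (isPosSemidef_pullback (p := (ℓ · = k)) A isPosSemidef_hsForm)
    (EuclideanSpace.basisFun { u // ℓ u = k } ℝ) (by positivity) (by norm_num)
    (fun u => by
      rw [pullback_basisFun, hsForm_self]
      exact (hA u).trans_eq (by rw [u.2]))
    (LinearMap.pi fun u : { u // k < ℓ u } =>
      (hsForm D).flip (A u) ∘ₗ Fintype.linearCombination ℝ A ∘ₗ extendZero (ℓ · = k))
  choose r vec horth hpair hker hle hcard using h
  refine ⟨⟨r, vec, horth, hpair, fun {k u} hu i => congrFun (hker k i) ⟨u, hu⟩, hle, fun k => ?_⟩⟩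
  simpa only [Module.finrank_fintype_fun_eq_card, Fintype.card_subtype] using hcard k

namespace LevelFrame

variable (F : LevelFrame A ℓ f)

/-- The matrix `∑ u, y u • A u` of a vector `y` of the frame. -/
noncomputable def matrix (i : Σ k, Fin (F.rank k)) : Matrix D D ℝ :=
  Fintype.linearCombination ℝ A (extendZero (ℓ · = i.1) (F.vec i.1 i.2))

theorem isSymm_matrix (hA : ∀ u, (A u).IsSymm) (i : Σ k, Fin (F.rank k)) : (F.matrix i).IsSymm :=
  isSymm_linearCombination hA _

theorem hsForm_matrix_linearCombination_of_lt {i : Σ k, Fin (F.rank k)} {k : Fin T} (h : i.1 < k)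
    (y : EuclideanSpace ℝ { u // ℓ u = k }) :
    hsForm D (F.matrix i) (Fintype.linearCombination ℝ A (extendZero (ℓ · = k) y)) = 0 := by
  rw [Fintype.linearCombination_apply, map_sum]
  refine sum_eq_zero fun u _ => ?_
  rw [map_smul]
  by_cases hu : ℓ u = k
  · rw [matrix, F.apply_eq_zero (hu ▸ h), smul_zero]
  · rw [extendZero_apply_of_not (p := (ℓ · = k)) y hu, zero_smul]

theorem pairwise_hsForm_matrix : Pairwise fun i j => hsForm D (F.matrix i) (F.matrix j) = 0 := by
  rintro ⟨k, i⟩ ⟨k', j⟩ hne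
  obtain hlt | rfl | hlt := lt_trichotomy k k'
  · exact F.hsForm_matrix_linearCombination_of_lt hlt _
  · have hij : i ≠ j := fun h => hne (h ▸ rfl)
    exact F.pairwise k hij
  · rw [isPosSemidef_hsForm.isSymm.eq]
    exact F.hsForm_matrix_linearCombination_of_lt hlt _

theorem frobNormSq_matrix_le (i : Σ k, Fin (F.rank k)) :
    frobNormSq (F.matrix i) ≤ 24 * (16 ^ (i.1 : ℕ) * f ^ 2) := by
  rw [← hsForm_self]
  exact F.apply_self_le i.1 i.2

open scoped MatrixOrder

theorem sum_matrix_mul_self_le (hA : ∀ u, (A u).IsSymm) (k : Fin T) :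
    ∑ i, F.matrix ⟨k, i⟩ * F.matrix ⟨k, i⟩ ≤ ∑ u : { u // ℓ u = k }, A u * A u := by
  refine sum_mul_self_le_sum_mul_self (B := fun i => F.matrix ⟨k, i⟩)
    (C := fun u : { u // ℓ u = k } => A u) (fun i => F.isSymm_matrix hA ⟨k, i⟩) (fun u => hA u)
    fun Q hQ => ?_
  have h := sum_pullback_apply_self_le (p := (ℓ · = k)) A hQ (F.orthonormal k)
  simpa only [pullback_apply, matrix] using h

theorem sum_smul_matrix_mul_self_le [DecidableEq D] (hA : ∀ u, (A u).IsSymm)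
    (hnorm : ∀ u, opNorm (A u) ≤ 1) {w : Fin T → ℝ} (hw : ∀ k, 0 ≤ w k) :
    ∑ i, w i.1 • (F.matrix i * F.matrix i) ≤ (∑ u, w (ℓ u)) • 1 := by
  calc ∑ i, w i.1 • (F.matrix i * F.matrix i)
      = ∑ k, w k • ∑ i, F.matrix ⟨k, i⟩ * F.matrix ⟨k, i⟩ := by
        simp only [Fintype.sum_sigma, smul_sum]
    _ ≤ ∑ k, w k • ∑ u : { u // ℓ u = k }, A u * A u :=
        sum_le_sum fun k _ => smul_le_smul_of_nonneg_left (F.sum_matrix_mul_self_le hA k) (hw k)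
    _ ≤ ∑ k, w k • ∑ _u : { u // ℓ u = k }, (1 : Matrix D D ℝ) :=
        sum_le_sum fun k _ => smul_le_smul_of_nonneg_left
          (sum_le_sum fun _ _ => mul_self_le_one_of_opNorm_le_one (hA _) (hnorm _)) (hw k)
    _ = (∑ u, w (ℓ u)) • 1 := by
        rw [← sum_mul_card_filter_eq univ, sum_smul]
        refine sum_congr rfl fun k _ => ?_
        rw [sum_const, card_univ, Fintype.card_subtype, ← Nat.cast_smul_eq_nsmul ℝ, smul_smul]

theorem sum_frobNormSq_smul_matrix_mul_self_le [DecidableEq D] (hA : ∀ u, (A u).IsSymm)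
    (hnorm : ∀ u, opNorm (A u) ≤ 1) {N : ℝ} (hN : ∑ u, (16 : ℝ) ^ (ℓ u : ℕ) ≤ N) :
    ∑ i, frobNormSq (F.matrix i) • (F.matrix i * F.matrix i) ≤ (24 * f ^ 2 * N) • 1 :=
  calc ∑ i, frobNormSq (F.matrix i) • (F.matrix i * F.matrix i)
      ≤ ∑ i, (24 * (16 ^ (i.1 : ℕ) * f ^ 2)) • (F.matrix i * F.matrix i) :=
        sum_le_sum fun i _ => smul_le_smul_of_nonneg_right (F.frobNormSq_matrix_le i)
          (mul_self_nonneg_of_isSymm (F.isSymm_matrix hA i))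
    _ ≤ (∑ u, 24 * ((16 : ℝ) ^ (ℓ u : ℕ) * f ^ 2)) • 1 :=
        F.sum_smul_matrix_mul_self_le hA hnorm (w := fun k => 24 * (16 ^ (k : ℕ) * f ^ 2))
          fun k => by positivity
    _ ≤ (24 * f ^ 2 * N) • 1 := by
        refine smul_le_smul_of_nonneg_right ?_ zero_le_one
        rw [← Finset.mul_sum, ← Finset.sum_mul, mul_right_comm, ← mul_assoc]
        gcongr

theorem sum_matrix_mul_self_le_smul_one [DecidableEq D] (hA : ∀ u, (A u).IsSymm)
    (hnorm : ∀ u, opNorm (A u) ≤ 1) {N : ℝ} (hN : ∑ u, (16 : ℝ) ^ (ℓ u : ℕ) ≤ N) :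
    ∑ i, F.matrix i * F.matrix i ≤ N • 1 := by
  have hle := F.sum_smul_matrix_mul_self_le hA hnorm fun _ => zero_le_one
  simp only [one_smul] at hle
  exact hle.trans (smul_le_smul_of_nonneg_right
    ((sum_le_sum fun u _ => one_le_pow₀ (by norm_num)).trans hN) zero_le_one)

/-- The span of the frame vectors of level `k` that are supported on `s` and annihilated by `l₁` and
`l₂`. -/
noncomputable def directions (s : Finset υ) (l₁ l₂ : (υ → ℝ) →ₗ[ℝ] ℝ) (k : Fin T) :
    Submodule ℝ (EuclideanSpace ℝ { u // ℓ u = k }) :=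
  Submodule.span ℝ (Set.range (F.vec k)) ⊓ LinearMap.ker
    (((LinearMap.funLeft ℝ ℝ (Subtype.val : { u // ℓ u = k ∧ u ∉ s } → υ)).prod (l₁.prod l₂)) ∘ₗ
      extendZero (ℓ · = k))

section Directions

variable {s : Finset υ} {l₁ l₂ : (υ → ℝ) →ₗ[ℝ] ℝ} {k : Fin T}

theorem extendZero_of_mem_directions {y : EuclideanSpace ℝ { u // ℓ u = k }}
    (hy : y ∈ F.directions s l₁ l₂ k) :
    (∀ u ∉ s, extendZero (ℓ · = k) y u = 0) ∧ l₁ (extendZero (ℓ · = k) y) = 0 ∧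
      l₂ (extendZero (ℓ · = k) y) = 0 := by
  have hker := LinearMap.mem_ker.1 hy.2
  refine ⟨fun u hu => ?_, congrArg (·.2.1) hker, congrArg (·.2.2) hker⟩
  by_cases hk : ℓ u = k
  · exact congrFun (congrArg Prod.fst hker) ⟨u, hk, hu⟩
  · exact extendZero_apply_of_not y hk

variable (s l₁ l₂ k)

theorem rank_le_finrank_directions_add [DecidableEq υ] :
    F.rank k ≤ Module.finrank ℝ (F.directions s l₁ l₂ k) + (#{u | ℓ u = k ∧ u ∉ s} + 2) := by
  have h := finrank_le_finrank_inf_ker_add (Submodule.span ℝ (Set.range (F.vec k)))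
    (((LinearMap.funLeft ℝ ℝ (Subtype.val : { u // ℓ u = k ∧ u ∉ s } → υ)).prod (l₁.prod l₂)) ∘ₗ
      extendZero (ℓ · = k))
  rwa [finrank_span_eq_card (F.orthonormal k).linearIndependent, Fintype.card_fin,
    Module.finrank_prod, Module.finrank_prod, Module.finrank_fintype_fun_eq_card,
    Module.finrank_self, Fintype.card_subtype] at h

theorem card_filter_level_le :
    (#{u ∈ s | ℓ u = k} : ℝ) ≤ Module.finrank ℝ (F.directions s l₁ l₂ k) + 2 +
      #{u | k < ℓ u} + #{u | ℓ u = k} / 24 := by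
  classical
  have hsplit : #{u ∈ s | ℓ u = k} + #{u | ℓ u = k ∧ u ∉ s} = #{u | ℓ u = k} := by
    rw [← card_filter_add_card_filter_not (s := {u | ℓ u = k}) (· ∈ s), filter_filter,
      filter_filter]
    congr 2
    ext; simp [and_comm]
  have hrank := F.rank_le_finrank_directions_add s l₁ l₂ k
  have hcard := F.card_le k
  rify at hsplit hrank
  linarith

end Directions

theorem hasDirections {N : ℝ} (hN : ∑ u, (16 : ℝ) ^ (ℓ u : ℕ) ≤ N) (hT : (16 : ℝ) ^ T ≤ N) :
    HasDirections A (fun u => 16 ^ (ℓ u : ℕ)) N F.matrix := by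
  intro s hs Q hQ l₁ l₂
  have hN0 : 0 < N := (by positivity : (0 : ℝ) < 16 ^ T).trans_le hT
  obtain ⟨k, hk, hle⟩ := exists_pos_mul_le_mul_sum (M := N / 64)
    (a := fun k : Fin T => 16 ^ (k : ℕ) * Module.finrank ℝ (F.directions s l₁ l₂ k))
    (q := fun k => ∑ i, pullback Q A (ℓ · = k) (F.vec k i) (F.vec k i)) (fun k => by positivity)
    (fun k => sum_nonneg fun i _ => (isPosSemidef_pullback A hQ).nonneg _) (by positivity)
    (div_le_sum_sixteen_pow_mul ℓ hN hT hs (F.card_filter_level_le s l₁ l₂))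
  have hd : 0 < Module.finrank ℝ (F.directions s l₁ l₂ k) := by
    exact_mod_cast pos_of_mul_pos_right hk (by positivity)
  obtain ⟨y, hy, hnorm, hyQ⟩ := exists_norm_eq_one_finrank_mul_apply_self_le
    (W := F.directions s l₁ l₂ k) (isPosSemidef_pullback A hQ) (F.orthonormal k) inf_le_left hd
  obtain ⟨hsupp, h₁, h₂⟩ := F.extendZero_of_mem_directions hy
  have hw : weightedNormSq (fun u => 16 ^ (ℓ u : ℕ)) (extendZero (ℓ · = k) y) = 16 ^ (k : ℕ) := by
    rw [weightedNormSq_extendZero (c := 16 ^ (k : ℕ)) (fun u hu => by rw [hu]), hnorm, one_pow,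
      mul_one]
  refine ⟨extendZero (ℓ · = k) y, fun h0 => ?_, hsupp, h₁, h₂, ?_⟩
  · exact (by positivity : (16 : ℝ) ^ (k : ℕ) ≠ 0) (by rw [← hw, h0]; simp [weightedNormSq])
  · rw [hw, ← pullback_apply, Fintype.sum_sigma]
    have hmul := (mul_le_mul_of_nonneg_left hyQ (by positivity : 0 ≤ N / 64)).trans hle
    rw [mul_div_assoc', div_mul_eq_mul_div, le_div_iff₀ hN0]
    refine le_of_mul_le_mul_left ?_ (Nat.cast_pos.2 hd : (0 : ℝ) < _)
    simp only [pullback_apply, matrix] at hmul ⊢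
    linarith

end LevelFrame
end LevelFrame

theorem sqrt_sqrt_pow_four {t : ℝ} (ht : 0 ≤ t) : √√t ^ 4 = t := by
  rw [show 4 = 2 * 2 from rfl, pow_mul, Real.sq_sqrt (Real.sqrt_nonneg t), Real.sq_sqrt ht]

theorem exists_extension_of_fractional {υ V : Type*} [Fintype υ] [AddCommGroup V] [Module ℝ V]
    (A : υ → V) (α : υ → ℝ) {x : υ → ℝ} (hx : ∀ u, |x u| ≤ 1)
    {z : { u // |x u| < 1 } → ℝ} (hz : ∀ u, |z u| ≤ 1) :
    ∃ x' : υ → ℝ, (∀ u, |x' u| ≤ 1) ∧ ∑ u with |x' u| < 1, α u = ∑ u with |z u| < 1, α u ∧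
      Fintype.linearCombination ℝ A (x' - x) =
        Fintype.linearCombination ℝ (fun u : { u // |x u| < 1 } => A u) (z - x ∘ Subtype.val) := by
  let y : EuclideanSpace ℝ { u // |x u| < 1 } := WithLp.toLp 2 (z - x ∘ Subtype.val)
  have hin (u : { u // |x u| < 1 }) : (x + extendZero _ y) u = z u := by
    rw [Pi.add_apply, extendZero_apply]
    exact add_sub_cancel (x u) (z u : ℝ)
  have hout {u : υ} (hu : ¬|x u| < 1) : (x + extendZero _ y) u = x u := by
    rw [Pi.add_apply, extendZero_apply_of_not y hu, add_zero]
  refine ⟨x + extendZero _ y, fun u => ?_, ?_, ?_⟩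
  · by_cases hu : |x u| < 1
    · exact hin ⟨u, hu⟩ ▸ hz _
    · exact hout hu ▸ hx u
  · rw [sum_filter, sum_filter, ← Fintype.sum_subtype_add_sum_subtype (|x ·| < 1)]
    simp only [hin, fun u : { u // ¬|x u| < 1 } => hout u.2, fun u : { u // ¬|x u| < 1 } => u.2,
      if_false, sum_const_zero, add_zero]
  · rw [add_sub_cancel_left, Fintype.linearCombination_apply,
      sum_extendZero (φ := fun u t => t • A u) fun _ => zero_smul _ _]
    rfl

section PartialColoring

variable {υ D : Type*} [Fintype υ] [Fintype D] [DecidableEq D] {A : υ → Matrix D D ℝ}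
  (hA : ∀ u, (A u).IsSymm) (hnorm : ∀ u, opNorm (A u) ≤ 1) {f : ℝ} (hf : 0 < f) {k : ℕ}
  (hD : Fintype.card D ≤ Real.exp (2 * (k + 2))) {τ N : ℝ} {x : υ → ℝ} (hx : ∀ u, |x u| ≤ 1)

include hA hnorm hf hD hx in
theorem exists_rounding_of_level [Nonempty D] {T : ℕ} {ℓ : υ → Fin T}
    (hF : ∀ u, frobNormSq (A u) ≤ 16 ^ (ℓ u : ℕ) * f ^ 2)
    (hN : ∑ u, (16 : ℝ) ^ (ℓ u : ℕ) ≤ N) (hT : (16 : ℝ) ^ T ≤ N) (hτ0 : 0 < τ)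
    (hτ : (2 * (k + 2)) ^ 3 * (24 * f ^ 2 * N) ≤ τ ^ 4) :
    ∃ x' : υ → ℝ, (∀ u, |x' u| ≤ 1) ∧ ∑ u with |x' u| < 1, (16 : ℝ) ^ (ℓ u : ℕ) ≤ N / 2 ∧
      opNorm (Fintype.linearCombination ℝ A (x' - x)) ≤ (66 * √N + τ) * growthFactor := by
  obtain ⟨F⟩ := nonempty_levelFrame hf hF
  have hN0 : 0 < N := (by positivity : (0 : ℝ) < 16 ^ T).trans_le hT
  exact exists_rounding (F.isSymm_matrix hA) F.pairwise_hsForm_matrix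
    (F.sum_frobNormSq_smul_matrix_mul_self_le hA hnorm hN) hτ hA hτ0 (fun u => by positivity) hN0 hN
    (F.hasDirections hN hT) (Real.sqrt_nonneg N)
    (by rw [Real.sq_sqrt hN0.le]; exact F.sum_matrix_mul_self_le_smul_one hA hnorm hN) hD hx

variable {ℓ : υ → ℕ}

include hnorm hx in
/-- The weights `16 ^ ℓ u` of the rounded coordinates exceed `N / 16`, so there are at most `16` of
them. -/
theorem exists_forall_pow_le_of_fractional (hN : 0 < N)
    (hxN : ∑ u with |x u| < 1, (16 : ℝ) ^ ℓ u ≤ N) :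
    ∃ x' : υ → ℝ, (∀ u, |x' u| ≤ 1) ∧ (∀ u, |x' u| < 1 → |x u| < 1 ∧ (16 : ℝ) ^ (ℓ u + 1) ≤ N) ∧
      opNorm (Fintype.linearCombination ℝ A (x' - x)) ≤ 32 := by
  let x' : υ → ℝ := fun u => if |x u| < 1 ∧ N < 16 ^ (ℓ u + 1) then 1 else x u
  have hterm (u : υ) : opNorm ((x' - x) u • A u) ≤
      32 / N * (if |x u| < 1 then (16 : ℝ) ^ ℓ u else 0) := by
    rw [opNorm_smul, Pi.sub_apply]
    by_cases hu : |x u| < 1 ∧ N < 16 ^ (ℓ u + 1)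
    · rw [if_pos hu.1, show x' u = 1 from if_pos hu]
      have hsub : |1 - x u| ≤ 2 := by
        have := abs_le.1 (hx u)
        rw [abs_le]
        constructor <;> linarith
      calc |1 - x u| * opNorm (A u) ≤ 2 * 1 :=
            mul_le_mul hsub (hnorm u) (norm_nonneg _) zero_le_two
        _ ≤ 32 / N * 16 ^ ℓ u := by
            rw [div_mul_eq_mul_div, le_div_iff₀ hN]
            linarith [hu.2, pow_succ (16 : ℝ) (ℓ u)]
    · rw [show x' u = x u from if_neg hu, sub_self, abs_zero, zero_mul]
      positivity
  refine ⟨x', fun u => ?_, fun u hu => ?_, ?_⟩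
  · by_cases h : |x u| < 1 ∧ N < 16 ^ (ℓ u + 1) <;> simp [x', h, hx u]
  · by_cases h : |x u| < 1 ∧ N < 16 ^ (ℓ u + 1)
    · simp [x', h] at hu
    · rw [show x' u = x u from if_neg h] at hu
      exact ⟨hu, not_lt.1 fun hlt => h ⟨hu, hlt⟩⟩
  · calc opNorm (Fintype.linearCombination ℝ A (x' - x))
        ≤ ∑ u, opNorm ((x' - x) u • A u) := opNorm_sum_le _ _
      _ ≤ ∑ u, 32 / N * (if |x u| < 1 then (16 : ℝ) ^ ℓ u else 0) := sum_le_sum fun u _ => hterm u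
      _ = 32 / N * ∑ u with |x u| < 1, (16 : ℝ) ^ ℓ u := by rw [sum_filter, Finset.mul_sum]
      _ ≤ 32 / N * N := by gcongr
      _ = 32 := div_mul_cancel₀ 32 hN.ne'

include hx in
theorem abs_eq_one_of_sum_lt_one (hsum : ∑ u with |x u| < 1, (16 : ℝ) ^ ℓ u < 1) (u : υ) :
    |x u| = 1 := by
  by_contra hne
  have hle : (16 : ℝ) ^ ℓ u ≤ ∑ u with |x u| < 1, (16 : ℝ) ^ ℓ u :=
    single_le_sum (f := fun u => (16 : ℝ) ^ ℓ u) (fun _ _ => by positivity)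
      (mem_filter.2 ⟨mem_univ u, (hx u).lt_of_ne hne⟩)
  linarith [one_le_pow₀ (by norm_num : (1 : ℝ) ≤ 16) (n := ℓ u)]

theorem opNorm_linearCombination_sub_le (A : υ → Matrix D D ℝ) (x y z : υ → ℝ) :
    opNorm (Fintype.linearCombination ℝ A (z - x)) ≤
      opNorm (Fintype.linearCombination ℝ A (z - y)) +
        opNorm (Fintype.linearCombination ℝ A (y - x)) := by
  rw [← sub_add_sub_cancel z y x, map_add]
  exact opNorm_add_le _ _

variable [Nonempty D] (hF : ∀ u, frobNormSq (A u) ≤ 16 ^ ℓ u * f ^ 2) (hτ0 : 0 < τ)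
  (hτ : (2 * (k + 2)) ^ 3 * (24 * f ^ 2) ≤ τ ^ 4)

include hA hnorm hf hD hx hF hτ0 hτ

theorem exists_partial_coloring (hN : 1 ≤ N) (hxN : ∑ u with |x u| < 1, (16 : ℝ) ^ ℓ u ≤ N) :
    ∃ x' : υ → ℝ, (∀ u, |x' u| ≤ 1) ∧ ∑ u with |x' u| < 1, (16 : ℝ) ^ ℓ u ≤ N / 2 ∧
      opNorm (Fintype.linearCombination ℝ A (x' - x)) ≤
        (66 * √N + τ * √√N) * growthFactor + 32 := by
  have hN0 : 0 < N := zero_lt_one.trans_le hN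
  obtain ⟨T, hT, hT'⟩ := exists_nat_pow_near hN (by norm_num : (1 : ℝ) < 16)
  obtain ⟨y, hy, hyfrac, hyx⟩ := exists_forall_pow_le_of_fractional hnorm hx hN0 hxN
  have hlt (u : { u // |y u| < 1 }) : ℓ u < T :=
    Nat.succ_lt_succ_iff.1 ((pow_lt_pow_iff_right₀ (by norm_num : (1 : ℝ) < 16)).1
      ((hyfrac u u.2).2.trans_lt hT'))
  have hsum : ∑ u : { u // |y u| < 1 }, (16 : ℝ) ^ ℓ u ≤ N := by
    rw [← sum_subtype {u | |y u| < 1} (fun u => by simp) fun u => (16 : ℝ) ^ ℓ u]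
    refine (sum_le_sum_of_subset_of_nonneg ?_ fun u _ _ => by positivity).trans hxN
    exact monotone_filter_right _ fun u _ hu => (hyfrac u hu).1
  obtain ⟨z, hz, hzN, hzy⟩ := exists_rounding_of_level (A := fun u : { u // |y u| < 1 } => A u)
    (fun u => hA u) (fun u => hnorm u) hf hD (x := y ∘ Subtype.val) (fun u => hy u)
    (ℓ := fun u => ⟨ℓ u, hlt u⟩) (fun u => hF u) hsum hT (τ := τ * √√N) (by positivity)
    (by rw [mul_pow τ, sqrt_sqrt_pow_four hN0.le, ← mul_assoc]; gcongr)
  obtain ⟨x', hx', hfrac, hx'y⟩ := exists_extension_of_fractional A (16 ^ ℓ ·) hy hz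
  refine ⟨x', hx', hfrac.trans_le hzN, (opNorm_linearCombination_sub_le A x y x').trans ?_⟩
  exact add_le_add (hx'y ▸ hzy) hyx

theorem exists_coloring (hN : 0 ≤ N) (hxN : ∑ u with |x u| < 1, (16 : ℝ) ^ ℓ u ≤ N) :
    ∃ x' : υ → ℝ, (∀ u, |x' u| = 1) ∧
      opNorm (Fintype.linearCombination ℝ A (x' - x)) ≤
        4 * (66 * growthFactor + 32) * √N + 8 * (τ * growthFactor) * √√N := by
  have hg : 0 < growthFactor := Real.exp_pos _
  obtain ⟨j, hj⟩ := pow_unbounded_of_one_lt N one_lt_two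
  induction j using Nat.strong_induction_on generalizing x N with | _ j ih
  rcases lt_or_ge N 1 with hN1 | hN1
  · refine ⟨x, abs_eq_one_of_sum_lt_one hx (hxN.trans_lt hN1), ?_⟩
    rw [sub_self, map_zero, opNorm_zero]
    positivity
  obtain _ | j := j
  · exact absurd hj (by simpa using hN1)
  obtain ⟨y, hy, hyN, hyx⟩ := exists_partial_coloring hA hnorm hf hD hx hF hτ0 hτ hN1 hxN
  obtain ⟨x', hx', hx'y⟩ := ih j j.lt_succ_self hy (by positivity) hyN
    (by rw [pow_succ] at hj; linarith)
  refine ⟨x', hx', (opNorm_linearCombination_sub_le A x y x').trans ?_⟩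
  have hsqrt : √(N / 2) ≤ 3 / 4 * √N := by
    refine Real.sqrt_le_iff.2 ⟨by positivity, ?_⟩
    rw [mul_pow, Real.sq_sqrt hN]
    linarith
  have hsqrt' : √√(N / 2) ≤ 7 / 8 * √√N := by
    refine Real.sqrt_le_iff.2 ⟨by positivity, ?_⟩
    rw [mul_pow, Real.sq_sqrt (Real.sqrt_nonneg _)]
    linarith [Real.sqrt_nonneg N]
  have hone : 1 ≤ √N := Real.one_le_sqrt.2 hN1
  calc opNorm (Fintype.linearCombination ℝ A (x' - y)) +
        opNorm (Fintype.linearCombination ℝ A (y - x))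
      ≤ (4 * (66 * growthFactor + 32) * √(N / 2) + 8 * (τ * growthFactor) * √√(N / 2)) +
        ((66 * √N + τ * √√N) * growthFactor + 32) := add_le_add hx'y hyx
    _ ≤ (4 * (66 * growthFactor + 32) * (3 / 4 * √N) +
          8 * (τ * growthFactor) * (7 / 8 * √√N)) +
        ((66 * √N + τ * √√N) * growthFactor + 32 * √N) := by
      gcongr
      linarith
    _ = 4 * (66 * growthFactor + 32) * √N + 8 * (τ * growthFactor) * √√N := by ring

end PartialColoring

section Parameters

theorem exists_le_sixteen_pow {a : ℝ} (ha : 0 ≤ a) :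
    ∃ m : ℕ, a ≤ 16 ^ m ∧ (16 : ℝ) ^ m ≤ 1 + 16 * a := by
  rcases le_or_gt a 1 with h | h
  · exact ⟨0, by simpa using h, by simpa using ha⟩
  · obtain ⟨m, hm, hm'⟩ := exists_nat_pow_near h.le (by norm_num : (1 : ℝ) < 16)
    exact ⟨m + 1, hm'.le, by linarith [pow_succ (16 : ℝ) m]⟩

theorem exists_levels {υ : Type*} [Fintype υ] {v : υ → ℝ} (hv : ∀ u, 0 ≤ v u) {c : ℝ} (hc : 0 < c)
    (hsum : ∑ u, v u ≤ Fintype.card υ * c) :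
    ∃ ℓ : υ → ℕ, (∀ u, v u ≤ 16 ^ ℓ u * c) ∧ ∑ u, (16 : ℝ) ^ ℓ u ≤ 17 * Fintype.card υ := by
  choose ℓ hℓ hℓ' using fun u => exists_le_sixteen_pow (div_nonneg (hv u) hc.le)
  refine ⟨ℓ, fun u => (div_le_iff₀ hc).1 (hℓ u), ?_⟩
  calc ∑ u, (16 : ℝ) ^ ℓ u ≤ ∑ u, (1 + 16 * (v u / c)) := sum_le_sum fun u _ => hℓ' u
    _ = Fintype.card υ + 16 * ((∑ u, v u) / c) := by
        rw [sum_add_distrib, ← Finset.mul_sum, ← sum_div, sum_const, card_univ, nsmul_one]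
    _ ≤ Fintype.card υ + 16 * Fintype.card υ := by gcongr; exact (div_le_iff₀ hc).2 hsum
    _ = 17 * Fintype.card υ := by ring

theorem cast_le_exp_of_le_sq {n d : ℕ} (hn : n ≠ 0) (hd : d ≤ n ^ 2) :
    (d : ℝ) ≤ Real.exp (2 * (⌈Real.log n⌉₊ + 2)) :=
  calc (d : ℝ) ≤ (n : ℝ) ^ 2 := mod_cast hd
    _ = Real.exp (2 * Real.log n) := by
        rw [two_mul, Real.exp_add, Real.exp_log (by positivity), sq]
    _ ≤ Real.exp (2 * (⌈Real.log n⌉₊ + 2)) := by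
        gcongr
        linarith [Nat.le_ceil (Real.log n)]

theorem one_half_le_log_natCast {n : ℕ} (hn : 2 ≤ n) : 1 / 2 ≤ Real.log n := by
  have hle : Real.log 2 ≤ Real.log n := Real.log_le_log two_pos (mod_cast hn)
  linarith [Real.log_two_gt_d9]

theorem rpow_div_four_pow_four {a : ℝ} (ha : 0 ≤ a) (m : ℕ) :
    (a ^ ((m : ℝ) / 4)) ^ 4 = a ^ m := by
  rw [← Real.rpow_natCast, ← Real.rpow_mul ha, Nat.cast_ofNat, div_mul_cancel₀ _ four_ne_zero,
    Real.rpow_natCast]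

theorem ceil_pow_three_mul_le_pow_four {L f : ℝ} (hL : 1 / 2 ≤ L) (hf : 0 ≤ f) :
    (2 * (⌈L⌉₊ + 2)) ^ 3 * (24 * f ^ 2) ≤ (17 * (L ^ ((3 : ℝ) / 4) * √f)) ^ 4 := by
  have hL0 : 0 ≤ L := by linarith
  have hceil : 2 * ((⌈L⌉₊ : ℝ) + 2) ≤ 14 * L := by linarith [Nat.ceil_lt_add_one hL0]
  calc (2 * ((⌈L⌉₊ : ℝ) + 2)) ^ 3 * (24 * f ^ 2) ≤ (14 * L) ^ 3 * (24 * f ^ 2) := by gcongr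
    _ = 65856 * (L ^ 3 * f ^ 2) := by ring
    _ ≤ 83521 * (L ^ 3 * f ^ 2) := by gcongr; norm_num
    _ = (17 * (L ^ ((3 : ℝ) / 4) * √f)) ^ 4 := by
        have hL4 : (L ^ ((3 : ℝ) / 4)) ^ 4 = L ^ 3 := mod_cast rpow_div_four_pow_four hL0 3
        rw [mul_pow, mul_pow, hL4, show √f ^ 4 = (√f ^ 2) ^ 2 by ring, Real.sq_sqrt hf]
        norm_num

theorem sqrt_seventeen_mul_le (t : ℝ) : √(17 * t) ≤ 5 * √t := by
  rw [Real.sqrt_mul (by norm_num)]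
  gcongr
  exact Real.sqrt_le_iff.2 (by norm_num)

theorem sqrt_sqrt_seventeen_mul_le {t : ℝ} (ht : 0 ≤ t) :
    √√(17 * t) ≤ 3 * t ^ ((1 : ℝ) / 4) := by
  have ht4 : (t ^ ((1 : ℝ) / 4)) ^ 4 = t := by simpa using rpow_div_four_pow_four ht 1
  refine le_of_pow_le_pow_left₀ four_ne_zero (by positivity) ?_
  rw [sqrt_sqrt_pow_four (by positivity), mul_pow, ht4]
  linarith

theorem coloring_bound_le {t r : ℝ} (ht : 0 ≤ t) (hr : 0 ≤ r) :
    4 * (66 * growthFactor + 32) * √(17 * t) + 8 * (17 * r * growthFactor) * √√(17 * t) ≤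
      (1320 * growthFactor + 640) * (√t + r * t ^ ((1 : ℝ) / 4)) := by
  have hg : 0 < growthFactor := Real.exp_pos _
  have hnonneg : 0 ≤ (912 * growthFactor + 640) * (r * t ^ ((1 : ℝ) / 4)) := by positivity
  calc _ ≤ 4 * (66 * growthFactor + 32) * (5 * √t) +
          8 * (17 * r * growthFactor) * (3 * t ^ ((1 : ℝ) / 4)) := by
        gcongr
        · exact sqrt_seventeen_mul_le t
        · exact sqrt_sqrt_seventeen_mul_le ht
    _ ≤ (1320 * growthFactor + 640) * (√t + r * t ^ ((1 : ℝ) / 4)) := by linarith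

end Parameters

end MatrixSpencer

/-- **Full coloring bound (proof of Theorem 1.3).** There is a universal constant
`C > 0` such that for all `n ≥ 2`, `d ≤ n²`, `f > 0`, and symmetric matrices
`A 1, …, A n ∈ ℝ^{d×d}` with `‖A i‖_op ≤ 1` and `∑ ‖A i‖_F² ≤ n f²`, there exist signs
`x ∈ {±1}ⁿ` with `‖∑ x i • A i‖_op ≤ C (√n + (log n)^{3/4} f^{1/2} n^{1/4})`. -/
theorem full_coloring_bound :
    ∃ C : ℝ, 0 < C ∧ ∀ (n d : ℕ), 2 ≤ n → 0 < d → d ≤ n ^ 2 →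
      ∀ (f : ℝ), 0 < f →
      ∀ A : Fin n → Matrix (Fin d) (Fin d) ℝ,
        (∀ i, (A i).IsSymm) →
        (∀ i, opNorm (A i) ≤ 1) →
        (∑ i, frobNormSq (A i)) ≤ (n : ℝ) * f ^ 2 →
        ∃ x : Fin n → ℝ, (∀ i, x i = 1 ∨ x i = -1) ∧
          opNorm (∑ i, x i • A i) ≤
            C * (Real.sqrt n +
              (Real.log n) ^ ((3 : ℝ) / 4) * Real.sqrt f * (n : ℝ) ^ ((1 : ℝ) / 4)) := by
  have hg : 0 < MatrixSpencer.growthFactor := Real.exp_pos _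
  refine ⟨1320 * MatrixSpencer.growthFactor + 640, by positivity, ?_⟩
  intro n d hn hd hdn f hf A hA hnorm hfrob
  have : Nonempty (Fin d) := ⟨⟨0, hd⟩⟩
  have hlog := MatrixSpencer.one_half_le_log_natCast hn
  have : 0 < Real.log n := by linarith
  obtain ⟨ℓ, hF, hℓ⟩ := MatrixSpencer.exists_levels
    (fun i => MatrixSpencer.frobNormSq_nonneg (A i)) (pow_pos hf 2) (by simpa using hfrob)
  obtain ⟨x, hx, hle⟩ := MatrixSpencer.exists_coloring (x := 0) hA hnorm hf
    (by simpa using MatrixSpencer.cast_le_exp_of_le_sq (by lia) hdn) (by simp) hF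
    (by positivity) (MatrixSpencer.ceil_pow_three_mul_le_pow_four hlog hf.le)
    (N := 17 * n) (by positivity) (by simpa using hℓ)
  rw [sub_zero, Fintype.linearCombination_apply] at hle
  exact ⟨x, fun i => eq_or_eq_neg_of_abs_eq (hx i),
    hle.trans (MatrixSpencer.coloring_bound_le n.cast_nonneg (by positivity))⟩
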